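/- arXiv:2602.16361 — 5 statements merged into one kernel-verified Lean document; each statement's English description precedes it below -/
import Mathlib

section
/- Let t ∈ W be a reflection and let p be a t-prefix. Then every reflection u that is a left inversion of p (ℓ(u * p) < ℓ(p)) satisfies ℓ(u) ≤ ℓ(t), and ℓ(u) = ℓ(t) holds if and only if u = t. -/
/-!
The number of occurrences of a reflection `t` in the left inversion sequence of a word has a parity
that depends only on the product `w` of the word, because the signed conjugation action of the
simple generators respects the Coxeter relations. This parity is a cocycle in `w` and equals `1` at
`w = t`, so it changes when `w` is replaced by `t * w`; hence every left inversion of `w` occurs in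
the left inversion sequence of any word for `w` (strong exchange).

The entry at index `j` of that sequence is a conjugate of a simple reflection by a product of `j`
simple reflections, so its length is at most `2 * j + 1`. For a reduced word of `p` this is at most
`2 * ℓ p - 1`, and only the last entry can attain that value.
-/

open CoxeterSystem

section InversionParity

variable {B W : Type*} [Group W] {M : CoxeterMatrix B} (cs : CoxeterSystem M W)

theorem prod_map_reverse_alternatingWord {N : Type*} [Monoid N] (f : B → N) (i j : B) (m : ℕ) :
    ((alternatingWord i j (2 * m)).reverse.map f).prod = (f j * f i) ^ m := by
  induction m with
  | zero => simp [alternatingWord]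
  | succ m ih =>
    simp only [Nat.mul_succ, alternatingWord_succ, List.reverse_concat', List.concat_eq_append,
      List.map_cons, List.prod_cons, ih, pow_succ', mul_assoc]

theorem wordProd_alternatingWord_two_mul_add (i j : B) (n : ℕ) :
    cs.wordProd (alternatingWord i j (2 * M i j + n)) = cs.wordProd (alternatingWord i j n) := by
  have half : (2 * M i j + n) / 2 = M i j + n / 2 := by lia
  simp [prod_alternatingWord_eq_mul_pow, half, pow_add, Nat.even_add]

theorem drop_leftInvSeq_alternatingWord (i j : B) :
    (cs.leftInvSeq (alternatingWord i j (2 * M i j))).drop (M i j) =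
      (cs.leftInvSeq (alternatingWord i j (2 * M i j))).take (M i j) := by
  refine List.ext_getElem (by simp; lia) fun k hk _ ↦ ?_
  have hk' : M i j + k < 2 * M i j := by
    simp only [List.length_drop, length_leftInvSeq, length_alternatingWord] at hk
    lia
  rw [List.getElem_drop, List.getElem_take, cs.getElem_leftInvSeq_alternatingWord i j _ _ hk',
    cs.getElem_leftInvSeq_alternatingWord i j _ _ (by lia), mul_add, add_assoc, M.symmetric i j,
    wordProd_alternatingWord_two_mul_add]

variable [DecidableEq W]

theorem even_count_leftInvSeq_alternatingWord (i j : B) (t : W) :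
    Even ((cs.leftInvSeq (alternatingWord i j (2 * M i j))).count t) := by
  rw [← List.take_append_drop (M i j) (cs.leftInvSeq _), List.count_append,
    drop_leftInvSeq_alternatingWord]
  exact Even.add_self _

/-- Conjugation by `s` on signed group elements, the sign (written additively) being flipped exactly
at `s` itself. For `s` a simple reflection this is the action of `s` on signed reflections; it is
defined on all of `W` so as to avoid the subtype of reflections. -/
def signedConj (s : W) : Equiv.Perm (W × ZMod 2) :=
  (MulAut.conj s).toEquiv.prodShear fun t ↦ Equiv.addRight (if t = s then 1 else 0)

theorem signedConj_apply (s t : W) (e : ZMod 2) :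
    signedConj s (t, e) = (s * t * s⁻¹, e + if t = s then 1 else 0) :=
  rfl

theorem count_leftInvSeq_cons (i : B) (ω : List B) (t : W) :
    (cs.leftInvSeq (i :: ω)).count t =
      (if t = cs.simple i then 1 else 0) +
        (cs.leftInvSeq ω).count (cs.simple i * t * (cs.simple i)⁻¹) := by
  have conj_conj : MulAut.conj (cs.simple i) (cs.simple i * t * (cs.simple i)⁻¹) = t := by
    simp [mul_assoc]
  have count_map := List.count_map_of_injective (cs.leftInvSeq ω) _
    (MulAut.conj (cs.simple i)).injective (cs.simple i * t * (cs.simple i)⁻¹)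
  rw [conj_conj] at count_map
  simp only [leftInvSeq, List.count_cons, count_map, beq_iff_eq, eq_comm (a := t), add_comm]

theorem prod_map_reverse_signedConj (ω : List B) (t : W) (e : ZMod 2) :
    (ω.reverse.map fun i ↦ signedConj (cs.simple i)).prod (t, e) =
      ((cs.wordProd ω)⁻¹ * t * cs.wordProd ω, e + (cs.leftInvSeq ω).count t) := by
  induction ω generalizing t e with
  | nil => simp
  | cons i ω ih =>
    rw [List.reverse_cons, List.map_append, List.prod_append, List.map_singleton,
      List.prod_singleton, Equiv.Perm.mul_apply, signedConj_apply, ih, count_leftInvSeq_cons,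
      wordProd_cons]
    simp [mul_assoc, add_assoc]

theorem isLiftable_signedConj : M.IsLiftable fun i ↦ signedConj (cs.simple i) := by
  intro i j
  rw [← prod_map_reverse_alternatingWord (fun i ↦ signedConj (cs.simple i)) j i, M.symmetric i j]
  ext1 ⟨t, e⟩
  rw [prod_map_reverse_signedConj,
    (ZMod.natCast_eq_zero_iff_even).mpr (even_count_leftInvSeq_alternatingWord cs j i t)]
  simp [prod_alternatingWord_eq_mul_pow]

/-- The action of `W` on signed elements in which simple reflections act by `signedConj`. -/
noncomputable def signedConjHom : W →* Equiv.Perm (W × ZMod 2) :=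
  cs.lift ⟨fun i ↦ signedConj (cs.simple i), isLiftable_signedConj cs⟩

/-- The number of occurrences of `t`, modulo `2`, in the left inversion sequence of any word for
`w`; see `inversionParity_wordProd`. It is read off from the action of `w⁻¹`, which makes the
independence of the word automatic. -/
noncomputable def inversionParity (w t : W) : ZMod 2 :=
  (signedConjHom cs w⁻¹ (t, 0)).2

theorem signedConjHom_inv_wordProd_apply (ω : List B) (t : W) (e : ZMod 2) :
    signedConjHom cs (cs.wordProd ω)⁻¹ (t, e) =
      ((cs.wordProd ω)⁻¹ * t * cs.wordProd ω, e + (cs.leftInvSeq ω).count t) := by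
  rw [← prod_map_reverse_signedConj, ← wordProd_reverse, wordProd, map_list_prod, List.map_map]
  congr 3
  funext i
  exact cs.lift_apply_simple (isLiftable_signedConj cs) i

theorem inversionParity_wordProd (ω : List B) (t : W) :
    inversionParity cs (cs.wordProd ω) t = (cs.leftInvSeq ω).count t := by
  rw [inversionParity, signedConjHom_inv_wordProd_apply, zero_add]

theorem signedConjHom_inv_apply (w t : W) (e : ZMod 2) :
    signedConjHom cs w⁻¹ (t, e) = (w⁻¹ * t * w, e + inversionParity cs w t) := by
  obtain ⟨ω, rfl⟩ := cs.wordProd_surjective w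
  rw [signedConjHom_inv_wordProd_apply, inversionParity_wordProd]

theorem inversionParity_mul (v w t : W) :
    inversionParity cs (v * w) t =
      inversionParity cs v t + inversionParity cs w (v⁻¹ * t * v) := by
  rw [inversionParity, mul_inv_rev, map_mul, Equiv.Perm.mul_apply, signedConjHom_inv_apply,
    signedConjHom_inv_apply, zero_add]

theorem inversionParity_one (t : W) : inversionParity cs 1 t = 0 := by
  simp [inversionParity]

theorem inversionParity_simple_self (i : B) :
    inversionParity cs (cs.simple i) (cs.simple i) = 1 := by
  simpa using inversionParity_wordProd cs [i] (cs.simple i)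

variable {cs}

theorem inversionParity_self {t : W} (ht : cs.IsReflection t) : inversionParity cs t t = 1 := by
  obtain ⟨v, i, rfl⟩ := ht
  set s := cs.simple i
  have conj_v : v⁻¹ * (v * s * v⁻¹) * v = s := by group
  have conj_vs : (v * s)⁻¹ * (v * s * v⁻¹) * (v * s) = s := by group
  have cancel : inversionParity cs v (v * s * v⁻¹) + inversionParity cs v⁻¹ s = 0 := by
    rw [← inversionParity_one cs (v * s * v⁻¹), ← mul_inv_cancel v, inversionParity_mul, conj_v]
  calc inversionParity cs (v * s * v⁻¹) (v * s * v⁻¹)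
      = inversionParity cs v (v * s * v⁻¹) + inversionParity cs s s +
          inversionParity cs v⁻¹ s := by
        rw [inversionParity_mul, inversionParity_mul, conj_v, conj_vs]
    _ = inversionParity cs v (v * s * v⁻¹) + inversionParity cs v⁻¹ s + 1 := by
        rw [inversionParity_simple_self, add_right_comm]
    _ = 1 := by rw [cancel, zero_add]

theorem inversionParity_reflection_mul {t : W} (ht : cs.IsReflection t) (w : W) :
    inversionParity cs (t * w) t = 1 + inversionParity cs w t := by
  rw [inversionParity_mul, inversionParity_self ht, inv_mul_cancel, one_mul]

theorem isLeftInversion_of_inversionParity_ne_zero {w t : W} (h : inversionParity cs w t ≠ 0) :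
    cs.IsLeftInversion w t := by
  obtain ⟨ω, hω, rfl⟩ := cs.exists_isReduced w
  refine cs.isLeftInversion_of_mem_leftInvSeq hω ?_
  contrapose! h
  rw [inversionParity_wordProd, List.count_eq_zero_of_not_mem h, Nat.cast_zero]

end InversionParity

section LengthBound

variable {B W : Type*} [Group W] {M : CoxeterMatrix B} (cs : CoxeterSystem M W)

theorem length_getElem_leftInvSeq_le (ω : List B) (j : ℕ) (hj : j < (cs.leftInvSeq ω).length) :
    cs.length (cs.leftInvSeq ω)[j] ≤ 2 * j + 1 := by
  have hj' : j < ω.length := by simpa using hj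
  have take_length_le : cs.length (cs.wordProd (ω.take j)) ≤ j :=
    (cs.length_wordProd_le _).trans (List.length_take_le _ _)
  rw [cs.getElem_leftInvSeq ω j hj']
  calc cs.length (cs.wordProd (ω.take j) * cs.simple ω[j] * (cs.wordProd (ω.take j))⁻¹)
      ≤ cs.length (cs.wordProd (ω.take j)) + cs.length (cs.simple ω[j]) +
          cs.length (cs.wordProd (ω.take j))⁻¹ :=
        (cs.length_mul_le _ _).trans (Nat.add_le_add_right (cs.length_mul_le _ _) _)
    _ ≤ 2 * j + 1 := by rw [cs.length_inv, cs.length_simple]; lia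

variable {cs}

theorem mem_leftInvSeq_of_isLeftInversion {ω : List B} {t : W}
    (h : cs.IsLeftInversion (cs.wordProd ω) t) : t ∈ cs.leftInvSeq ω := by
  classical
  by_contra hmem
  have parity_zero : inversionParity cs (cs.wordProd ω) t = 0 := by
    rw [inversionParity_wordProd, List.count_eq_zero_of_not_mem hmem, Nat.cast_zero]
  have parity_ne_zero : inversionParity cs (t * cs.wordProd ω) t ≠ 0 := by
    rw [inversionParity_reflection_mul h.1, parity_zero, add_zero]
    exact one_ne_zero
  exact h.1.isLeftInversion_mul_right_iff.mp
    (isLeftInversion_of_inversionParity_ne_zero parity_ne_zero) h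

theorem exists_getElem_leftInvSeq_of_isLeftInversion {ω : List B} {t : W}
    (h : cs.IsLeftInversion (cs.wordProd ω) t) :
    ∃ j < ω.length, (cs.leftInvSeq ω)[j]? = some t ∧ cs.length t ≤ 2 * j + 1 := by
  obtain ⟨j, hj, rfl⟩ := List.getElem_of_mem (mem_leftInvSeq_of_isLeftInversion h)
  exact ⟨j, by simpa using hj, List.getElem?_eq_getElem hj, length_getElem_leftInvSeq_le cs ω j hj⟩

theorem length_lt_two_mul_length_of_isLeftInversion {w t : W} (h : cs.IsLeftInversion w t) :
    cs.length t < 2 * cs.length w := by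
  obtain ⟨ω, hω, rfl⟩ := cs.exists_isReduced w
  obtain ⟨j, hj, -, hlen⟩ := exists_getElem_leftInvSeq_of_isLeftInversion h
  rw [hω.eq]
  lia

theorem eq_of_isLeftInversion_of_two_mul_length_le {w t u : W}
    (ht : cs.IsLeftInversion w t) (hu : cs.IsLeftInversion w u)
    (ht_len : 2 * cs.length w ≤ cs.length t + 1) (hu_len : 2 * cs.length w ≤ cs.length u + 1) :
    u = t := by
  obtain ⟨ω, hω, rfl⟩ := cs.exists_isReduced w
  obtain ⟨j, hj, ht_get, hj_len⟩ := exists_getElem_leftInvSeq_of_isLeftInversion ht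
  obtain ⟨k, hk, hu_get, hk_len⟩ := exists_getElem_leftInvSeq_of_isLeftInversion hu
  rw [hω.eq] at ht_len hu_len
  obtain rfl : k = j := by lia
  exact Option.some_injective _ (hu_get.symm.trans ht_get)

end LengthBound

theorem stmt_2_general {B : Type*} {W : Type*} [Group W] {M : CoxeterMatrix B}
    (cs : CoxeterSystem M W) {t p u : W} (ht : cs.IsReflection t)
    (hp1 : cs.length p + cs.length (p⁻¹ * t) = cs.length t)
    (hp2 : 2 * cs.length p ≤ cs.length t + 1) (hu : cs.IsLeftInversion p u) :
    cs.length u ≤ cs.length t ∧ (cs.length u = cs.length t ↔ u = t) := by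
  have hu_lt := length_lt_two_mul_length_of_isLeftInversion hu
  refine ⟨by lia, fun hut ↦ ?_, congrArg cs.length⟩
  have length_mul : cs.length (t * p) = cs.length (p⁻¹ * t) := by
    rw [← cs.length_inv, mul_inv_rev, ht.inv]
  have ht_inv : cs.IsLeftInversion p t := ⟨ht, by lia⟩
  exact eq_of_isLeftInversion_of_two_mul_length_le ht_inv hu hp2 (hut ▸ hp2)

/-- Let `t` be a reflection and `p` a `t`-prefix. Then every
reflection `u` that is a left inversion of `p` satisfies `ℓ(u) ≤ ℓ(t)`, with
equality iff `u = t`. -/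
theorem stmt_2 {B : Type*} {W : Type*} [Group W] {M : CoxeterMatrix B}
    (cs : CoxeterSystem M W) (t : W) (ht : cs.IsReflection t)
    (p : W)
    (hp1 : cs.length p + cs.length (p⁻¹ * t) = cs.length t)
    (hp2 : 2 * cs.length p = cs.length t + 1)
    (u : W) (hu : cs.IsLeftInversion p u) :
    cs.length u ≤ cs.length t ∧ (cs.length u = cs.length t ↔ u = t) :=
  stmt_2_general cs ht hp1 hp2.le hu
end

section
/- Let t ∈ W be a reflection and let p be a t-prefix. Then for every reflection u, the following are equivalent: (i) for every w ∈ W, if t is a left inversion of w then u is a left inversion of w (i.e., the positive root of u is dominated by the positive root of t); (ii) u = t, or else u is a left inversion of p and the subgroup of W generated by {u, t} is infinite. -/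
/-!
Let `r n`, `n ∈ ℤ`, be the reflections of an infinite dihedral group `⟨u, t⟩`, with `r 0 = t` and
`r 1 = u`. For `x ∈ W` let `P x` be the set of all `n` such that the wall of `r n` does not separate
`x` from the rotations `(u * t) ^ k`, `k → +∞`. It contains every very negative and no very large
`n`. Passing from `x` to `x * s` either fixes `P x` or, if the wall crossed is that of `r k`, sends
it to the complement of its reflection in `k`, while only the membership of `k` changes. If `P x`
were not a lower set, every such step would therefore preserve both its maximum and the minimum of
its complement, although `P (u * t * x) = P x + 2`. So `1 ∈ P x` implies `0 ∈ P x`: one of the four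
quadrants cut out by the walls of `t` and `u` is empty. A `t`-prefix `p` has the form `v * s` with
`t = v * s * v⁻¹`, so `v` and `p` are separated by the wall of `t` only. If `u ≠ t` is a left
inversion of `p`, then `1`, `v` and `p` lie in three different quadrants, and the empty one is that
of the counterexamples to dominance.

If instead `K = ⟨u, t⟩` is finite, every reflection in `K` is a left inversion of exactly half of
the coset `K * v`. Dominance then forces `t` and `u` to be left inversions of the same elements of
`K * v`, but `v` tells them apart.
-/

namespace ReflectionDominance

open CoxeterSystem Filter

section Parity

variable {B W : Type*} [Group W] {M : CoxeterMatrix B} (cs : CoxeterSystem M W)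

open scoped Classical in
/-- The action of the simple reflection `cs.simple i` on signed reflections: it conjugates the
reflection and flips the sign (written additively in `ZMod 2`) of `cs.simple i` alone. The first
component ranges over all of `W` rather than over the reflections only. -/
noncomputable def signedConj (i : B) : Function.End (W × ZMod 2) := fun x ↦
  (cs.simple i * x.1 * cs.simple i, x.2 + if x.1 = cs.simple i then 1 else 0)

open scoped Classical in
theorem prod_map_signedConj_apply (ω : List B) (r : W) (e : ZMod 2) :
    (ω.map (signedConj cs)).prod (r, e) =
      (cs.wordProd ω * r * (cs.wordProd ω)⁻¹, e + (cs.rightInvSeq ω).count r) := by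
  induction ω with
  | nil => simp [Function.End.one_def]
  | cons i ω ih =>
    have conj_eq_simple_iff : cs.wordProd ω * r * (cs.wordProd ω)⁻¹ = cs.simple i ↔
        (cs.wordProd ω)⁻¹ * cs.simple i * cs.wordProd ω = r := by
      rw [mul_inv_eq_iff_eq_mul, mul_assoc, inv_mul_eq_iff_eq_mul, eq_comm]
    rw [List.map_cons, List.prod_cons]
    change signedConj cs i ((ω.map (signedConj cs)).prod (r, e)) = _
    rw [ih]
    simp only [signedConj, conj_eq_simple_iff]
    simp only [cs.wordProd_cons, mul_inv_rev, cs.inv_simple,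
      mul_assoc, rightInvSeq, List.count_cons, beq_iff_eq, Nat.cast_add, Nat.cast_ite,
      Nat.cast_one, Nat.cast_zero, add_assoc]

theorem prod_map_alternatingWord_two_mul {G : Type*} [Monoid G] (f : B → G) (i j : B) (m : ℕ) :
    ((alternatingWord i j (2 * m)).map f).prod = (f i * f j) ^ m := by
  induction m with
  | zero => simp [alternatingWord]
  | succ m ih =>
    rw [Nat.mul_succ, alternatingWord_succ', alternatingWord_succ', if_neg (by simp),
      if_pos (by simp), List.map_cons, List.map_cons, List.prod_cons, List.prod_cons, ih,
      ← mul_assoc, pow_succ']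

theorem reverse_alternatingWord_two_mul (i j : B) (m : ℕ) :
    (alternatingWord i j (2 * m)).reverse = alternatingWord j i (2 * m) := by
  induction m with
  | zero => rfl
  | succ m ih =>
    rw [Nat.mul_succ, alternatingWord_succ, alternatingWord_succ, List.concat_eq_append,
      List.concat_eq_append, List.reverse_concat, List.reverse_concat, ih, alternatingWord_succ' j,
      alternatingWord_succ' j, if_neg (by simp), if_pos (by simp)]

open scoped Classical in
/-- The inversion sequence of `(s_i s_j) ^ m = 1` runs twice through the same list. -/
theorem even_count_leftInvSeq_alternatingWord (i j : B) (r : W) :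
    Even ((cs.leftInvSeq (alternatingWord i j (2 * M i j))).count r) := by
  set L := cs.leftInvSeq (alternatingWord i j (2 * M i j)) with hL
  have drop_eq_take : L.drop (M i j) = L.take (M i j) := by
    refine List.ext_getElem (by simp [hL]; lia) fun k hk hk' ↦ ?_
    have hk : k < M i j := by simp at hk'; lia
    simp only [hL, List.getElem_drop, List.getElem_take]
    rw [cs.getElem_leftInvSeq_alternatingWord _ _ _ _ (by lia),
      cs.getElem_leftInvSeq_alternatingWord _ _ _ _ (by lia), prod_alternatingWord_eq_mul_pow,
      prod_alternatingWord_eq_mul_pow, if_neg (by simp), if_neg (by simp),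
      show (2 * (M i j + k) + 1) / 2 = M i j + k by lia, show (2 * k + 1) / 2 = k by lia,
      pow_add, cs.simple_mul_simple_pow', one_mul]
  rw [← List.take_append_drop (M i j) L, drop_eq_take, List.count_append]
  exact ⟨_, rfl⟩

theorem isLiftable_signedConj : M.IsLiftable (signedConj cs) := by
  classical
  intro i j
  funext ⟨r, e⟩
  have count_eq_zero :
      ((cs.rightInvSeq (alternatingWord i j (2 * M i j))).count r : ZMod 2) = 0 := by
    rw [← List.reverse_reverse (alternatingWord i j _), rightInvSeq_reverse, List.count_reverse,
      reverse_alternatingWord_two_mul, ZMod.natCast_eq_zero_iff_even, M.symmetric]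
    exact even_count_leftInvSeq_alternatingWord cs j i r
  rw [← prod_map_alternatingWord_two_mul, prod_map_signedConj_apply, count_eq_zero,
    wordProd, prod_map_alternatingWord_two_mul, cs.simple_mul_simple_pow]
  simp [Function.End.one_def]

/-- The parity of the number of times that the gallery from `1` to `w` given by any word for `w`
crosses the wall of `r`; for a reflection `r` it is `1` exactly when `r` is a left inversion
of `w`. -/
noncomputable def inversionParity (w r : W) : ZMod 2 :=
  (cs.lift ⟨signedConj cs, isLiftable_signedConj cs⟩ w⁻¹ (r, 0)).2

open scoped Classical in
theorem lift_signedConj_wordProd_apply (ω : List B) (r : W) (e : ZMod 2) :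
    cs.lift ⟨signedConj cs, isLiftable_signedConj cs⟩ (cs.wordProd ω) (r, e) =
      (cs.wordProd ω * r * (cs.wordProd ω)⁻¹, e + (cs.rightInvSeq ω).count r) := by
  have lift_comp_simple : cs.lift ⟨signedConj cs, isLiftable_signedConj cs⟩ ∘ cs.simple =
      signedConj cs := funext (cs.lift_apply_simple _)
  rw [← prod_map_signedConj_apply, wordProd, map_list_prod, List.map_map, lift_comp_simple]

open scoped Classical in
theorem inversionParity_wordProd (ω : List B) (r : W) :
    inversionParity cs (cs.wordProd ω) r = (cs.leftInvSeq ω).count r := by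
  rw [inversionParity, ← wordProd_reverse, lift_signedConj_wordProd_apply, rightInvSeq_reverse,
    List.count_reverse, zero_add]

theorem lift_signedConj_apply (w r : W) (e : ZMod 2) :
    cs.lift ⟨signedConj cs, isLiftable_signedConj cs⟩ w (r, e) =
      (w * r * w⁻¹, e + inversionParity cs w⁻¹ r) := by
  obtain ⟨ω, rfl⟩ := cs.wordProd_surjective w
  simp only [inversionParity, inv_inv, lift_signedConj_wordProd_apply, zero_add]

@[simp]
theorem inversionParity_one (r : W) : inversionParity cs 1 r = 0 := by
  simp [inversionParity, Function.End.one_def]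

theorem inversionParity_mul (x y r : W) :
    inversionParity cs (x * y) r = inversionParity cs x r + inversionParity cs y (x⁻¹ * r * x) := by
  rw [inversionParity, mul_inv_rev, map_mul]
  change (cs.lift ⟨signedConj cs, isLiftable_signedConj cs⟩ y⁻¹
    (cs.lift ⟨signedConj cs, isLiftable_signedConj cs⟩ x⁻¹ (r, 0))).2 = _
  simp only [lift_signedConj_apply, inv_inv, zero_add]

open scoped Classical in
theorem inversionParity_simple (i : B) (r : W) :
    inversionParity cs (cs.simple i) r = if r = cs.simple i then 1 else 0 := by
  rw [← wordProd_singleton, inversionParity_wordProd, leftInvSeq_singleton, wordProd_singleton,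
    List.count_singleton]
  simp only [beq_iff_eq, eq_comm (a := r), Nat.cast_ite, Nat.cast_one, Nat.cast_zero]

variable {cs}

theorem inversionParity_mul_simple_of_ne {w r : W} {i : B} (hr : r ≠ w * cs.simple i * w⁻¹) :
    inversionParity cs (w * cs.simple i) r = inversionParity cs w r := by
  have conj_ne : w⁻¹ * r * w ≠ cs.simple i := by
    rwa [Ne, mul_assoc, inv_mul_eq_iff_eq_mul, ← eq_mul_inv_iff_mul_eq]
  rw [inversionParity_mul, inversionParity_simple, if_neg conj_ne, add_zero]

theorem inversionParity_self {r : W} (hr : cs.IsReflection r) : inversionParity cs r r = 1 := by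
  obtain ⟨w, i, rfl⟩ := hr
  have mul_inv_parity := inversionParity_mul cs w w⁻¹ (w * cs.simple i * w⁻¹)
  rw [mul_inv_cancel, inversionParity_one] at mul_inv_parity
  rw [inversionParity_mul, inversionParity_mul, inversionParity_simple]
  simp only [mul_assoc, inv_mul_cancel_left, inv_mul_cancel, mul_one, ↓reduceIte, mul_inv_rev,
    inv_simple, simple_mul_simple_cancel_left] at mul_inv_parity ⊢
  linear_combination -mul_inv_parity

theorem inversionParity_reflection_mul {r : W} (hr : cs.IsReflection r) (w : W) :
    inversionParity cs (r * w) r = inversionParity cs w r + 1 := by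
  rw [inversionParity_mul, inversionParity_self hr, hr.inv, hr.mul_self, one_mul, add_comm]

theorem mem_leftInvSeq_of_inversionParity_ne_zero {ω : List B} {r : W}
    (h : inversionParity cs (cs.wordProd ω) r ≠ 0) : r ∈ cs.leftInvSeq ω := by
  classical
  contrapose! h
  rw [inversionParity_wordProd, List.count_eq_zero_of_not_mem h, Nat.cast_zero]

theorem isLeftInversion_of_inversionParity_ne_zero {w r : W} (h : inversionParity cs w r ≠ 0) :
    cs.IsLeftInversion w r := by
  obtain ⟨ω, hω, rfl⟩ := cs.exists_isReduced w
  exact cs.isLeftInversion_of_mem_leftInvSeq hω (mem_leftInvSeq_of_inversionParity_ne_zero h)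

theorem isLeftInversion_iff_inversionParity {r : W} (hr : cs.IsReflection r) (w : W) :
    cs.IsLeftInversion w r ↔ inversionParity cs w r = 1 := by
  refine ⟨fun hw ↦ ?_, fun h ↦ isLeftInversion_of_inversionParity_ne_zero (by simp [h])⟩
  by_contra hne
  have parity_eq_zero := (Fin.eq_one_of_ne_zero (inversionParity cs w r)).mt hne
  refine hr.not_isLeftInversion_mul_right_iff.mpr hw
    (isLeftInversion_of_inversionParity_ne_zero ?_)
  rw [inversionParity_reflection_mul hr, not_not.mp parity_eq_zero]
  decide

theorem not_isLeftInversion_iff_inversionParity {r : W} (hr : cs.IsReflection r) (w : W) :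
    ¬cs.IsLeftInversion w r ↔ inversionParity cs w r = 0 := by
  rw [isLeftInversion_iff_inversionParity hr]
  generalize inversionParity cs w r = a
  decide +revert

/-- The strong exchange property. -/
theorem mem_leftInvSeq_of_isLeftInversion {ω : List B} {r : W}
    (h : cs.IsLeftInversion (cs.wordProd ω) r) : r ∈ cs.leftInvSeq ω :=
  mem_leftInvSeq_of_inversionParity_ne_zero <| by
    simp [(isLeftInversion_iff_inversionParity h.1 _).mp h]

theorem isLeftInversion_mul_simple_iff {w r : W} {i : B} (hr : cs.IsReflection r)
    (hne : r ≠ w * cs.simple i * w⁻¹) :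
    cs.IsLeftInversion (w * cs.simple i) r ↔ cs.IsLeftInversion w r := by
  rw [isLeftInversion_iff_inversionParity hr, isLeftInversion_iff_inversionParity hr,
    inversionParity_mul_simple_of_ne hne]

variable (cs) in
theorem finite_setOf_inversionParity_ne_zero (w : W) : {r | inversionParity cs w r ≠ 0}.Finite := by
  obtain ⟨ω, rfl⟩ := cs.wordProd_surjective w
  exact (List.finite_toSet _).subset fun _ ↦ mem_leftInvSeq_of_inversionParity_ne_zero

end Parity

section Dihedral

variable {G : Type*} [Group G] {t u : G}

/-- For involutions `t` and `u`, the reflections of the dihedral group `⟨t, u⟩`, indexed by `ℤ`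
so that `t` and `u` have the indices `0` and `1`; the rotation `(u * t) ^ k` conjugates the one of
index `n` to the one of index `n + 2 * k`. -/
def dihedralReflection (t u : G) (n : ℤ) : G := (u * t) ^ n * t

@[simp]
theorem dihedralReflection_zero : dihedralReflection t u 0 = t := by
  rw [dihedralReflection, zpow_zero, one_mul]

theorem dihedralReflection_one (ht : t * t = 1) : dihedralReflection t u 1 = u := by
  rw [dihedralReflection, zpow_one, mul_assoc, ht, mul_one]

theorem mul_zpow_mul_eq_zpow_neg_mul (ht : t * t = 1) (hu : u * u = 1) (n : ℤ) :
    t * (u * t) ^ n = (u * t) ^ (-n) * t := by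
  have semiconj : SemiconjBy t (u * t) (u * t)⁻¹ := by
    rw [SemiconjBy, mul_inv_rev, inv_eq_of_mul_eq_one_right ht, inv_eq_of_mul_eq_one_right hu,
      ← mul_assoc]
  rw [zpow_neg, ← inv_zpow]
  exact semiconj.zpow_right n

theorem dihedralReflection_mul_zpow (ht : t * t = 1) (hu : u * u = 1) (n k : ℤ) :
    dihedralReflection t u n * (u * t) ^ k = dihedralReflection t u (n - k) := by
  rw [dihedralReflection, mul_assoc, mul_zpow_mul_eq_zpow_neg_mul ht hu, ← mul_assoc, ← zpow_add,
    dihedralReflection, sub_eq_add_neg]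

theorem zpow_mul_dihedralReflection (k n : ℤ) :
    (u * t) ^ k * dihedralReflection t u n = dihedralReflection t u (k + n) := by
  rw [dihedralReflection, ← mul_assoc, ← zpow_add, dihedralReflection]

theorem dihedralReflection_mul (ht : t * t = 1) (hu : u * u = 1) (n k : ℤ) :
    dihedralReflection t u n * dihedralReflection t u k = (u * t) ^ (n - k) := by
  conv_lhs => rw [dihedralReflection.eq_def t u k]
  rw [← mul_assoc, dihedralReflection_mul_zpow ht hu, dihedralReflection, mul_assoc, ht, mul_one]

theorem inv_dihedralReflection (ht : t * t = 1) (hu : u * u = 1) (n : ℤ) :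
    (dihedralReflection t u n)⁻¹ = dihedralReflection t u n :=
  inv_eq_of_mul_eq_one_right <| by rw [dihedralReflection_mul ht hu, sub_self, zpow_zero]

theorem zpow_conj_dihedralReflection (ht : t * t = 1) (hu : u * u = 1) (k n : ℤ) :
    ((u * t) ^ k)⁻¹ * dihedralReflection t u n * (u * t) ^ k =
      dihedralReflection t u (n - 2 * k) := by
  rw [← zpow_neg, zpow_mul_dihedralReflection, dihedralReflection_mul_zpow ht hu]
  congr 1
  ring

theorem dihedralReflection_conj_dihedralReflection (ht : t * t = 1) (hu : u * u = 1) (k n : ℤ) :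
    (dihedralReflection t u k)⁻¹ * dihedralReflection t u n * dihedralReflection t u k =
      dihedralReflection t u (2 * k - n) := by
  rw [inv_dihedralReflection ht hu, dihedralReflection_mul ht hu, zpow_mul_dihedralReflection]
  congr 1
  ring

theorem dihedralReflection_injective (hc : ¬IsOfFinOrder (u * t)) :
    Function.Injective (dihedralReflection t u) :=
  (mul_left_injective t).comp (injective_zpow_iff_not_isOfFinOrder.mpr hc)

open scoped Pointwise in
theorem not_isOfFinOrder_of_infinite_closure (ht : t * t = 1) (hu : u * u = 1)
    (hinf : Infinite (Subgroup.closure {u, t})) : ¬IsOfFinOrder (u * t) := by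
  intro hc
  have conj_mul_eq_inv : t * (u * t) * t⁻¹ = (u * t)⁻¹ := by
    rw [mul_inv_eq_iff_eq_mul]
    simpa only [zpow_one, zpow_neg_one] using mul_zpow_mul_eq_zpow_neg_mul ht hu 1
  have zpowers_le_normalizer :
      Subgroup.zpowers t ≤ Subgroup.normalizer (Subgroup.zpowers (u * t) : Set G) := by
    rw [Subgroup.zpowers_le, Subgroup.mem_normalizer_iff_map_conj_eq, MonoidHom.map_zpowers,
      MonoidHom.coe_coe, MulAut.conj_apply, conj_mul_eq_inv, Subgroup.zpowers_inv]
  have closure_le_sup :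
      Subgroup.closure {u, t} ≤ Subgroup.zpowers (u * t) ⊔ Subgroup.zpowers t := by
    have t_mem := Subgroup.mem_sup_right (S := Subgroup.zpowers (u * t)) (Subgroup.mem_zpowers t)
    have ut_mem := Subgroup.mem_sup_left (T := Subgroup.zpowers t) (Subgroup.mem_zpowers (u * t))
    rw [Subgroup.closure_le, Set.insert_subset_iff, Set.singleton_subset_iff]
    exact ⟨(Subgroup.mul_mem_cancel_right _ t_mem).mp ut_mem, t_mem⟩
  have finite_sup : (↑(Subgroup.zpowers (u * t) ⊔ Subgroup.zpowers t) : Set G).Finite := by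
    have finOrder_t : IsOfFinOrder t := isOfFinOrder_iff_pow_eq_one.mpr ⟨2, two_pos, by rw [sq, ht]⟩
    rw [Subgroup.coe_mul_of_right_le_normalizer_left _ _ zpowers_le_normalizer]
    exact hc.finite_zpowers.mul finOrder_t.finite_zpowers
  exact Set.infinite_coe_iff.mp hinf (finite_sup.subset closure_le_sup)

end Dihedral

theorem isGreatest_and_isLeast_compl_of_flip {A A' : Set ℤ} {k lo hi : ℤ}
    (hflip : ∀ n, n ∈ A' ↔ 2 * k - n ∉ A) (hne : ∀ n ≠ k, n ∈ A' ↔ n ∈ A)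
    (hhi : IsGreatest A hi) (hlo : IsLeast Aᶜ lo) (hlt : lo < hi) :
    IsGreatest A' hi ∧ IsLeast A'ᶜ lo := by
  have le_hi {n : ℤ} (hn : n ∈ A) : n ≤ hi := hhi.2 hn
  have lo_le {n : ℤ} (hn : n ∉ A) : lo ≤ n := hlo.2 hn
  have lo_notMem : lo ∉ A := hlo.1
  have k_ne_hi : k ≠ hi := by
    rintro rfl
    have reflected_mem : 2 * k - lo ∈ A := by grind
    have := le_hi reflected_mem
    lia
  have k_ne_lo : k ≠ lo := by
    rintro rfl
    have reflected_notMem : 2 * k - hi ∉ A := by grind [hhi.1]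
    have := lo_le reflected_notMem
    lia
  have hi_mem : hi ∈ A' := (hne hi k_ne_hi.symm).mpr hhi.1
  have lo_notMem' : lo ∉ A' := (hne lo k_ne_lo.symm).not.mpr lo_notMem
  have lo_le_reflected : lo ≤ 2 * k - hi := lo_le ((hflip hi).mp hi_mem)
  have reflected_le_hi : 2 * k - lo ≤ hi := le_hi (not_not.mp ((hflip lo).not.mp lo_notMem'))
  refine ⟨⟨hi_mem, fun n hn ↦ ?_⟩, ⟨lo_notMem', fun n hn ↦ ?_⟩⟩
  · obtain rfl | hnk := eq_or_ne n k
    · lia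
    · exact le_hi ((hne n hnk).mp hn)
  · obtain rfl | hnk := eq_or_ne n k
    · lia
    · exact lo_le ((hne n hnk).not.mp hn)

section Dominance

variable {B W : Type*} [Group W] {M : CoxeterMatrix B} {cs : CoxeterSystem M W} {t u : W}

theorem isReflection_dihedralReflection (ht : cs.IsReflection t) (hu : cs.IsReflection u) (n : ℤ) :
    cs.IsReflection (dihedralReflection t u n) := by
  obtain ⟨k, rfl | rfl⟩ := n.even_or_odd'
  · have conj_eq := zpow_conj_dihedralReflection ht.mul_self hu.mul_self k (2 * k)
    rw [sub_self, dihedralReflection_zero] at conj_eq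
    rwa [← isReflection_conj_iff cs ((u * t) ^ k)⁻¹, inv_inv, conj_eq]
  · have conj_eq := zpow_conj_dihedralReflection ht.mul_self hu.mul_self k (2 * k + 1)
    rw [add_sub_cancel_left, dihedralReflection_one ht.mul_self] at conj_eq
    rwa [← isReflection_conj_iff cs ((u * t) ^ k)⁻¹, inv_inv, conj_eq]

theorem inversionParity_dihedralReflection_zpow_mul (ht : cs.IsReflection t)
    (hu : cs.IsReflection u) (k n : ℤ) (x : W) :
    inversionParity cs ((u * t) ^ k * x) (dihedralReflection t u n) =
      inversionParity cs ((u * t) ^ k) (dihedralReflection t u n) +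
        inversionParity cs x (dihedralReflection t u (n - 2 * k)) := by
  rw [inversionParity_mul, zpow_conj_dihedralReflection ht.mul_self hu.mul_self]

theorem inversionParity_dihedralReflection_mul (ht : cs.IsReflection t)
    (hu : cs.IsReflection u) (k n : ℤ) (x : W) :
    inversionParity cs (dihedralReflection t u k * x) (dihedralReflection t u n) =
      inversionParity cs (dihedralReflection t u k) (dihedralReflection t u n) +
        inversionParity cs x (dihedralReflection t u (2 * k - n)) := by
  rw [inversionParity_mul, dihedralReflection_conj_dihedralReflection ht.mul_self hu.mul_self]

variable (cs t u) in
/-- The parity `inversionParity cs ((u * t) ^ k) r` for `k → +∞`, where `r` is the dihedral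
reflection of index `n`: it tells on which side of the wall of `r` the rotations `(u * t) ^ k`
end up. This is junk if the parity does not stabilize. -/
noncomputable def endParity (n : ℤ) : ZMod 2 :=
  Classical.epsilon fun a ↦
    ∀ᶠ k : ℤ in atTop, inversionParity cs ((u * t) ^ k) (dihedralReflection t u n) = a

variable (cs t u) in
/-- The set of the indices of the dihedral reflections whose wall does not separate `x` from the
rotations `(u * t) ^ k` with `k` large. -/
def positiveSide (x : W) : Set ℤ :=
  {n | inversionParity cs x (dihedralReflection t u n) = endParity cs t u n}

theorem mem_positiveSide {x : W} {n : ℤ} : n ∈ positiveSide cs t u x ↔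
    inversionParity cs x (dihedralReflection t u n) = endParity cs t u n :=
  Iff.rfl

theorem eventually_inversionParity_zpow_mul (ht : cs.IsReflection t) (hu : cs.IsReflection u)
    (hc : ¬IsOfFinOrder (u * t)) (n : ℤ) (x : W) :
    ∀ᶠ k : ℤ in atTop, inversionParity cs ((u * t) ^ k * x) (dihedralReflection t u n) =
      inversionParity cs ((u * t) ^ k) (dihedralReflection t u n) := by
  have injective : Function.Injective fun k : ℤ ↦ dihedralReflection t u (n - 2 * k) :=
    (dihedralReflection_injective hc).comp fun _ _ _ ↦ by grind
  have eventually_eq_zero : ∀ᶠ k : ℤ in cofinite,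
      inversionParity cs x (dihedralReflection t u (n - 2 * k)) = 0 :=
    (finite_setOf_inversionParity_ne_zero cs x).preimage injective.injOn
  rw [Int.cofinite_eq, eventually_sup] at eventually_eq_zero
  filter_upwards [eventually_eq_zero.2] with k hk
  rw [inversionParity_dihedralReflection_zpow_mul ht hu, hk, add_zero]

theorem eventually_inversionParity_zpow (ht : cs.IsReflection t) (hu : cs.IsReflection u)
    (hc : ¬IsOfFinOrder (u * t)) (n : ℤ) :
    ∀ᶠ k : ℤ in atTop,
      inversionParity cs ((u * t) ^ k) (dihedralReflection t u n) = endParity cs t u n := by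
  refine Classical.epsilon_spec (p := fun a ↦ ∀ᶠ k : ℤ in atTop,
    inversionParity cs ((u * t) ^ k) (dihedralReflection t u n) = a) ?_
  obtain ⟨K, hK⟩ := eventually_atTop.mp (eventually_inversionParity_zpow_mul ht hu hc n (u * t))
  refine ⟨inversionParity cs ((u * t) ^ K) (dihedralReflection t u n),
    eventually_atTop.mpr ⟨K, fun k hk ↦ ?_⟩⟩
  induction k, hk using Int.leInduction with
  | base => rfl
  | succ k hk ih => rw [zpow_add_one, hK k hk, ih]

theorem eventually_mem_positiveSide_zpow_mul (ht : cs.IsReflection t) (hu : cs.IsReflection u)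
    (hc : ¬IsOfFinOrder (u * t)) (n : ℤ) (x : W) :
    ∀ᶠ k : ℤ in atTop, n ∈ positiveSide cs t u ((u * t) ^ k * x) := by
  filter_upwards [eventually_inversionParity_zpow_mul ht hu hc n x,
    eventually_inversionParity_zpow ht hu hc n] with k hk hk'
  rw [mem_positiveSide, hk, hk']

theorem endParity_eq_endParity_reflect (ht : cs.IsReflection t) (hu : cs.IsReflection u)
    (hc : ¬IsOfFinOrder (u * t)) (j n : ℤ) :
    endParity cs t u n =
      inversionParity cs (dihedralReflection t u j) (dihedralReflection t u n) +
        endParity cs t u (2 * j - n) + 1 := by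
  have eventually_shifted := (tendsto_atTop_add_const_right atTop (n - j) tendsto_id).eventually
    (eventually_inversionParity_zpow ht hu hc n)
  have rotation_eq (k : ℤ) : (u * t) ^ (k + (n - j)) =
      dihedralReflection t u n * (dihedralReflection t u j * (u * t) ^ k) := by
    rw [← mul_assoc, dihedralReflection_mul ht.mul_self hu.mul_self, add_comm, zpow_add]
  obtain ⟨k, hk, hk'⟩ := (eventually_shifted.and
    (eventually_inversionParity_zpow ht hu hc (2 * j - n))).exists
  rw [← hk, ← hk', id_eq, rotation_eq,
    inversionParity_reflection_mul (isReflection_dihedralReflection ht hu n),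
    inversionParity_dihedralReflection_mul ht hu]

theorem mem_positiveSide_dihedralReflection_mul (ht : cs.IsReflection t) (hu : cs.IsReflection u)
    (hc : ¬IsOfFinOrder (u * t)) (j n : ℤ) (x : W) :
    n ∈ positiveSide cs t u (dihedralReflection t u j * x) ↔
      2 * j - n ∉ positiveSide cs t u x := by
  rw [mem_positiveSide, mem_positiveSide, inversionParity_dihedralReflection_mul ht hu,
    endParity_eq_endParity_reflect ht hu hc j n]
  generalize inversionParity cs (dihedralReflection t u j) _ = a
  generalize inversionParity cs x _ = b
  generalize endParity cs t u _ = c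
  decide +revert

theorem mem_positiveSide_zpow_mul (ht : cs.IsReflection t) (hu : cs.IsReflection u)
    (hc : ¬IsOfFinOrder (u * t)) (k n : ℤ) (x : W) :
    n ∈ positiveSide cs t u ((u * t) ^ k * x) ↔ n - 2 * k ∈ positiveSide cs t u x := by
  have rotation_eq : (u * t) ^ k = dihedralReflection t u k * dihedralReflection t u 0 := by
    rw [dihedralReflection_mul ht.mul_self hu.mul_self, sub_zero]
  rw [rotation_eq, mul_assoc, mem_positiveSide_dihedralReflection_mul ht hu hc,
    mem_positiveSide_dihedralReflection_mul ht hu hc, not_not]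
  congr! 1
  ring

theorem eventually_mem_positiveSide_atBot (ht : cs.IsReflection t) (hu : cs.IsReflection u)
    (hc : ¬IsOfFinOrder (u * t)) (x : W) : ∀ᶠ n in atBot, n ∈ positiveSide cs t u x := by
  obtain ⟨K, hK⟩ := eventually_atTop.mp <|
    (eventually_mem_positiveSide_zpow_mul ht hu hc 0 x).and
      (eventually_mem_positiveSide_zpow_mul ht hu hc 1 x)
  refine eventually_atBot.mpr ⟨-2 * K, fun n hn ↦ ?_⟩
  simp only [mem_positiveSide_zpow_mul ht hu hc] at hK
  obtain ⟨k, rfl | rfl⟩ := n.even_or_odd'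
  · simpa using (hK (-k) (by lia)).1
  · simpa [add_comm] using (hK (-k) (by lia)).2

theorem eventually_notMem_positiveSide_atTop (ht : cs.IsReflection t) (hu : cs.IsReflection u)
    (hc : ¬IsOfFinOrder (u * t)) (x : W) : ∀ᶠ n in atTop, n ∉ positiveSide cs t u x := by
  filter_upwards [tendsto_neg_atTop_atBot.eventually
    (eventually_mem_positiveSide_atBot ht hu hc (dihedralReflection t u 0 * x))] with n hn
  simpa using (mem_positiveSide_dihedralReflection_mul ht hu hc 0 (-n) x).mp hn

theorem exists_isGreatest_positiveSide (ht : cs.IsReflection t) (hu : cs.IsReflection u)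
    (hc : ¬IsOfFinOrder (u * t)) (x : W) : ∃ m, IsGreatest (positiveSide cs t u x) m := by
  obtain ⟨b, hb⟩ := eventually_atTop.mp (eventually_notMem_positiveSide_atTop ht hu hc x)
  obtain ⟨m, hm, hle⟩ := Int.exists_greatest_of_bdd (P := (· ∈ positiveSide cs t u x))
    ⟨b, fun n hn ↦ le_of_not_ge fun hbn ↦ hb n hbn hn⟩
    (eventually_mem_positiveSide_atBot ht hu hc x).exists
  exact ⟨m, hm, hle⟩

theorem exists_isLeast_compl_positiveSide (ht : cs.IsReflection t) (hu : cs.IsReflection u)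
    (hc : ¬IsOfFinOrder (u * t)) (x : W) : ∃ m, IsLeast (positiveSide cs t u x)ᶜ m := by
  obtain ⟨b, hb⟩ := eventually_atBot.mp (eventually_mem_positiveSide_atBot ht hu hc x)
  obtain ⟨m, hm, hle⟩ := Int.exists_least_of_bdd (P := (· ∉ positiveSide cs t u x))
    ⟨b, fun n hn ↦ le_of_not_ge fun hnb ↦ hn (hb n hnb)⟩
    (eventually_notMem_positiveSide_atTop ht hu hc x).exists
  exact ⟨m, hm, hle⟩

theorem positiveSide_mul_simple (ht : cs.IsReflection t) (hu : cs.IsReflection u)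
    (hc : ¬IsOfFinOrder (u * t)) (x : W) (i : B) :
    positiveSide cs t u (x * cs.simple i) = positiveSide cs t u x ∨
      ∃ k, (∀ n, n ∈ positiveSide cs t u (x * cs.simple i) ↔
          2 * k - n ∉ positiveSide cs t u x) ∧
        ∀ n ≠ k, n ∈ positiveSide cs t u (x * cs.simple i) ↔ n ∈ positiveSide cs t u x := by
  have mem_iff_of_ne {n : ℤ} (hn : dihedralReflection t u n ≠ x * cs.simple i * x⁻¹) :
      n ∈ positiveSide cs t u (x * cs.simple i) ↔ n ∈ positiveSide cs t u x := by
    rw [mem_positiveSide, mem_positiveSide, inversionParity_mul_simple_of_ne hn]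
  by_cases h : ∃ k, dihedralReflection t u k = x * cs.simple i * x⁻¹
  · obtain ⟨k, hk⟩ := h
    refine Or.inr ⟨k, fun n ↦ ?_, fun n hn ↦ mem_iff_of_ne ?_⟩
    · rw [← mem_positiveSide_dihedralReflection_mul ht hu hc, hk, inv_mul_cancel_right]
    · rw [← hk]
      exact (dihedralReflection_injective hc).ne hn
  · exact Or.inl (Set.ext fun n ↦ mem_iff_of_ne fun hn ↦ h ⟨n, hn⟩)

theorem isGreatest_and_isLeast_compl_positiveSide_mul (ht : cs.IsReflection t)
    (hu : cs.IsReflection u) (hc : ¬IsOfFinOrder (u * t)) {x : W} {lo hi : ℤ}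
    (hhi : IsGreatest (positiveSide cs t u x) hi) (hlo : IsLeast (positiveSide cs t u x)ᶜ lo)
    (hlt : lo < hi) (y : W) :
    IsGreatest (positiveSide cs t u (x * y)) hi ∧ IsLeast (positiveSide cs t u (x * y))ᶜ lo := by
  induction y using cs.simple_induction_right with
  | one => rw [mul_one]; exact ⟨hhi, hlo⟩
  | mul_simple_right y i ih =>
    rw [← mul_assoc]
    obtain heq | ⟨k, hflip, hne⟩ := positiveSide_mul_simple ht hu hc (x * y) i
    · rwa [heq]
    · exact isGreatest_and_isLeast_compl_of_flip hflip hne ih.1 ih.2 hlt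

theorem isLowerSet_positiveSide (ht : cs.IsReflection t) (hu : cs.IsReflection u)
    (hc : ¬IsOfFinOrder (u * t)) (x : W) : IsLowerSet (positiveSide cs t u x) := by
  intro a b hba ha
  by_contra hb
  obtain ⟨hi, hhi⟩ := exists_isGreatest_positiveSide ht hu hc x
  obtain ⟨lo, hlo⟩ := exists_isLeast_compl_positiveSide ht hu hc x
  have b_ne_a : b ≠ a := by
    rintro rfl
    exact hb ha
  have lo_lt_hi : lo < hi := by
    have := hlo.2 hb
    have := hhi.2 ha
    lia
  have isGreatest_rotated :=
    (isGreatest_and_isLeast_compl_positiveSide_mul ht hu hc hhi hlo lo_lt_hi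
      (x⁻¹ * ((u * t) ^ (1 : ℤ) * x))).1
  rw [mul_inv_cancel_left] at isGreatest_rotated
  have rotated_mem : hi + 2 ∈ positiveSide cs t u ((u * t) ^ (1 : ℤ) * x) := by
    rw [mem_positiveSide_zpow_mul ht hu hc]
    simpa using hhi.1
  have := isGreatest_rotated.2 rotated_mem
  lia

theorem isLeftInversion_of_infinite_closure (ht : cs.IsReflection t) (hu : cs.IsReflection u)
    (hinf : Infinite (Subgroup.closure {u, t})) {v p : W} (hvt : ¬cs.IsLeftInversion v t)
    (hvu : cs.IsLeftInversion v u) (hpt : cs.IsLeftInversion p t) (hpu : cs.IsLeftInversion p u)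
    {w : W} (hw : cs.IsLeftInversion w t) : cs.IsLeftInversion w u := by
  have hc := not_isOfFinOrder_of_infinite_closure ht.mul_self hu.mul_self hinf
  have t_parity_of_u_parity (x : W) (hx : inversionParity cs x u = endParity cs t u 1) :
      inversionParity cs x t = endParity cs t u 0 := by
    have one_mem : 1 ∈ positiveSide cs t u x := by
      rwa [mem_positiveSide, dihedralReflection_one ht.mul_self]
    have zero_mem := isLowerSet_positiveSide ht hu hc x zero_le_one one_mem
    rwa [mem_positiveSide, dihedralReflection_zero] at zero_mem
  by_contra hwu
  obtain hside | hside : endParity cs t u 1 = 0 ∨ endParity cs t u 1 = 1 := by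
    generalize endParity cs t u 1 = a
    decide +revert
  · have t_parity_one := t_parity_of_u_parity 1 (by rw [hside, inversionParity_one])
    have t_parity_w := t_parity_of_u_parity w <| by
      rwa [hside, ← not_isLeftInversion_iff_inversionParity hu]
    rw [inversionParity_one] at t_parity_one
    rw [(isLeftInversion_iff_inversionParity ht w).mp hw, ← t_parity_one] at t_parity_w
    exact one_ne_zero t_parity_w
  · have t_parity_v := t_parity_of_u_parity v <| by
      rwa [hside, ← isLeftInversion_iff_inversionParity hu]
    have t_parity_p := t_parity_of_u_parity p <| by
      rwa [hside, ← isLeftInversion_iff_inversionParity hu]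
    rw [(not_isLeftInversion_iff_inversionParity ht v).mp hvt] at t_parity_v
    rw [(isLeftInversion_iff_inversionParity ht p).mp hpt, ← t_parity_v] at t_parity_p
    exact one_ne_zero t_parity_p

theorem two_mul_ncard_setOf_isLeftInversion_mul {K : Subgroup W} [Finite K] {r : W}
    (hr : cs.IsReflection r) (hrK : r ∈ K) (v : W) :
    2 * {x : K | cs.IsLeftInversion (x * v) r}.ncard = Nat.card K := by
  have image_eq_compl : (⟨r, hrK⟩ * · : K → K) '' {x : K | cs.IsLeftInversion (x * v) r} =
      {x : K | cs.IsLeftInversion (x * v) r}ᶜ := by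
    rw [Set.image_mul_left]
    ext x
    rw [Set.mem_preimage, Set.mem_ofPred_eq, Set.mem_compl_iff, Set.mem_ofPred_eq, Subgroup.coe_mul,
      Subgroup.coe_inv, Subgroup.coe_mk, hr.inv, mul_assoc, hr.isLeftInversion_mul_right_iff]
  rw [← Set.ncard_add_ncard_compl {x : K | cs.IsLeftInversion (x * v) r}, ← image_eq_compl,
    Set.ncard_image_of_injective _ (mul_right_injective _), two_mul]

theorem infinite_closure_of_forall_isLeftInversion (ht : cs.IsReflection t)
    (hu : cs.IsReflection u) (hdom : ∀ w, cs.IsLeftInversion w t → cs.IsLeftInversion w u) {v : W}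
    (hvt : ¬cs.IsLeftInversion v t) (hvu : cs.IsLeftInversion v u) :
    Infinite (Subgroup.closure {u, t}) := by
  by_contra hfin
  rw [not_infinite_iff_finite] at hfin
  set K := Subgroup.closure {u, t}
  have card_t := two_mul_ncard_setOf_isLeftInversion_mul ht
    (Subgroup.subset_closure (by simp) : t ∈ K) v
  have card_u := two_mul_ncard_setOf_isLeftInversion_mul hu
    (Subgroup.subset_closure (by simp) : u ∈ K) v
  have set_eq : {x : K | cs.IsLeftInversion (x * v) t} = {x : K | cs.IsLeftInversion (x * v) u} :=
    Set.eq_of_subset_of_ncard_le (fun x hx ↦ hdom (x * v) hx) (by lia)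
  have one_mem : (1 : K) ∈ {x : K | cs.IsLeftInversion (x * v) u} := by
    rwa [Set.mem_ofPred_eq, Subgroup.coe_one, one_mul]
  rw [← set_eq, Set.mem_ofPred_eq, Subgroup.coe_one, one_mul] at one_mem
  exact hvt one_mem

theorem isLeftInversion_iff_length_inv_mul_lt (ht : cs.IsReflection t) {p : W} :
    cs.IsLeftInversion p t ↔ cs.length (p⁻¹ * t) < cs.length p := by
  rw [IsLeftInversion, and_iff_right ht, ← cs.length_inv (t * p), mul_inv_rev, ht.inv]

theorem exists_eq_reflection_mul_mul_simple {p : W} (hpt : cs.IsLeftInversion p t)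
    (hlen : 2 * cs.length p ≤ cs.length t + 1) : ∃ i, p = t * p * cs.simple i := by
  obtain ⟨ω, hω, rfl⟩ := cs.exists_isReduced p
  obtain ⟨j, hj, ht_eq⟩ := List.mem_iff_getElem.mp (mem_leftInvSeq_of_isLeftInversion hpt)
  rw [length_leftInvSeq] at hj
  rw [cs.getElem_leftInvSeq ω j hj] at ht_eq
  have length_t_le : cs.length t ≤ 2 * j + 1 := by
    have t_eq_wordProd :
        t = cs.wordProd (ω.take j ++ ω[j] :: (ω.take j).reverse) := by
      rw [wordProd_append, wordProd_cons, wordProd_reverse, ← mul_assoc, ht_eq]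
    rw [t_eq_wordProd]
    refine (cs.length_wordProd_le _).trans ?_
    simp only [List.length_append, List.length_cons, List.length_reverse, List.length_take]
    lia
  have j_succ_eq : j + 1 = ω.length := by
    rw [hω] at hlen
    lia
  have wordProd_eq : cs.wordProd ω = cs.wordProd (ω.take j) * cs.simple ω[j] := by
    rw [← wordProd_singleton, ← wordProd_append, List.take_append_getElem, j_succ_eq,
      List.take_length]
  refine ⟨ω[j], ?_⟩
  rw [wordProd_eq, ← ht_eq]
  simp only [mul_assoc, inv_mul_cancel_left, simple_mul_simple_self, mul_one]

theorem isLeftInversion_reflection_mul_iff (hu : cs.IsReflection u) (hne : u ≠ t) {p : W}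
    (hpt : cs.IsLeftInversion p t) (hlen : 2 * cs.length p ≤ cs.length t + 1) :
    cs.IsLeftInversion (t * p) u ↔ cs.IsLeftInversion p u := by
  obtain ⟨i, hp⟩ := exists_eq_reflection_mul_mul_simple hpt hlen
  have u_ne_conj : u ≠ t * p * cs.simple i * (t * p)⁻¹ := by
    rwa [← hp, mul_inv_rev, mul_inv_cancel_left, hpt.1.inv]
  conv_rhs => rw [hp]
  exact (isLeftInversion_mul_simple_iff hu u_ne_conj).symm

end Dominance

end ReflectionDominance

/-- Let `t` be a reflection and `p` a `t`-prefix. For every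
reflection `u`, the root of `u` is dominated by the root of `t` (i.e. every
`w` having `t` as left inversion also has `u` as left inversion) iff `u = t`,
or else `u` is a left inversion of `p` and `⟨u, t⟩` is infinite. -/
theorem stmt_5 {B : Type*} {W : Type*} [Group W] {M : CoxeterMatrix B}
    (cs : CoxeterSystem M W) (t : W) (ht : cs.IsReflection t)
    (p : W)
    (hp1 : cs.length p + cs.length (p⁻¹ * t) = cs.length t)
    (hp2 : 2 * cs.length p = cs.length t + 1)
    (u : W) (hu : cs.IsReflection u) :
    (∀ w : W, cs.IsLeftInversion w t → cs.IsLeftInversion w u) ↔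
      (u = t ∨ (cs.IsLeftInversion p u ∧
        Infinite (Subgroup.closure ({u, t} : Set W)))) := by
  obtain rfl | hne := eq_or_ne u t
  · simp
  have hpt : cs.IsLeftInversion p t :=
    (ReflectionDominance.isLeftInversion_iff_length_inv_mul_lt ht).mpr (by lia)
  have hvt : ¬cs.IsLeftInversion (t * p) t := ht.not_isLeftInversion_mul_right_iff.mpr hpt
  have hvu := ReflectionDominance.isLeftInversion_reflection_mul_iff hu hne hpt hp2.le
  rw [or_iff_right hne]
  constructor
  · intro hdom
    have hpu := hdom p hpt
    exact ⟨hpu, ReflectionDominance.infinite_closure_of_forall_isLeftInversion ht hu hdom hvt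
      (hvu.mpr hpu)⟩
  · rintro ⟨hpu, hinf⟩ w hw
    exact ReflectionDominance.isLeftInversion_of_infinite_closure ht hu hinf hvt (hvu.mpr hpu)
      hpt hpu hw
end

section
/- Let r, t ∈ W be distinct reflections, W' := Subgroup.closure {r, t}, and let p_r be an r-prefix. Let D := {u ∈ W | u ∈ W', u is a reflection, and u is a left inversion of p_r}. Suppose D has more than one element. Then: there is a unique a ∈ D such that ℓ(a) < ℓ(u) for every u ∈ D with u ≠ a; there is a unique c ∈ D with c ≠ a such that ℓ(c) < ℓ(u) for every u ∈ D with u ≠ a and u ≠ c; and the set of canonical generators χ(W') := {u ∈ W | u ∈ W', u is a reflection, and every reflection v ∈ W' that is a left inversion of u equals u} is exactly {a, a * c * a}. -/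
/-!
Write `N(w)` for the set of left inversions of `w`. Everything rests on the cocycle identity
`N(v w) = N(v) ∆ v N(w) v⁻¹`. It yields the exchange property, shows that `N(w)` contains a
canonical generator of a subgroup `H` as soon as it meets `H`, and shows that three distinct
canonical generators `x`, `y`, `z` of `H` make the odd element `x y z` a non-reflection. Odd
elements of a dihedral reflection subgroup `H` are reflections, so `H` has at most two canonical
generators.

Peeling off canonical generators one at a time shows that `N(p) ∩ H` is an initial segment
`x, x y x, x y x y x, …` of the reflections of `H`, where `x` and `y` are the canonical generators
and `p` is the prefix of `r`. Conjugation by `r` maps `N(p) ∖ {r}` out of `N(p)`, so `r` is the last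
member of this segment, and the segment reflected across `r` still consists of new reflections.
Thus `x y` has large order, lengths increase along the alternating products of `x` and `y`, and the
two shortest members of `N(p) ∩ H` are `a = x` and `c = x y x`.
-/

namespace ReflectionSubgroup

section StrictMin

/-- `a` is the unique minimizer of `f` on `S`, as an element of `S`. -/
def IsStrictMinOn {α β : Type*} [Preorder β] (f : α → β) (S : Set α) (a : α) : Prop :=
  a ∈ S ∧ ∀ u ∈ S, u ≠ a → f a < f u

variable {α β : Type*} [Preorder β] {f : α → β} {S : Set α} {a b c : α}

theorem IsStrictMinOn.unique (ha : IsStrictMinOn f S a) (hb : IsStrictMinOn f S b) : a = b :=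
  by_contra fun hne ↦ lt_asymm (ha.2 b hb.1 (Ne.symm hne)) (hb.2 a ha.1 hne)

theorem isStrictMinOn_diff_singleton_iff :
    IsStrictMinOn f (S \ {a}) c ↔ c ∈ S ∧ c ≠ a ∧ ∀ u ∈ S, u ≠ a → u ≠ c → f c < f u := by
  simp only [IsStrictMinOn, Set.mem_sdiff, Set.mem_singleton_iff, and_assoc, and_imp, ne_eq]

variable {g : ℕ → α} {m : ℕ}

theorem isStrictMinOn_image_Iic_zero (h : StrictMonoOn (fun k ↦ f (g k)) (Set.Iic m)) :
    IsStrictMinOn f (g '' Set.Iic m) (g 0) := by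
  refine ⟨⟨0, Nat.zero_le m, rfl⟩, ?_⟩
  rintro _ ⟨k, hk, rfl⟩ hne
  exact h (Nat.zero_le m) hk (Nat.pos_of_ne_zero fun hk0 ↦ hne (hk0 ▸ rfl))

theorem isStrictMinOn_image_Iic_diff_one (h : StrictMonoOn (fun k ↦ f (g k)) (Set.Iic m))
    (hm : 0 < m) : IsStrictMinOn f (g '' Set.Iic m \ {g 0}) (g 1) := by
  have hlt := h (Nat.zero_le m) hm Nat.zero_lt_one
  refine ⟨⟨⟨1, hm, rfl⟩, fun heq ↦ hlt.ne (congrArg f heq.symm)⟩, ?_⟩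
  rintro _ ⟨⟨k, hk, rfl⟩, hk0⟩ hk1
  refine h hm hk (lt_of_le_of_ne (Nat.pos_of_ne_zero ?_) ?_)
  · rintro rfl
    exact hk0 rfl
  · rintro rfl
    exact hk1 rfl

end StrictMin

section DihedralReflection

/-- For involutions `x` and `y`, the `k`-th reflection `x y x ⋯ x` (with `2k + 1` factors) of the
dihedral group they generate, in its enumeration starting from `x`. -/
def dihedralReflection {G : Type*} [Group G] (x y : G) (k : ℕ) : G := (x * y) ^ k * x

variable {G : Type*} [Group G] {x y : G}

theorem dihedralReflection_zero (x y : G) : dihedralReflection x y 0 = x := by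
  simp [dihedralReflection]

theorem dihedralReflection_succ (x y : G) (k : ℕ) :
    dihedralReflection x y (k + 1) = x * dihedralReflection y x k * x := by
  rw [dihedralReflection, dihedralReflection, mul_pow_mul, pow_succ]
  simp only [mul_assoc]

theorem mul_dihedralReflection_one_mul (hx : x * x = 1) : x * dihedralReflection x y 1 * x = y := by
  rw [dihedralReflection, pow_one, mul_assoc, mul_assoc _ x, hx, mul_one, ← mul_assoc, hx, one_mul]

theorem dihedralReflection_add (x y : G) (n k : ℕ) :
    dihedralReflection x y (n + k) = (x * y) ^ n * dihedralReflection x y k := by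
  simp only [dihedralReflection, pow_add, mul_assoc]

theorem dihedralReflection_mul_pow (hx : x * x = 1) (hy : y * y = 1) (n : ℕ) :
    dihedralReflection x y n * (x * y) ^ n = x := by
  induction n with
  | zero => simp [dihedralReflection]
  | succ n ih =>
    have cancel : x * y * x * (x * y) = x := by
      rw [mul_assoc, ← mul_assoc x x, hx, one_mul, mul_assoc, hy, mul_one]
    calc dihedralReflection x y (n + 1) * (x * y) ^ (n + 1)
        = (x * y) ^ n * (x * y * x * (x * y)) * (x * y) ^ n := by
          rw [dihedralReflection]
          nth_rw 1 [pow_succ]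
          simp only [pow_succ', mul_assoc]
      _ = x := by rw [cancel, ← dihedralReflection, ih]

theorem dihedralReflection_add_mul_pow (hx : x * x = 1) (hy : y * y = 1) (k n : ℕ) :
    dihedralReflection x y (k + n) * (x * y) ^ n = dihedralReflection x y k := by
  rw [dihedralReflection_add, mul_assoc, dihedralReflection_mul_pow hx hy, ← dihedralReflection]

theorem dihedralReflection_mul_self (hx : x * x = 1) (hy : y * y = 1) (k : ℕ) :
    dihedralReflection x y k * dihedralReflection x y k = 1 := by
  conv_lhs => rhs; rw [dihedralReflection]
  rw [← mul_assoc, dihedralReflection_mul_pow hx hy, hx]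

theorem dihedralReflection_add_mul (hx : x * x = 1) (hy : y * y = 1) (n k : ℕ) :
    dihedralReflection x y (n + k) * dihedralReflection x y k = (x * y) ^ n := by
  rw [dihedralReflection_add, mul_assoc, dihedralReflection_mul_self hx hy, mul_one]

theorem dihedralReflection_conj (hx : x * x = 1) (hy : y * y = 1) (n k : ℕ) :
    dihedralReflection x y (n + k) * dihedralReflection x y k * dihedralReflection x y (n + k) =
      dihedralReflection x y (n + (n + k)) := by
  rw [dihedralReflection_add_mul hx hy, dihedralReflection_add _ _ n (n + k)]

theorem mem_image_dihedralReflection_Iic_succ_iff (hx : x * x = 1) {m : ℕ} {u : G} :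
    u ∈ dihedralReflection x y '' Set.Iic (m + 1) ↔
      u = x ∨ x * u * x ∈ dihedralReflection y x '' Set.Iic m := by
  have conj_conj : ∀ v, x * (x * v * x) * x = v := fun v ↦ by
    rw [mul_assoc, mul_assoc (x * v), hx, mul_one, ← mul_assoc, hx, one_mul]
  constructor
  · rintro ⟨_ | k, hk, rfl⟩
    · exact .inl (dihedralReflection_zero x y)
    · exact .inr ⟨k, Nat.le_of_succ_le_succ hk, by rw [dihedralReflection_succ, conj_conj]⟩
  · rintro (rfl | ⟨k, hk, h⟩)
    · exact ⟨0, Nat.zero_le _, dihedralReflection_zero u y⟩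
    · exact ⟨k + 1, Nat.succ_le_succ hk, by rw [dihedralReflection_succ, h, conj_conj]⟩

theorem injOn_dihedralReflection_iff {n : ℕ} :
    Set.InjOn (dihedralReflection x y) (Set.Iic n) ↔ ∀ d, 0 < d → d ≤ n → (x * y) ^ d ≠ 1 := by
  constructor
  · intro h d hd hdn hpow
    refine hd.ne' (h hdn (Nat.zero_le n) ?_)
    rw [dihedralReflection, hpow, one_mul, dihedralReflection_zero]
  · intro h
    have ne_of_lt : ∀ ⦃i j⦄, i < j → j ≤ n →
        dihedralReflection x y i ≠ dihedralReflection x y j := by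
      intro i j hij hjn heq
      refine h (j - i) (by lia) (by lia) ?_
      rwa [← Nat.sub_add_cancel hij.le, dihedralReflection_add, right_eq_mul] at heq
    refine fun i hi j hj heq ↦ by_contra fun hne ↦ ?_
    exact (lt_or_gt_of_ne hne).elim (ne_of_lt · hj heq) (ne_of_lt · hi heq.symm)

theorem dihedralReflection_mem {H : Subgroup G} (hx : x ∈ H) (hy : y ∈ H) (k : ℕ) :
    dihedralReflection x y k ∈ H :=
  mul_mem (pow_mem (mul_mem hx hy) k) hx

theorem mem_zpowers_or_mul_mem_zpowers_of_mem_closure_pair (hx : x * x = 1) (hy : y * y = 1)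
    {w : G} (hw : w ∈ Subgroup.closure {x, y}) :
    w ∈ Subgroup.zpowers (x * y) ∨ x * w ∈ Subgroup.zpowers (x * y) := by
  have mul_left : ∀ z ∈ ({x, y} : Set G), ∀ v,
      v ∈ Subgroup.zpowers (x * y) ∨ x * v ∈ Subgroup.zpowers (x * y) →
        z * v ∈ Subgroup.zpowers (x * y) ∨ x * (z * v) ∈ Subgroup.zpowers (x * y) := by
    have hxy := Subgroup.mem_zpowers (x * y)
    rintro z (rfl | rfl) v (hv | hv)
    · exact .inr (by rwa [← mul_assoc, hx, one_mul])
    · exact .inl hv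
    · exact .inr (by rw [← mul_assoc]; exact mul_mem hxy hv)
    · refine .inl ?_
      rw [show z * v = (x * z)⁻¹ * (x * v) by
        rw [mul_inv_rev, mul_assoc, inv_mul_cancel_left, inv_eq_of_mul_eq_one_left hy]]
      exact mul_mem (inv_mem hxy) hv
  induction hw using Subgroup.closure_induction_left with
  | one => exact .inl (one_mem _)
  | mul_left z hz v _ ih => exact mul_left z hz v ih
  | inv_mul_cancel z hz v _ ih =>
    rw [show z⁻¹ = z by rcases hz with rfl | rfl <;> exact inv_eq_of_mul_eq_one_left ‹_›]
    exact mul_left z hz v ih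

theorem exists_eq_dihedralReflection_of_mul_mem_zpowers (hx : x * x = 1) (hy : y * y = 1) {w : G}
    (hw : x * w ∈ Subgroup.zpowers (x * y)) :
    ∃ k, w = dihedralReflection x y k ∨ w = dihedralReflection y x k := by
  have hx' : x⁻¹ = x := inv_eq_of_mul_eq_one_left hx
  have hy' : y⁻¹ = y := inv_eq_of_mul_eq_one_left hy
  obtain ⟨k, hk⟩ := hw
  obtain rfl : w = x * (x * y) ^ k := by
    change (x * y) ^ k = x * w at hk
    rw [hk, ← mul_assoc, hx, one_mul]
  obtain ⟨n, rfl | rfl⟩ := k.eq_nat_or_neg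
  · rw [zpow_natCast]
    cases n with
    | zero => exact ⟨0, .inl (by simp [dihedralReflection])⟩
    | succ n =>
      refine ⟨n, .inr ?_⟩
      rw [dihedralReflection, mul_pow_mul, pow_succ', ← mul_assoc, ← mul_assoc, hx, one_mul]
  · refine ⟨n, .inl ?_⟩
    rw [zpow_neg, zpow_natCast, ← inv_pow, mul_inv_rev, hx', hy', dihedralReflection, mul_pow_mul]

end DihedralReflection

open CoxeterSystem

variable {B W : Type*} [Group W] {M : CoxeterMatrix B} {cs : CoxeterSystem M W}

section InversionParity

variable (cs)

theorem prod_map_alternatingWord_two_mul {G : Type*} [Monoid G] (f : B → G) (i j : B) (n : ℕ) :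
    ((alternatingWord i j (2 * n)).map f).prod = (f i * f j) ^ n := by
  induction n with
  | zero => simp [alternatingWord]
  | succ n ih =>
    rw [show 2 * (n + 1) = 2 * n + 1 + 1 by ring, alternatingWord_succ', alternatingWord_succ',
      pow_succ', ← ih]
    simp [mul_assoc]

theorem leftInvSeq_alternatingWord_two_mul (i j : B) (n : ℕ) :
    cs.leftInvSeq (alternatingWord i j (2 * n)) =
      (List.range (2 * n)).map fun k ↦ cs.simple i * (cs.simple j * cs.simple i) ^ k := by
  refine List.ext_getElem (by simp) fun k hk _ ↦ ?_
  rw [cs.getElem_leftInvSeq_alternatingWord i j n k (by simpa using hk),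
    cs.prod_alternatingWord_eq_mul_pow, if_neg (by simp), List.getElem_map, List.getElem_range]
  congr 2
  lia

open Classical in
theorem count_leftInvSeq_alternatingWord_two_mul (i j : B) (u : W) :
    ((cs.leftInvSeq (alternatingWord i j (2 * M i j))).count u : ZMod 2) = 0 := by
  have periodic : ∀ k, (cs.simple j * cs.simple i) ^ (M i j + k) =
      (cs.simple j * cs.simple i) ^ k := fun k ↦ by
    rw [pow_add, M.symmetric, cs.simple_mul_simple_pow, one_mul]
  rw [leftInvSeq_alternatingWord_two_mul, two_mul, List.range_add, List.map_append, List.map_map]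
  simp only [Function.comp_def, periodic, List.count_append, Nat.cast_add,
    CharTwo.add_self_eq_zero]

open Classical in
theorem count_leftInvSeq_cons (i : B) (ω : List B) (u : W) :
    (cs.leftInvSeq (i :: ω)).count u =
      (if u = cs.simple i then 1 else 0) +
        (cs.leftInvSeq ω).count (cs.simple i * u * cs.simple i) := by
  have hu : MulAut.conj (cs.simple i) (cs.simple i * u * cs.simple i) = u := by
    simp [mul_assoc]
  rw [leftInvSeq, List.count_cons, add_comm]
  conv_lhs => rw [← hu, List.count_map_of_injective _ _ (MulAut.conj _).injective, hu]
  simp only [beq_iff_eq, eq_comm (a := u)]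

open Classical in
/-- Identify a subset of `W` with its indicator function `X : W → ZMod 2`. The simple reflection
`s` acts by sending `X` to the symmetric difference of `{s}` and `s X s`. -/
noncomputable def simpleInversionAction (i : B) : Function.End (W → ZMod 2) :=
  fun X u ↦ (if u = cs.simple i then 1 else 0) + X (cs.simple i * u * cs.simple i)

open Classical in
theorem prod_map_simpleInversionAction_apply (ω : List B) (X : W → ZMod 2) (u : W) :
    (ω.map (simpleInversionAction cs)).prod X u =
      (cs.leftInvSeq ω).count u + X ((cs.wordProd ω)⁻¹ * u * cs.wordProd ω) := by
  induction ω generalizing u with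
  | nil => simp [Function.End.one_def]
  | cons i ω ih =>
    rw [List.map_cons, List.prod_cons]
    change simpleInversionAction cs i ((ω.map (simpleInversionAction cs)).prod X) u = _
    rw [simpleInversionAction, ih, count_leftInvSeq_cons, cs.wordProd_cons]
    simp [mul_assoc, add_assoc]

theorem isLiftable_simpleInversionAction : M.IsLiftable (simpleInversionAction cs) := by
  classical
  intro i j
  rw [← prod_map_alternatingWord_two_mul]
  refine funext fun X ↦ funext fun u ↦ ?_
  rw [prod_map_simpleInversionAction_apply, count_leftInvSeq_alternatingWord_two_mul, wordProd,
    prod_map_alternatingWord_two_mul, cs.simple_mul_simple_pow]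
  simp [Function.End.one_def]

/-- The affine action of `W` on the indicator functions of its subsets, under which `w` sends `X`
to the symmetric difference of `N(w)` and `w X w⁻¹`, where `N(w)` is the set of left inversions
of `w`. -/
noncomputable def inversionAction : W →* Function.End (W → ZMod 2) :=
  cs.lift ⟨simpleInversionAction cs, isLiftable_simpleInversionAction cs⟩

/-- The parity of the number of occurrences of `u` in the left inversion sequence of any word
for `w`. For a reflection `u` it will be `1` exactly when `u` is a left inversion of `w`. -/
noncomputable def inversionParity (w u : W) : ZMod 2 := inversionAction cs w 0 u

theorem inversionAction_wordProd (ω : List B) :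
    inversionAction cs (cs.wordProd ω) = (ω.map (simpleInversionAction cs)).prod := by
  rw [wordProd, map_list_prod, List.map_map]
  congr 2
  ext1 i
  exact cs.lift_apply_simple (isLiftable_simpleInversionAction cs) i

open Classical in
theorem inversionParity_wordProd (ω : List B) (u : W) :
    inversionParity cs (cs.wordProd ω) u = (cs.leftInvSeq ω).count u := by
  simp [inversionParity, inversionAction_wordProd, prod_map_simpleInversionAction_apply]

theorem inversionAction_apply (w : W) (X : W → ZMod 2) (u : W) :
    inversionAction cs w X u = inversionParity cs w u + X (w⁻¹ * u * w) := by
  classical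
  obtain ⟨ω, rfl⟩ := cs.wordProd_surjective w
  rw [inversionParity_wordProd, inversionAction_wordProd, prod_map_simpleInversionAction_apply]

theorem inversionParity_mul (v w u : W) :
    inversionParity cs (v * w) u =
      inversionParity cs v u + inversionParity cs w (v⁻¹ * u * v) := by
  rw [inversionParity, map_mul]
  exact inversionAction_apply cs v _ u

theorem inversionParity_one (u : W) : inversionParity cs 1 u = 0 := by
  simp [inversionParity, Function.End.one_def]

theorem inversionParity_simple_self (i : B) :
    inversionParity cs (cs.simple i) (cs.simple i) = 1 := by
  classical
  simpa using inversionParity_wordProd cs [i] (cs.simple i)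

theorem inversionParity_self {t : W} (ht : cs.IsReflection t) : inversionParity cs t t = 1 := by
  obtain ⟨v, i, rfl⟩ := ht
  have conj_eq : v⁻¹ * (v * cs.simple i * v⁻¹) * v = cs.simple i := by group
  have cancel := inversionParity_mul cs v v⁻¹ (v * cs.simple i * v⁻¹)
  rw [mul_inv_cancel, inversionParity_one, conj_eq] at cancel
  rw [mul_assoc v, inversionParity_mul, inversionParity_mul, ← mul_assoc v, conj_eq,
    inversionParity_simple_self, inv_mul_cancel, one_mul, add_left_comm, ← cancel, add_zero]

theorem exists_isReduced_mem_leftInvSeq_of_inversionParity {w u : W}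
    (h : inversionParity cs w u = 1) :
    ∃ ω, cs.IsReduced ω ∧ cs.wordProd ω = w ∧ u ∈ cs.leftInvSeq ω := by
  classical
  obtain ⟨ω, hω, rfl⟩ := cs.exists_isReduced w
  refine ⟨ω, hω, rfl, List.count_pos_iff.1 (Nat.pos_of_ne_zero fun h0 ↦ ?_)⟩
  simp [inversionParity_wordProd, h0] at h

theorem inversionParity_eq_one_iff {w t : W} (ht : cs.IsReflection t) :
    inversionParity cs w t = 1 ↔ cs.IsLeftInversion w t := by
  have inversion_of_parity : ∀ v, inversionParity cs v t = 1 → cs.IsLeftInversion v t := by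
    intro v hv
    obtain ⟨ω, hω, rfl, hmem⟩ := exists_isReduced_mem_leftInvSeq_of_inversionParity cs hv
    exact cs.isLeftInversion_of_mem_leftInvSeq hω hmem
  refine ⟨inversion_of_parity w, fun h ↦ by_contra fun hne ↦ ?_⟩
  have h0 : inversionParity cs w t = 0 := by
    generalize inversionParity cs w t = z at hne
    revert z
    decide
  refine ht.isLeftInversion_mul_right_iff.1 (inversion_of_parity (t * w) ?_) h
  rw [inversionParity_mul, inversionParity_self cs ht, inv_mul_cancel, one_mul, h0, add_zero]

end InversionParity

section Inversions

theorem isLeftInversion_mul_iff {t : W} (ht : cs.IsReflection t) (v w : W) :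
    cs.IsLeftInversion (v * w) t ↔
      Xor (cs.IsLeftInversion v t) (cs.IsLeftInversion w (v⁻¹ * t * v)) := by
  have ht' : cs.IsReflection (v⁻¹ * t * v) := by simpa using ht.conj v⁻¹
  rw [← inversionParity_eq_one_iff cs ht, ← inversionParity_eq_one_iff cs ht,
    ← inversionParity_eq_one_iff cs ht', inversionParity_mul]
  generalize inversionParity cs v t = a
  generalize inversionParity cs w (v⁻¹ * t * v) = b
  revert a b
  simp only [Xor]
  decide

theorem isLeftInversion_self {t : W} (ht : cs.IsReflection t) : cs.IsLeftInversion t t :=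
  (inversionParity_eq_one_iff cs ht).1 (inversionParity_self cs ht)

theorem isLeftInversion_simple_iff {i : B} {t : W} :
    cs.IsLeftInversion (cs.simple i) t ↔ t = cs.simple i := by
  refine ⟨fun h ↦ ?_, by rintro rfl; exact isLeftInversion_self (cs.isReflection_simple i)⟩
  have hlt := h.2
  rw [cs.length_simple, Nat.lt_one_iff, cs.length_eq_zero_iff] at hlt
  rw [eq_inv_of_mul_eq_one_left hlt, cs.inv_simple]

theorem isLeftInversion_mul_simple_iff {t : W} (ht : cs.IsReflection t) (w : W) (i : B) :
    cs.IsLeftInversion (w * cs.simple i) t ↔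
      Xor (cs.IsLeftInversion w t) (t = w * cs.simple i * w⁻¹) := by
  rw [isLeftInversion_mul_iff ht, isLeftInversion_simple_iff, mul_assoc, inv_mul_eq_iff_eq_mul,
    ← eq_mul_inv_iff_mul_eq]

theorem exists_eq_mul_simple_mul_of_isLeftInversion {w t : W} (h : cs.IsLeftInversion w t) :
    ∃ q i v, w = q * cs.simple i * v ∧ t = q * cs.simple i * q⁻¹ ∧
      cs.length w = cs.length q + 1 + cs.length v := by
  obtain ⟨ω, hω, rfl, hmem⟩ := exists_isReduced_mem_leftInvSeq_of_inversionParity cs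
    ((inversionParity_eq_one_iff cs h.1).2 h)
  obtain ⟨k, hk, rfl⟩ := List.getElem_of_mem hmem
  have hk' : k < ω.length := by simpa using hk
  refine ⟨cs.wordProd (ω.take k), ω[k], cs.wordProd (ω.drop (k + 1)), ?_,
    cs.getElem_leftInvSeq ω k hk', ?_⟩
  · rw [mul_assoc, ← cs.wordProd_cons, ← cs.wordProd_append, List.cons_getElem_drop_succ,
      List.take_append_drop]
  · rw [hω.eq, (hω.take k).eq, (hω.drop (k + 1)).eq, List.length_take, List.length_drop]
    lia

theorem length_conj_simple_le (q : W) (i : B) :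
    cs.length (q * cs.simple i * q⁻¹) ≤ 2 * cs.length q + 1 := by
  have h₁ := cs.length_mul_le (q * cs.simple i) q⁻¹
  have h₂ := cs.length_mul_le q (cs.simple i)
  rw [cs.length_inv] at h₁
  rw [cs.length_simple] at h₂
  lia

theorem isReflection_mul_mul_self {u v : W} (hu : cs.IsReflection u) (hv : cs.IsReflection v) :
    cs.IsReflection (u * v * u) := by
  simpa only [hu.inv] using hv.conj u

theorem isLeftInversion_conj_simple_iff {q t v : W} {i : B} (ht : t = q * cs.simple i * q⁻¹)
    (hv : cs.IsReflection v) (hne : v ≠ t) :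
    cs.IsLeftInversion t v ↔ Xor (cs.IsLeftInversion q v) (cs.IsLeftInversion q (t * v * t)) := by
  have htr : cs.IsReflection t := ⟨q, i, ht⟩
  have hq : t * q = q * cs.simple i := by rw [ht, inv_mul_cancel_right]
  have via_left := isLeftInversion_mul_iff hv t q
  have via_right := isLeftInversion_mul_simple_iff hv q i
  rw [hq, htr.inv] at via_left
  rw [← ht] at via_right
  simp only [Xor] at *
  tauto

end Inversions

section ReflectionPrefix

/-- `IsReflectionPrefix cs t p` says that `p` is a `t`-prefix: `p ≤_R t` in the right weak order
and `2 ℓ(p) = ℓ(t) + 1`. -/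
structure IsReflectionPrefix (cs : CoxeterSystem M W) (t p : W) : Prop where
  length_add : cs.length p + cs.length (p⁻¹ * t) = cs.length t
  two_mul_length : 2 * cs.length p = cs.length t + 1

variable {t p u : W}

theorem IsReflectionPrefix.isLeftInversion_self (hp : IsReflectionPrefix cs t p)
    (ht : cs.IsReflection t) : cs.IsLeftInversion p t := by
  have h := (isLeftInversion_mul_iff ht p (p⁻¹ * t)).1
    (by rw [mul_inv_cancel_left]; exact ReflectionSubgroup.isLeftInversion_self ht)
  refine h.or.resolve_right fun hlt ↦ ?_
  have hlen := hlt.2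
  rw [show p⁻¹ * t * p * (p⁻¹ * t) = p⁻¹ by simp [mul_assoc, ht.mul_self], cs.length_inv] at hlen
  have := hp.length_add
  have := hp.two_mul_length
  lia

theorem IsReflectionPrefix.exists_eq_mul_simple (hp : IsReflectionPrefix cs t p)
    (ht : cs.IsReflection t) : ∃ q i, p = q * cs.simple i ∧ t = q * cs.simple i * q⁻¹ := by
  obtain ⟨q, i, v, hpv, htq, hlen⟩ :=
    exists_eq_mul_simple_mul_of_isLeftInversion (hp.isLeftInversion_self ht)
  have hv : cs.length v = 0 := by
    have := hp.two_mul_length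
    have := htq ▸ length_conj_simple_le (cs := cs) q i
    lia
  rw [cs.length_eq_zero_iff] at hv
  exact ⟨q, i, by rw [hpv, hv, mul_one], htq⟩

theorem IsReflectionPrefix.isLeftInversion (hp : IsReflectionPrefix cs t p)
    (hu : cs.IsLeftInversion p u) : cs.IsLeftInversion t u := by
  refine ⟨hu.1, ?_⟩
  have hle := cs.length_mul_le (u * p) (p⁻¹ * t)
  rw [mul_assoc u, mul_inv_cancel_left] at hle
  have := hu.2
  have := hp.length_add
  lia

theorem IsReflectionPrefix.not_isLeftInversion_conj (hp : IsReflectionPrefix cs t p)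
    (ht : cs.IsReflection t) (hu : cs.IsLeftInversion p u) (hne : u ≠ t) :
    ¬ cs.IsLeftInversion p (t * u * t) := by
  obtain ⟨q, i, rfl, htq⟩ := hp.exists_eq_mul_simple ht
  have hconj_ne : t * u * t ≠ t := fun h ↦
    hne ((inv_eq_of_mul_eq_one_right (mul_eq_right.1 h)).symm.trans ht.inv)
  have mem_iff : ∀ v, cs.IsReflection v → v ≠ t →
      (cs.IsLeftInversion (q * cs.simple i) v ↔ cs.IsLeftInversion q v) := fun v hv hvt ↦ by
    simp [isLeftInversion_mul_simple_iff hv, Xor, ← htq, hvt]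
  rw [mem_iff _ (isReflection_mul_mul_self ht hu.1) hconj_ne]
  have hxor := (isLeftInversion_conj_simple_iff htq hu.1 hne).1 (hp.isLeftInversion hu)
  exact fun h ↦ ((xor_iff_or_and_not_and _ _).1 hxor).2 ⟨(mem_iff u hu.1 hne).1 hu, h⟩

end ReflectionPrefix

section CanonicalGenerators

/-- Dyer's canonical generators of a subgroup `H`: the reflections of `H` whose only left
inversion in `H` is themselves. -/
def canonicalGenerators (cs : CoxeterSystem M W) (H : Subgroup W) : Set W :=
  {u | u ∈ H ∧ cs.IsReflection u ∧ ∀ v, v ∈ H → cs.IsLeftInversion u v → v = u}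

/-- The left inversions of `w` that lie in the subgroup `H`. -/
def leftInversionsIn (cs : CoxeterSystem M W) (H : Subgroup W) (w : W) : Set W :=
  {u | u ∈ H ∧ cs.IsLeftInversion w u}

variable {H : Subgroup W} {w x y z u : W}

theorem isLeftInversion_iff_eq_of_mem_canonicalGenerators (hx : x ∈ canonicalGenerators cs H)
    (hu : u ∈ H) : cs.IsLeftInversion x u ↔ u = x :=
  ⟨hx.2.2 u hu, by rintro rfl; exact isLeftInversion_self hx.2.1⟩

theorem exists_mem_canonicalGenerators_of_nonempty (h : (leftInversionsIn cs H w).Nonempty) :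
    ∃ x ∈ canonicalGenerators cs H, x ∈ leftInversionsIn cs H w := by
  induction hn : cs.length w using Nat.strong_induction_on generalizing w with
  | _ n ih =>
  subst hn
  obtain ⟨u, huH, hu⟩ := h
  have hw : w ≠ 1 := by
    rintro rfl
    simpa using hu.2
  obtain ⟨i, hi⟩ := cs.exists_rightDescent_of_ne_one hw
  obtain ⟨q, rfl⟩ : ∃ q, w = q * cs.simple i := ⟨w * cs.simple i, by simp⟩
  rw [IsRightDescent, cs.simple_mul_simple_cancel_right] at hi
  have inversions_mono : ∀ v, cs.IsLeftInversion q v → cs.IsLeftInversion (q * cs.simple i) v := by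
    intro v hv
    refine (isLeftInversion_mul_simple_iff hv.1 q i).2 (.inl ⟨hv, ?_⟩)
    rintro rfl
    have := hv.2
    rw [inv_mul_cancel_right] at this
    lia
  by_cases hq : (leftInversionsIn cs H q).Nonempty
  · obtain ⟨x, hx, hxq⟩ := ih _ hi hq rfl
    exact ⟨x, hx, hxq.1, inversions_mono x hxq.2⟩
  have not_inv : ∀ v ∈ H, ¬ cs.IsLeftInversion q v := fun v hv hvq ↦ hq ⟨v, hv, hvq⟩
  have hu_eq : u = q * cs.simple i * q⁻¹ :=
    ((isLeftInversion_mul_simple_iff hu.1 q i).1 hu).or.resolve_left (not_inv u huH)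
  refine ⟨u, ⟨huH, hu.1, fun v hv hvu ↦ by_contra fun hne ↦ ?_⟩, huH, hu⟩
  exact ((isLeftInversion_conj_simple_iff hu_eq hvu.1 hne).1 hvu).or.elim (not_inv v hv)
    (not_inv _ (mul_mem (mul_mem huH hv) huH))

theorem notMem_leftInversionsIn_generator_mul (h : x ∈ leftInversionsIn cs H w) :
    x ∉ leftInversionsIn cs H (x * w) :=
  fun hx ↦ h.2.1.isLeftInversion_mul_right_iff.1 hx.2 h.2

theorem mem_leftInversionsIn_iff_of_mem_canonicalGenerators (hx : x ∈ canonicalGenerators cs H)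
    (hxw : x ∈ leftInversionsIn cs H w) :
    u ∈ leftInversionsIn cs H w ↔ u = x ∨ x * u * x ∈ leftInversionsIn cs H (x * w) := by
  have key : ∀ v ∈ H, cs.IsReflection v → v ≠ x →
      (cs.IsLeftInversion w v ↔ cs.IsLeftInversion (x * w) (x * v * x)) := fun v hv hvr hne ↦ by
    have hmul := isLeftInversion_mul_iff hvr x (x * w)
    rw [isLeftInversion_iff_eq_of_mem_canonicalGenerators hx hv, hx.2.1.inv, ← mul_assoc x x,
      hx.2.1.mul_self, one_mul] at hmul
    simpa [hne] using hmul
  constructor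
  · rintro ⟨hu, huw⟩
    by_cases hux : u = x
    · exact .inl hux
    · exact .inr ⟨mul_mem (mul_mem hx.1 hu) hx.1, (key u hu huw.1 hux).1 huw⟩
  · rintro (rfl | ⟨hu, huw⟩)
    · exact hxw
    · have huH : u ∈ H := (H.mul_mem_cancel_left hx.1).1 ((H.mul_mem_cancel_right hx.1).1 hu)
      have hur : cs.IsReflection u :=
        (cs.isReflection_conj_iff x u).1 (by rw [hx.2.1.inv]; exact huw.1)
      have hne : u ≠ x := by
        rintro rfl
        rw [hx.2.1.mul_self, one_mul] at huw
        exact notMem_leftInversionsIn_generator_mul hxw ⟨hx.1, huw⟩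
      exact ⟨huH, (key u huH hur hne).2 huw⟩

theorem mem_leftInversionsIn_mul_generator (hw : w ∈ H) (hz : z ∈ canonicalGenerators cs H)
    (hu : u ∈ leftInversionsIn cs H (w * z)) :
    u ∈ leftInversionsIn cs H w ∨ u = w * z * w⁻¹ := by
  refine ((isLeftInversion_mul_iff hu.2.1 w z).1 hu.2).or.imp (⟨hu.1, ·⟩) fun h ↦ ?_
  rw [← hz.2.2 _ (mul_mem (mul_mem (inv_mem hw) hu.1) hw) h]
  group

theorem eq_or_eq_or_eq_of_mem_canonicalGenerators
    (hH : ∀ w ∈ H, Odd (cs.length w) → cs.IsReflection w) (hx : x ∈ canonicalGenerators cs H)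
    (hy : y ∈ canonicalGenerators cs H) (hz : z ∈ canonicalGenerators cs H) :
    y = z ∨ x = z ∨ x = y := by
  have hxyz : x * y * z ∈ H := mul_mem (mul_mem hx.1 hy.1) hz.1
  have hodd : Odd (cs.length (x * y * z)) := by
    have h₁ := cs.length_mul_mod_two (x * y) z
    have h₂ := cs.length_mul_mod_two x y
    have := Nat.odd_iff.1 hx.2.1.odd_length
    have := Nat.odd_iff.1 hy.2.1.odd_length
    have := Nat.odd_iff.1 hz.2.1.odd_length
    rw [Nat.odd_iff]
    lia
  have hmem : x * y * z ∈ leftInversionsIn cs H (x * y * z) :=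
    ⟨hxyz, isLeftInversion_self (hH _ hxyz hodd)⟩
  obtain hmem | h := mem_leftInversionsIn_mul_generator (mul_mem hx.1 hy.1) hz hmem
  · obtain hmem | h := mem_leftInversionsIn_mul_generator hx.1 hy hmem
    · have h := hx.2.2 _ hmem.1 hmem.2
      rw [mul_assoc, mul_eq_left] at h
      exact .inl ((eq_inv_of_mul_eq_one_left h).trans hz.2.1.inv)
    · exact .inr (.inl ((mul_left_cancel h).trans hx.2.1.inv).symm)
  · rw [left_eq_mul, inv_eq_one] at h
    exact .inr (.inr ((eq_inv_of_mul_eq_one_left h).trans hy.2.1.inv))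

end CanonicalGenerators

section DihedralSubgroup

variable {H : Subgroup W} {w x y u r t p : W} {m : ℕ}

theorem isReflection_dihedralReflection (hx : cs.IsReflection x) (hy : cs.IsReflection y) (k : ℕ) :
    cs.IsReflection (dihedralReflection x y k) := by
  induction k generalizing x y with
  | zero => rwa [dihedralReflection_zero]
  | succ k ih =>
    rw [dihedralReflection_succ]
    exact isReflection_mul_mul_self hx (ih hy hx)

theorem even_length_of_mem_zpowers (hr : cs.IsReflection r) (ht : cs.IsReflection t)
    (hw : w ∈ Subgroup.zpowers (r * t)) : Even (cs.length w) := by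
  have parity : ∀ v, cs.lengthParity v = 1 ↔ Even (cs.length v) := fun v ↦ by
    rw [cs.lengthParity_eq_ofAdd_length, ofAdd_eq_one, ZMod.natCast_eq_zero_iff_even]
  have hrt : Even (cs.length (r * t)) := by
    rw [Nat.even_iff, cs.length_mul_mod_two, ← Nat.even_iff]
    exact hr.odd_length.add_odd ht.odd_length
  obtain ⟨k, rfl⟩ := hw
  rw [← parity, map_zpow, (parity _).2 hrt, one_zpow]

theorem isReflection_of_mem_closure_pair_of_odd_length (hr : cs.IsReflection r)
    (ht : cs.IsReflection t) (hw : w ∈ Subgroup.closure {r, t}) (hodd : Odd (cs.length w)) :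
    cs.IsReflection w := by
  have hrw := (mem_zpowers_or_mul_mem_zpowers_of_mem_closure_pair hr.mul_self ht.mul_self hw)
    |>.resolve_left fun h ↦ Nat.not_even_iff_odd.2 hodd (even_length_of_mem_zpowers hr ht h)
  obtain ⟨k, rfl | rfl⟩ :=
    exists_eq_dihedralReflection_of_mul_mem_zpowers hr.mul_self ht.mul_self hrw
  · exact isReflection_dihedralReflection hr ht k
  · exact isReflection_dihedralReflection ht hr k

theorem exists_canonicalGenerators_eq_pair_of_nontrivial
    (hH : ∀ w ∈ H, Odd (cs.length w) → cs.IsReflection w)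
    (hp : (leftInversionsIn cs H p).Nontrivial) :
    ∃ x y, canonicalGenerators cs H = {x, y} ∧ x ∈ leftInversionsIn cs H p := by
  obtain ⟨x, hx, hxp⟩ := exists_mem_canonicalGenerators_of_nonempty hp.nonempty
  obtain ⟨u, hu, hux⟩ := hp.exists_ne x
  have hxu := ((mem_leftInversionsIn_iff_of_mem_canonicalGenerators hx hxp).1 hu).resolve_left hux
  obtain ⟨y, hy, hyp⟩ := exists_mem_canonicalGenerators_of_nonempty ⟨_, hxu⟩
  have hxy : x ≠ y := by
    rintro rfl
    exact notMem_leftInversionsIn_generator_mul hxp hyp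
  refine ⟨x, y, subset_antisymm (fun z hz ↦ ?_) (Set.pair_subset hx hy), hxp⟩
  obtain h | h | h := eq_or_eq_or_eq_of_mem_canonicalGenerators hH hx hy hz
  · exact .inr h.symm
  · exact .inl h.symm
  · exact absurd h hxy

theorem exists_leftInversionsIn_eq_image_dihedralReflection
    (hχ : canonicalGenerators cs H = {x, y}) (hx : x ∈ leftInversionsIn cs H w) :
    ∃ m, Set.InjOn (dihedralReflection x y) (Set.Iic m) ∧
      leftInversionsIn cs H w = dihedralReflection x y '' Set.Iic m := by
  induction hn : cs.length w using Nat.strong_induction_on generalizing w x y with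
  | _ n ih =>
  subst hn
  have hxχ : x ∈ canonicalGenerators cs H := hχ ▸ .inl rfl
  have mem_iff := fun u ↦ mem_leftInversionsIn_iff_of_mem_canonicalGenerators (u := u) hxχ hx
  obtain hempty | hne := (leftInversionsIn cs H (x * w)).eq_empty_or_nonempty
  · refine ⟨0, by simp [Set.InjOn], Set.ext fun u ↦ ?_⟩
    rw [mem_iff, hempty]
    simp [dihedralReflection_zero, eq_comm]
  have hxw := notMem_leftInversionsIn_generator_mul hx
  obtain ⟨z, hz, hzw⟩ := exists_mem_canonicalGenerators_of_nonempty hne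
  obtain rfl : z = y := by
    rw [hχ] at hz
    exact hz.resolve_left (by rintro rfl; exact hxw hzw)
  obtain ⟨m, -, hm⟩ := ih _ hx.2.2 (hχ.trans (Set.pair_comm x z)) hzw rfl
  refine ⟨m + 1, injOn_dihedralReflection_iff.2 fun d hd hdm hpow ↦ hxw ?_, Set.ext fun u ↦ ?_⟩
  · obtain ⟨k, rfl⟩ := Nat.exists_eq_add_one_of_ne_zero hd.ne'
    have hk : x * dihedralReflection z x k * x = x := by
      rw [← dihedralReflection_succ, dihedralReflection, hpow, one_mul]
    rw [hm]
    exact ⟨k, Nat.le_of_succ_le_succ hdm,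
      (eq_inv_of_mul_eq_one_right (mul_eq_right.1 hk)).trans hx.2.1.inv⟩
  · rw [mem_iff, hm, mem_image_dihedralReflection_Iic_succ_iff hx.2.1.mul_self]

theorem IsReflectionPrefix.eq_dihedralReflection (hp : IsReflectionPrefix cs r p)
    (hr : cs.IsReflection r) (hrH : r ∈ H) (hnt : (leftInversionsIn cs H p).Nontrivial)
    (hx : x ∈ canonicalGenerators cs H) (hy : y ∈ canonicalGenerators cs H)
    (hinj : Set.InjOn (dihedralReflection x y) (Set.Iic m))
    (hm : leftInversionsIn cs H p = dihedralReflection x y '' Set.Iic m) :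
    r = dihedralReflection x y m := by
  have mem : ∀ i ≤ m, dihedralReflection x y i ∈ leftInversionsIn cs H p := fun i hi ↦
    hm ▸ Set.mem_image_of_mem _ hi
  obtain ⟨j, hj, rfl⟩ : r ∈ dihedralReflection x y '' Set.Iic m :=
    hm ▸ ⟨hrH, hp.isLeftInversion_self hr⟩
  by_contra hne
  have hjm : j < m := lt_of_le_of_ne hj fun h ↦ hne (h ▸ rfl)
  obtain _ | k := j
  · rw [dihedralReflection_zero] at hp
    refine Set.not_nontrivial_singleton (x := x) (hnt.mono fun u hu ↦ ?_)
    exact hx.2.2 u hu.1 (hp.isLeftInversion hu.2)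
  · refine hp.not_isLeftInversion_conj hr (mem k (by lia)).2
      (hinj.ne (Set.mem_Iic.2 (by lia)) hj (Nat.succ_ne_self k).symm) ?_
    rw [Nat.add_comm, dihedralReflection_conj hx.2.1.mul_self hy.2.1.mul_self]
    exact (mem _ (by lia)).2

theorem IsReflectionPrefix.injOn_dihedralReflection
    (hp : IsReflectionPrefix cs (dihedralReflection x y m) p) (hm0 : 0 < m)
    (hx : x ∈ canonicalGenerators cs H) (hy : y ∈ canonicalGenerators cs H)
    (hinj : Set.InjOn (dihedralReflection x y) (Set.Iic m))
    (hm : leftInversionsIn cs H p = dihedralReflection x y '' Set.Iic m) :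
    Set.InjOn (dihedralReflection x y) (Set.Iic (2 * m)) := by
  have mem : ∀ i ≤ m, dihedralReflection x y i ∈ leftInversionsIn cs H p := fun i hi ↦
    hm ▸ Set.mem_image_of_mem _ hi
  refine injOn_dihedralReflection_iff.2 fun d hd hdm hpow ↦ ?_
  obtain hle | hlt := le_or_gt d m
  · exact injOn_dihedralReflection_iff.1 hinj d hd hle hpow
  refine hp.not_isLeftInversion_conj (isReflection_dihedralReflection hx.2.1 hy.2.1 m)
    (mem 0 hm0.le).2 (hinj.ne hm0.le Set.self_mem_Iic hm0.ne) ?_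
  have hfold : dihedralReflection x y (m + m) = dihedralReflection x y (m + m - d) := by
    rw [show m + m = d + (m + m - d) by lia, dihedralReflection_add, hpow, one_mul,
      Nat.add_sub_cancel_left]
  have hconj := dihedralReflection_conj hx.2.1.mul_self hy.2.1.mul_self m 0
  rw [add_zero] at hconj
  rw [hconj, hfold]
  exact (mem _ (by lia)).2

theorem leftInversionsIn_dihedralReflection_subset_of_pow (hx : x ∈ canonicalGenerators cs H)
    (hy : y ∈ canonicalGenerators cs H) {k : ℕ}
    (h : leftInversionsIn cs H ((x * y) ^ k) ⊆ dihedralReflection x y '' Set.Iio (2 * k)) :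
    leftInversionsIn cs H (dihedralReflection x y k) ⊆
      dihedralReflection x y '' Set.Iio (2 * k + 1) := by
  intro u hu
  obtain hu | rfl := mem_leftInversionsIn_mul_generator (pow_mem (mul_mem hx.1 hy.1) k) hx hu
  · exact Set.image_mono (Set.Iio_subset_Iio (by lia)) (h hu)
  · refine ⟨2 * k, Set.mem_Iio.2 (by lia), eq_mul_inv_of_mul_eq ?_⟩
    rw [two_mul, dihedralReflection_add_mul_pow hx.2.1.mul_self hy.2.1.mul_self,
      dihedralReflection]

theorem leftInversionsIn_pow_subset (hx : x ∈ canonicalGenerators cs H)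
    (hy : y ∈ canonicalGenerators cs H) (k : ℕ) :
    leftInversionsIn cs H ((x * y) ^ k) ⊆ dihedralReflection x y '' Set.Iio (2 * k) := by
  induction k with
  | zero =>
    intro u hu
    simpa using hu.2.2
  | succ k ih =>
    intro u hu
    have hpow : (x * y) ^ (k + 1) = dihedralReflection x y k * y := by
      rw [dihedralReflection, pow_succ, mul_assoc]
    rw [hpow] at hu
    obtain hu | rfl := mem_leftInversionsIn_mul_generator (dihedralReflection_mem hx.1 hy.1 k) hy hu
    · exact Set.image_mono (Set.Iio_subset_Iio (by lia))
        (leftInversionsIn_dihedralReflection_subset_of_pow hx hy ih hu)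
    · refine ⟨k + 1 + k, Set.mem_Iio.2 (by lia), eq_mul_inv_of_mul_eq ?_⟩
      rw [dihedralReflection_add_mul hx.2.1.mul_self hy.2.1.mul_self, hpow]

theorem length_lt_length_mul_of_notMem_leftInversionsIn (ht : cs.IsReflection t) (htH : t ∈ H)
    (h : t ∉ leftInversionsIn cs H w) : cs.length w < cs.length (t * w) :=
  lt_of_le_of_ne (not_lt.1 fun hlt ↦ h ⟨htH, ht, hlt⟩) (ht.length_mul_right_ne w).symm

theorem length_dihedralReflection_lt_succ (hx : x ∈ canonicalGenerators cs H)
    (hy : y ∈ canonicalGenerators cs H) {k : ℕ}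
    (hinj : Set.InjOn (dihedralReflection x y) (Set.Iic (2 * (k + 1)))) :
    cs.length (dihedralReflection x y k) < cs.length (dihedralReflection x y (k + 1)) := by
  have length_lt : ∀ i ≤ 2 * (k + 1), ∀ w,
      leftInversionsIn cs H w ⊆ dihedralReflection x y '' Set.Iio i →
        cs.length w < cs.length (dihedralReflection x y i * w) := fun i hi w hw ↦ by
    refine length_lt_length_mul_of_notMem_leftInversionsIn
      (isReflection_dihedralReflection hx.2.1 hy.2.1 i) (dihedralReflection_mem hx.1 hy.1 i)
      fun hmem ↦ ?_
    have := (hinj.mem_image_iff (fun j hj ↦ (Set.mem_Iio.1 hj).le.trans hi) hi).1 (hw hmem)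
    exact lt_irrefl i this
  have h₁ := length_lt (2 * k + 1) (by lia) _
    (leftInversionsIn_dihedralReflection_subset_of_pow hx hy (leftInversionsIn_pow_subset hx hy k))
  have h₂ := length_lt (2 * (k + 1)) le_rfl _ (leftInversionsIn_pow_subset hx hy (k + 1))
  rw [show 2 * k + 1 = k + 1 + k by ring,
    dihedralReflection_add_mul hx.2.1.mul_self hy.2.1.mul_self] at h₁
  rw [two_mul, dihedralReflection_add_mul_pow hx.2.1.mul_self hy.2.1.mul_self] at h₂
  exact h₁.trans h₂

theorem strictMonoOn_length_dihedralReflection (hx : x ∈ canonicalGenerators cs H)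
    (hy : y ∈ canonicalGenerators cs H)
    (hinj : Set.InjOn (dihedralReflection x y) (Set.Iic (2 * m))) :
    StrictMonoOn (fun k ↦ cs.length (dihedralReflection x y k)) (Set.Iic m) :=
  strictMonoOn_Iic_of_lt_succ fun k hk ↦ length_dihedralReflection_lt_succ hx hy
    (hinj.mono (Set.Iic_subset_Iic.2 (by lia)))

theorem exists_leftInversionsIn_eq_image_and_strictMonoOn_length
    (hp : IsReflectionPrefix cs r p) (hr : cs.IsReflection r) (hrH : r ∈ H)
    (hH : ∀ w ∈ H, Odd (cs.length w) → cs.IsReflection w)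
    (hnt : (leftInversionsIn cs H p).Nontrivial) :
    ∃ x y m, 0 < m ∧ canonicalGenerators cs H = {x, y} ∧
      leftInversionsIn cs H p = dihedralReflection x y '' Set.Iic m ∧
      StrictMonoOn (fun k ↦ cs.length (dihedralReflection x y k)) (Set.Iic m) := by
  obtain ⟨x, y, hχ, hxp⟩ := exists_canonicalGenerators_eq_pair_of_nontrivial hH hnt
  obtain ⟨hx, hy⟩ := Set.pair_subset_iff.1 hχ.ge
  obtain ⟨m, hinj, hm⟩ := exists_leftInversionsIn_eq_image_dihedralReflection hχ hxp
  have hm0 : 0 < m := by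
    refine Nat.pos_of_ne_zero ?_
    rintro rfl
    rw [hm, ← Nat.bot_eq_zero, Set.Iic_bot, Set.image_singleton] at hnt
    exact Set.not_nontrivial_singleton hnt
  obtain rfl := hp.eq_dihedralReflection hr hrH hnt hx hy hinj hm
  exact ⟨x, y, m, hm0, hχ, hm, strictMonoOn_length_dihedralReflection hx hy
    (hp.injOn_dihedralReflection hm0 hx hy hinj hm)⟩

end DihedralSubgroup

end ReflectionSubgroup

open ReflectionSubgroup

/-- Algorithm computing the canonical generators of a dihedral
reflection subgroup from the left inversions of a reflection-prefix. -/
theorem stmt_7 {B : Type*} {W : Type*} [Group W] {M : CoxeterMatrix B}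
    (cs : CoxeterSystem M W) (r t : W)
    (hr : cs.IsReflection r) (ht : cs.IsReflection t) (hne : r ≠ t)
    (p_r : W)
    (hpr1 : cs.length p_r + cs.length (p_r⁻¹ * r) = cs.length r)
    (hpr2 : 2 * cs.length p_r = cs.length r + 1)
    (D : Set W)
    (hD : D = {u : W | u ∈ Subgroup.closure ({r, t} : Set W) ∧
      cs.IsReflection u ∧ cs.IsLeftInversion p_r u})
    (hDbig : D.Nontrivial) :
    (∃! a : W, a ∈ D ∧ ∀ u ∈ D, u ≠ a → cs.length a < cs.length u) ∧
    (∀ a : W, (a ∈ D ∧ ∀ u ∈ D, u ≠ a → cs.length a < cs.length u) →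
      (∃! c : W, c ∈ D ∧ c ≠ a ∧
        ∀ u ∈ D, u ≠ a → u ≠ c → cs.length c < cs.length u) ∧
      (∀ c : W, (c ∈ D ∧ c ≠ a ∧
          ∀ u ∈ D, u ≠ a → u ≠ c → cs.length c < cs.length u) →
        {u : W | u ∈ Subgroup.closure ({r, t} : Set W) ∧ cs.IsReflection u ∧
            ∀ v : W, v ∈ Subgroup.closure ({r, t} : Set W) →
              cs.IsLeftInversion u v → v = u} = {a, a * c * a})) := by
  obtain rfl : D = leftInversionsIn cs (Subgroup.closure {r, t}) p_r :=
    hD.trans (Set.ext fun u ↦ and_congr_right fun _ ↦ and_iff_right_of_imp And.left)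
  obtain ⟨x, y, m, hm0, hχ, hm, hmono⟩ :=
    exists_leftInversionsIn_eq_image_and_strictMonoOn_length ⟨hpr1, hpr2⟩ hr
      (Subgroup.subset_closure (.inl rfl))
      (fun _ ↦ isReflection_of_mem_closure_pair_of_odd_length hr ht) hDbig
  have hx := isStrictMinOn_image_Iic_zero hmono
  have hxyx := isStrictMinOn_image_Iic_diff_one hmono hm0
  rw [← hm, dihedralReflection_zero] at hx hxyx
  refine ⟨⟨x, hx, fun a ha ↦ IsStrictMinOn.unique ha hx⟩, fun a ha ↦ ?_⟩
  obtain rfl := hx.unique ha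
  simp only [← isStrictMinOn_diff_singleton_iff]
  refine ⟨⟨_, hxyx, fun c hc ↦ hc.unique hxyx⟩, fun c hc ↦ ?_⟩
  obtain rfl := hxyx.unique hc
  rw [mul_dihedralReflection_one_mul hx.1.2.1.mul_self, ← hχ, canonicalGenerators]
end

section
/- Assume the index type B is finite. Then the language Pref_T := {ω : List B | ω ≠ [] and ω ++ ω.dropLast.reverse is reduced} of reduced words for reflection-prefixes is a regular language over the alphabet B, i.e., Language.IsRegular Pref_T: there is a deterministic finite automaton (a DFA with a finite state type) whose accepted language is exactly Pref_T. -/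
/-!
Following Brink and Howlett, let the Coxeter group act by its geometric representation. A word `u`
extends to a reduced word `u ++ [s]` exactly when `u` keeps the simple root `eₛ` positive. Call a
positive root small if it dominates no other positive root. The simple roots are small, and the set
of small roots made negative by `u` determines the corresponding set for every reduced `u ++ [s]`:
if the reflection `s` takes a small root `b ≠ eₛ` to a root that is not small, then that root
dominates `eₛ`, so `u` keeps it positive. These sets are therefore the states of an automaton for
reduced words.

There are finitely many small roots. Each is reached from a simple root by steps adding a positive
multiple of a simple root, and along such a chain the vector of all `B(b, eₛ)`, truncated below at
`-1`, never repeats. If `-1 < B(b, eₛ) < 1`, then `B(b, eₛ)` is the cosine of a rational multiple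
of `π`, because the product of the two reflections has a finite orbit on roots. As it also lies in
the number field generated by the entries of the Tits form, it takes only finitely many values.

Finally, an automaton can recognise `ω ++ ω.dropLast.reverse` while reading only `ω`, by remembering
how its reversed prefixes act on the states.
-/

namespace BrinkHowlett

open Real Module Polynomial

section Reflection

variable {V : Type*} [AddCommGroup V] [Module ℝ V] {x y : V} {f g : Dual ℝ V}

lemma sin_two_pi_div_pos {m : ℕ} (hm : 3 ≤ m) : 0 < sin (2 * π / m) := by
  have hm' : (3 : ℝ) ≤ m := by exact_mod_cast hm
  refine sin_pos_of_pos_of_lt_pi (by positivity) ?_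
  rw [div_lt_iff₀ (by positivity)]
  nlinarith [pi_pos]

lemma chebyshevS_eval_of_even {m : ℕ} {k : ℤ} (hm : 3 ≤ m) (hk : (m : ℤ) = 2 * k) :
    (Chebyshev.S ℝ (k - 1)).eval (2 * cos (2 * π / m)) = 0 := by
  refine (mul_eq_zero_iff_right (sin_two_pi_div_pos hm).ne').1 ?_
  have hkm : (m : ℝ) = 2 * k := by exact_mod_cast hk
  have hπ : ((k - 1 : ℤ) + 1 : ℝ) * (2 * π / m) = π := by
    have : (m : ℝ) ≠ 0 := by positivity
    push_cast
    field_simp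
    linear_combination -hkm
  rw [Chebyshev.S_two_mul_real_cos, hπ, sin_pi]

lemma chebyshevS_eval_add_of_odd {m : ℕ} {k : ℤ} (hm : 3 ≤ m) (hk : (m : ℤ) = 2 * k + 1) :
    (Chebyshev.S ℝ k + Chebyshev.S ℝ (k - 1)).eval (2 * cos (2 * π / m)) = 0 := by
  refine (mul_eq_zero_iff_right (sin_two_pi_div_pos hm).ne').1 ?_
  have hkm : (m : ℝ) = 2 * k + 1 := by exact_mod_cast hk
  have hm₀ : (m : ℝ) ≠ 0 := by positivity
  have hpos : ((k : ℝ) + 1) * (2 * π / m) = π / m + π := by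
    field_simp
    linear_combination -hkm
  have hneg : ((k - 1 : ℤ) + 1 : ℝ) * (2 * π / m) = π - π / m := by
    push_cast
    field_simp
    linear_combination -hkm
  rw [eval_add, add_mul, Chebyshev.S_two_mul_real_cos, Chebyshev.S_two_mul_real_cos, hpos, hneg,
    sin_add_pi, sin_pi_sub, neg_add_cancel]

lemma reflection_mul_reflection_pow_eq_one (hf : f x = 2) (hg : g y = 2) {m : ℕ} (hm : 3 ≤ m)
    (hfg : f y * g x = 4 * cos (π / m) ^ 2) : (reflection hf * reflection hg) ^ m = 1 := by
  have ht : 2 * cos (2 * π / m) = f y * g x - 2 := by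
    rw [hfg, mul_div_assoc, cos_two_mul]
    ring
  ext z
  rw [reflection_mul_reflection_pow_apply hf hg m z _ ht]
  obtain ⟨k, hk | hk⟩ := (m : ℤ).even_or_odd'
  · rw [show ((m : ℤ) - 2) / 2 = k - 1 by lia, show ((m : ℤ) - 1) / 2 = k - 1 by lia,
      chebyshevS_eval_of_even hm hk]
    simp
  · have := chebyshevS_eval_add_of_odd hm hk
    rw [eval_add] at this
    rw [show ((m : ℤ) - 2) / 2 = k - 1 by lia, show ((m : ℤ) - 1) / 2 = k by lia,
      show ((m : ℤ) - 3) / 2 = k - 1 by lia, show (m : ℤ) / 2 = k by lia, this]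
    simp

lemma reflection_mul_reflection_sq_eq_one (hf : f x = 2) (hg : g y = 2) (hfy : f y = 0)
    (hgx : g x = 0) : (reflection hf * reflection hg) ^ 2 = 1 := by
  ext z
  simp only [sq, LinearEquiv.mul_apply, reflection_apply, map_sub, map_smul, hf, hg, hfy, hgx,
    LinearEquiv.coe_one, id]
  module

end Reflection

variable {B : Type*} {M : CoxeterMatrix B}

/-- The simple root `eᵢ`, a vector of the space underlying the geometric representation. -/
noncomputable abbrev simpleRoot (i : B) : B →₀ ℝ := Finsupp.single i 1

/-- The Tits form, `B(eᵢ, eⱼ) = -cos (π / mᵢⱼ)`. Mathlib encodes `mᵢⱼ = ∞` as `0`, and then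
`π / 0 = 0` yields the required value `-1`. -/
noncomputable def titsForm (M : CoxeterMatrix B) : LinearMap.BilinForm ℝ (B →₀ ℝ) :=
  Finsupp.linearCombination ℝ fun i ↦ Finsupp.linearCombination ℝ fun j ↦ -cos (π / M i j)

lemma titsForm_simpleRoot (i j : B) :
    titsForm M (simpleRoot i) (simpleRoot j) = -cos (π / M i j) := by
  simp [titsForm]

lemma titsForm_simpleRoot_self (i : B) : titsForm M (simpleRoot i) (simpleRoot i) = 1 := by
  simp [titsForm_simpleRoot]

lemma titsForm_simpleRoot_nonpos {i j : B} (hij : i ≠ j) :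
    titsForm M (simpleRoot i) (simpleRoot j) ≤ 0 := by
  have hle : π / M i j ≤ π / 2 := by
    rcases Nat.eq_zero_or_pos (M i j) with h | h
    · rw [h, Nat.cast_zero, div_zero]
      positivity
    · have : (2 : ℝ) ≤ M i j := by exact_mod_cast (by have := M.off_diagonal i j hij; lia)
      gcongr
  rw [titsForm_simpleRoot, neg_nonpos]
  exact cos_nonneg_of_mem_Icc ⟨by linarith [pi_pos, show 0 ≤ π / M i j by positivity], hle⟩

lemma titsForm_comm (u v : B →₀ ℝ) : titsForm M u v = titsForm M v u := by
  suffices (titsForm M).flip = titsForm M from congr($this v u)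
  ext i j
  simp [titsForm, M.symmetric i j]

lemma titsForm_eq_sum (u v : B →₀ ℝ) :
    titsForm M u v = v.sum fun i a ↦ a * titsForm M u (simpleRoot i) := by
  conv_lhs => rw [← v.sum_single, map_finsuppSum]
  simp only [← smul_eq_mul, ← map_smul, Finsupp.smul_single_one]

lemma two_smul_titsForm_simpleRoot (i j : B) :
    ((2 : ℝ) • titsForm M (simpleRoot i)) (simpleRoot j) = -2 * cos (π / M i j) := by
  rw [LinearMap.smul_apply, titsForm_simpleRoot, smul_eq_mul]
  ring

lemma two_smul_titsForm_simpleRoot_self (i : B) :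
    ((2 : ℝ) • titsForm M (simpleRoot i)) (simpleRoot i) = 2 := by
  rw [LinearMap.smul_apply, titsForm_simpleRoot_self, smul_eq_mul, mul_one]

/-- The reflection in the simple root `eᵢ` with respect to the Tits form. -/
noncomputable def simpleReflection (M : CoxeterMatrix B) (i : B) : (B →₀ ℝ) ≃ₗ[ℝ] (B →₀ ℝ) :=
  reflection (two_smul_titsForm_simpleRoot_self (M := M) i)

lemma isLiftable_simpleReflection (M : CoxeterMatrix B) : M.IsLiftable (simpleReflection M) := by
  intro i j
  by_cases hij : i = j
  · subst hij
    rw [M.diagonal, pow_one]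
    exact mul_eq_one_iff_inv_eq.2 (reflection_inv _)
  obtain h0 | h2 | h3 : M i j = 0 ∨ M i j = 2 ∨ 3 ≤ M i j := by have := M.off_diagonal i j hij; lia
  · rw [h0, pow_zero]
  · rw [h2]
    refine reflection_mul_reflection_sq_eq_one _ _ ?_ ?_
    · simp [titsForm_simpleRoot, h2]
    · simp [titsForm_simpleRoot, M.symmetric j i, h2]
  · refine reflection_mul_reflection_pow_eq_one _ _ h3 ?_
    rw [two_smul_titsForm_simpleRoot, two_smul_titsForm_simpleRoot, M.symmetric j i]
    ring

variable {W : Type*} [Group W] (cs : CoxeterSystem M W)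

/-- The geometric representation of a Coxeter group: the simple reflection `sᵢ` acts as the
reflection in `eᵢ` with respect to the Tits form. -/
noncomputable def geomRep : W →* ((B →₀ ℝ) ≃ₗ[ℝ] (B →₀ ℝ)) :=
  cs.lift ⟨simpleReflection M, isLiftable_simpleReflection M⟩

lemma geomRep_simple (i : B) (v : B →₀ ℝ) :
    geomRep cs (cs.simple i) v = v - (2 * titsForm M (simpleRoot i) v) • simpleRoot i := by
  rw [geomRep, cs.lift_apply_simple, simpleReflection, reflection_apply, LinearMap.smul_apply,
    smul_eq_mul]

lemma geomRep_simple_self (i : B) :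
    geomRep cs (cs.simple i) (simpleRoot i) = -simpleRoot i := by
  rw [geomRep_simple, titsForm_simpleRoot_self]
  module

lemma geomRep_mul (w w' : W) (v : B →₀ ℝ) :
    geomRep cs (w * w') v = geomRep cs w (geomRep cs w' v) := by
  rw [map_mul, LinearEquiv.mul_apply]

lemma geomRep_apply_inv_self (w : W) (v : B →₀ ℝ) : geomRep cs w (geomRep cs w⁻¹ v) = v := by
  rw [← geomRep_mul, mul_inv_cancel, map_one, LinearEquiv.coe_one, id]

lemma titsForm_geomRep (w : W) (u v : B →₀ ℝ) :
    titsForm M (geomRep cs w u) (geomRep cs w v) = titsForm M u v := by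
  induction w using cs.simple_induction_left generalizing u v with
  | one => simp
  | mul_simple_left w i ih =>
    rw [geomRep_mul, geomRep_mul, ← ih u v, geomRep_simple, geomRep_simple]
    simp only [map_sub, map_smul, LinearMap.sub_apply, LinearMap.smul_apply, smul_eq_mul,
      titsForm_simpleRoot_self, titsForm_comm _ (simpleRoot i)]
    ring

lemma chebyshevU_eval_cos_pi_div_nonneg {m k : ℕ} (hm : m ≠ 1) (hk : m = 0 ∨ k ≤ m) :
    0 ≤ (Chebyshev.U ℝ (k - 1)).eval (cos (π / m)) := by
  rcases eq_or_ne m 0 with rfl | hm0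
  · simp
  have hkm : (k : ℝ) ≤ m := by exact_mod_cast hk.resolve_left hm0
  have hm2 : (2 : ℝ) ≤ m := by exact_mod_cast (by lia : 2 ≤ m)
  have hsin : 0 < sin (π / m) :=
    sin_pos_of_pos_of_lt_pi (by positivity) (div_lt_self pi_pos (by linarith))
  refine nonneg_of_mul_nonneg_left ?_ hsin
  rw [Chebyshev.U_real_cos]
  push_cast
  rw [sub_add_cancel]
  refine sin_nonneg_of_nonneg_of_le_pi (by positivity) ?_
  rw [mul_div_left_comm]
  exact mul_le_of_le_one_right pi_pos.le (div_le_one_of_le₀ hkm (by positivity))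

lemma geomRep_alternatingWord_simpleRoot (s t : B) (k : ℕ) :
    geomRep cs (cs.wordProd (CoxeterSystem.alternatingWord s t k)) (simpleRoot s) =
      (Chebyshev.U ℝ k).eval (cos (π / M s t)) • simpleRoot (if Even k then s else t) +
        (Chebyshev.U ℝ (k - 1)).eval (cos (π / M s t)) •
          simpleRoot (if Even k then t else s) := by
  induction k with
  | zero => simp [CoxeterSystem.alternatingWord]
  | succ k ih =>
    have hU := congr(($(Chebyshev.U_add_one ℝ k)).eval (cos (π / M s t)))
    simp only [eval_sub, eval_mul, eval_ofNat, eval_X] at hU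
    rw [CoxeterSystem.alternatingWord_succ', cs.wordProd_cons, geomRep_mul, ih, geomRep_simple]
    push_cast
    rw [add_sub_cancel_right, hU]
    by_cases hk : Even k
    · simp only [hk, Nat.even_add_one, not_true_eq_false, if_true, if_false, map_add, map_smul,
        titsForm_simpleRoot_self, titsForm_simpleRoot, M.symmetric t s, smul_eq_mul]
      module
    · simp only [hk, Nat.even_add_one, not_false_eq_true, if_true, if_false, map_add, map_smul,
        titsForm_simpleRoot_self, titsForm_simpleRoot, smul_eq_mul]
      module

lemma exists_eq_mul_alternatingWord {w : W} {s : B} (hs : ¬cs.IsRightDescent w s) (t : B) :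
    ∃ k v, w = v * cs.wordProd (CoxeterSystem.alternatingWord s t k) ∧
      cs.length v + k = cs.length w ∧ ¬cs.IsRightDescent v s ∧ ¬cs.IsRightDescent v t := by
  induction hn : cs.length w generalizing w s t with
  | zero =>
    refine ⟨0, w, by simp [CoxeterSystem.alternatingWord], hn, hs, ?_⟩
    rw [CoxeterSystem.IsRightDescent]
    lia
  | succ n ih =>
    by_cases ht : cs.IsRightDescent w t
    · have hwt := cs.isRightDescent_iff.1 ht
      have ht' : ¬cs.IsRightDescent (w * cs.simple t) t :=
        cs.isRightDescent_iff_not_isRightDescent_mul.1 ht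
      obtain ⟨k, v, hv, hlen, hvt, hvs⟩ := ih ht' s (by lia)
      refine ⟨k + 1, v, ?_, by lia, hvs, hvt⟩
      rw [CoxeterSystem.alternatingWord_succ, cs.wordProd_concat, ← mul_assoc, ← hv,
        cs.simple_mul_simple_cancel_right]
    · exact ⟨0, w, by simp [CoxeterSystem.alternatingWord], hn, hs, ht⟩

lemma eq_zero_or_le_of_length_mul_alternatingWord {v : W} {s t : B} {n : ℕ}
    (h : cs.length v + n ≤ cs.length (v * cs.wordProd (CoxeterSystem.alternatingWord s t n))) :
    M s t = 0 ∨ n ≤ M s t := by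
  by_contra! hn
  have hle := cs.length_mul_le v (cs.wordProd (CoxeterSystem.alternatingWord s t n))
  have hword := cs.length_wordProd_le (CoxeterSystem.alternatingWord s t n)
  refine cs.not_isReduced_alternatingWord s t hn.1 hn.2 ?_
  rw [CoxeterSystem.IsReduced]
  rw [CoxeterSystem.length_alternatingWord] at hword ⊢
  lia

theorem geomRep_simpleRoot_pos {w : W} {s : B} (hs : ¬cs.IsRightDescent w s) :
    0 < geomRep cs w (simpleRoot s) := by
  refine (?_ : 0 ≤ geomRep cs w (simpleRoot s)).lt_of_ne' (by simp)
  induction hn : cs.length w using Nat.strong_induction_on generalizing w s with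
  | _ n ih =>
    rcases eq_or_ne w 1 with rfl | hw
    · simp
    obtain ⟨t, ht⟩ := cs.exists_rightDescent_of_ne_one hw
    have hst : s ≠ t := fun h ↦ hs (h ▸ ht)
    obtain ⟨k, v, hv, hlen, hvs, hvt⟩ := exists_eq_mul_alternatingWord cs hs t
    have hk : k ≠ 0 := by
      rintro rfl
      rw [CoxeterSystem.alternatingWord, cs.wordProd_nil, mul_one] at hv
      exact hvt (hv ▸ ht)
    have hkm : M s t = 0 ∨ k + 1 ≤ M s t := by
      rw [M.symmetric s t]
      apply eq_zero_or_le_of_length_mul_alternatingWord cs (v := v)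
      rw [CoxeterSystem.alternatingWord_succ, cs.wordProd_concat, ← mul_assoc, ← hv,
        cs.not_isRightDescent_iff.1 hs]
      lia
    have hvs' := ih _ (by lia) hvs rfl
    have hvt' := ih _ (by lia) hvt rfl
    have hU := chebyshevU_eval_cos_pi_div_nonneg (M.off_diagonal s t hst) hkm
    have hU' := chebyshevU_eval_cos_pi_div_nonneg (k := k) (M.off_diagonal s t hst) (by lia)
    push_cast at hU
    rw [add_sub_cancel_right] at hU
    rw [hv, geomRep_mul, geomRep_alternatingWord_simpleRoot, map_add, map_smul, map_smul]
    refine add_nonneg (smul_nonneg hU ?_) (smul_nonneg hU' ?_) <;> split_ifs <;> assumption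

theorem geomRep_simpleRoot_neg {w : W} {s : B} (hs : cs.IsRightDescent w s) :
    geomRep cs w (simpleRoot s) < 0 := by
  have := geomRep_simpleRoot_pos cs (cs.isRightDescent_iff_not_isRightDescent_mul.1 hs)
  rwa [geomRep_mul, geomRep_simple_self, map_neg, neg_pos] at this

theorem isRightDescent_iff_geomRep_neg {w : W} {s : B} :
    cs.IsRightDescent w s ↔ geomRep cs w (simpleRoot s) < 0 :=
  ⟨geomRep_simpleRoot_neg cs, fun h ↦ by_contra fun hs ↦ h.not_gt (geomRep_simpleRoot_pos cs hs)⟩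

/-- A root: an image of a simple root under the geometric representation. -/
def IsRoot (b : B →₀ ℝ) : Prop := ∃ w i, b = geomRep cs w (simpleRoot i)

lemma simpleRoot_pos (i : B) : 0 < simpleRoot i :=
  lt_of_le_of_ne (Finsupp.single_nonneg.2 zero_le_one) (by simp [eq_comm])

variable {cs}

lemma isRoot_simpleRoot (i : B) : IsRoot cs (simpleRoot i) := ⟨1, i, by simp⟩

namespace IsRoot

variable {b : B →₀ ℝ}

lemma map (hb : IsRoot cs b) (w : W) : IsRoot cs (geomRep cs w b) := by
  obtain ⟨v, i, rfl⟩ := hb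
  exact ⟨w * v, i, (geomRep_mul cs w v _).symm⟩

lemma titsForm_self (hb : IsRoot cs b) : titsForm M b b = 1 := by
  obtain ⟨w, i, rfl⟩ := hb
  rw [titsForm_geomRep, titsForm_simpleRoot_self]

lemma exists_reflection (hb : IsRoot cs b) :
    ∃ t : W, ∀ v, geomRep cs t v = v - (2 * titsForm M b v) • b := by
  obtain ⟨w, i, rfl⟩ := hb
  refine ⟨w * cs.simple i * w⁻¹, fun v ↦ ?_⟩
  rw [geomRep_mul, geomRep_mul, geomRep_simple, map_sub, map_smul, geomRep_apply_inv_self,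
    ← titsForm_geomRep cs w, geomRep_apply_inv_self]

lemma pos_or_neg (hb : IsRoot cs b) : 0 < b ∨ b < 0 := by
  obtain ⟨w, i, rfl⟩ := hb
  by_cases hw : cs.IsRightDescent w i
  exacts [.inr (geomRep_simpleRoot_neg cs hw), .inl (geomRep_simpleRoot_pos cs hw)]

lemma pos_of_coord_pos (hb : IsRoot cs b) {i : B} (hi : 0 < b i) : 0 < b :=
  hb.pos_or_neg.resolve_right fun h ↦ (h.le i).not_gt hi

lemma exists_coord_pos (hb : IsRoot cs b) (hpos : 0 < b) {s : B} (hs : b ≠ simpleRoot s) :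
    ∃ r ≠ s, 0 < b r := by
  by_contra! hr
  have hb_eq : b = b s • simpleRoot s := by
    ext r
    rcases eq_or_ne r s with rfl | hrs
    · simp
    · simp [hrs.symm, (hr r hrs).antisymm (hpos.le r)]
  have hsq : b s * b s = 1 := by
    have := hb.titsForm_self
    rwa [hb_eq, map_smul, map_smul, LinearMap.smul_apply, titsForm_simpleRoot_self, smul_eq_mul,
      smul_eq_mul, mul_one] at this
  have hone : b s = 1 := by nlinarith [show 0 ≤ b s from hpos.le s]
  rw [hone, one_smul] at hb_eq
  exact hs hb_eq

lemma geomRep_simple_pos (hb : IsRoot cs b) (hpos : 0 < b) {s : B} (hs : b ≠ simpleRoot s) :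
    0 < geomRep cs (cs.simple s) b := by
  obtain ⟨r, hrs, hr⟩ := hb.exists_coord_pos hpos hs
  refine (hb.map _).pos_of_coord_pos (i := r) ?_
  simpa [geomRep_simple, hrs.symm] using hr

end IsRoot

lemma geomRep_simple_geomRep_simple (s : B) (v : B →₀ ℝ) :
    geomRep cs (cs.simple s) (geomRep cs (cs.simple s) v) = v := by
  rw [← geomRep_mul, cs.simple_mul_simple_self, map_one, LinearEquiv.coe_one, id]

lemma finite_setOf_geomRep_neg (w : W) :
    {b | IsRoot cs b ∧ 0 < b ∧ geomRep cs w b < 0}.Finite := by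
  induction w using cs.simple_induction_right with
  | one =>
    refine Set.finite_empty.subset fun b ⟨_, hpos, hneg⟩ ↦ ?_
    exact hpos.not_gt (by simpa using hneg)
  | mul_simple_right w s ih =>
    refine ((ih.image (geomRep cs (cs.simple s))).insert (simpleRoot s)).subset ?_
    rintro b ⟨hb, hpos, hneg⟩
    rcases eq_or_ne b (simpleRoot s) with rfl | hs
    · exact Set.mem_insert _ _
    rw [geomRep_mul] at hneg
    refine .inr ⟨_, ⟨hb.map _, hb.geomRep_simple_pos hpos hs, hneg⟩,
      geomRep_simple_geomRep_simple s b⟩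

section Recurrence

section OrderedModule

variable {E : Type*} [AddCommGroup E] [PartialOrder E] [IsOrderedAddMonoid E] [Module ℝ E]
  [PosSMulMono ℝ E] {z : ℕ → E} {p : ℝ}

lemma sub_le_sub_of_recurrence (hp : 2 ≤ p) (hz : ∀ n, z (n + 2) = p • z (n + 1) - z n)
    (h0 : 0 ≤ z 1) (h01 : z 0 ≤ z 1) (n : ℕ) : z 1 - z 0 ≤ z (n + 1) - z n := by
  suffices 0 ≤ z (n + 1) ∧ z 1 - z 0 ≤ z (n + 1) - z n from this.2
  induction n with
  | zero => exact ⟨h0, le_rfl⟩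
  | succ n ih =>
    have hstep : z (n + 2) - z (n + 1) = (p - 2) • z (n + 1) + (z (n + 1) - z n) := by
      rw [hz]
      module
    have hincr : z 1 - z 0 ≤ z (n + 2) - z (n + 1) :=
      hstep ▸ le_add_of_nonneg_of_le (smul_nonneg (sub_nonneg.2 hp) ih.1) ih.2
    exact ⟨ih.1.trans (sub_nonneg.1 ((sub_nonneg.2 h01).trans hincr)), hincr⟩

lemma monotone_of_recurrence (hp : 2 ≤ p) (hz : ∀ n, z (n + 2) = p • z (n + 1) - z n)
    (h0 : 0 ≤ z 1) (h01 : z 0 ≤ z 1) : Monotone z :=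
  monotone_nat_of_le_succ fun n ↦
    sub_nonneg.1 ((sub_nonneg.2 h01).trans (sub_le_sub_of_recurrence hp hz h0 h01 n))

lemma strictMono_of_recurrence (hp : 2 ≤ p) (hz : ∀ n, z (n + 2) = p • z (n + 1) - z n)
    (h0 : 0 ≤ z 1) (h01 : z 0 < z 1) : StrictMono z :=
  strictMono_nat_of_lt_succ fun n ↦
    sub_pos.1 ((sub_pos.2 h01).trans_le (sub_le_sub_of_recurrence hp hz h0 h01.le n))

end OrderedModule

lemma not_forall_pos_of_recurrence {z : ℕ → ℝ} {p : ℝ} (hp : p < 2)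
    (hz : ∀ n, z (n + 2) = p * z (n + 1) - z n) : ¬∀ n, 0 < z n := by
  intro hpos
  have hratio : ∀ n : ℕ, z (n + 1) / z n ≤ z 1 / z 0 - n * (2 - p) := by
    intro n
    induction n with
    | zero => simp
    | succ n ih =>
      have hstep : z (n + 2) / z (n + 1) = p - z n / z (n + 1) := by
        have := (hpos (n + 1)).ne'
        rw [hz]
        field_simp
      have hamgm : 2 ≤ z (n + 1) / z n + z n / z (n + 1) := by
        have := hpos n
        have := hpos (n + 1)
        rw [div_add_div _ _ (by positivity) (by positivity), le_div_iff₀ (by positivity)]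
        nlinarith [sq_nonneg (z (n + 1) - z n)]
      push_cast
      linarith
  obtain ⟨n, hn⟩ := exists_nat_gt (z 1 / z 0 / (2 - p))
  rw [div_lt_iff₀ (by linarith)] at hn
  linarith [hratio n, div_pos (hpos (n + 1)) (hpos n)]

end Recurrence

lemma exists_linearMap_pos (ι : Type*) : ∃ h : (ι →₀ ℝ) →ₗ[ℝ] ℝ, ∀ v, 0 < v → 0 < h v :=
  ⟨Finsupp.lsum ℝ fun _ ↦ LinearMap.id, fun _ hv ↦
    Finset.sum_pos (fun i hi ↦ (hv.le i).lt_of_ne' (Finsupp.mem_support_iff.1 hi))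
      (Finsupp.support_nonempty_iff.2 hv.ne')⟩

section Dihedral

variable {b c : B →₀ ℝ}

-- `g` is the product of the reflections in `b` and `c`, a rotation with trace `4 B(b, c)² - 2`.
lemma IsRoot.exists_recurrence (hb : IsRoot cs b) (hc : IsRoot cs c) :
    ∃ g : W, geomRep cs g c = (2 * titsForm M b c) • b - c ∧
      ∀ n, geomRep cs (g ^ (n + 2)) c =
        (4 * titsForm M b c ^ 2 - 2) • geomRep cs (g ^ (n + 1)) c - geomRep cs (g ^ n) c := by
  obtain ⟨t, ht⟩ := hb.exists_reflection
  obtain ⟨t', ht'⟩ := hc.exists_reflection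
  obtain ⟨g, hg⟩ : ∃ g, ∀ v, geomRep cs g v = v - (2 * titsForm M c v) • c -
      (2 * (titsForm M b v - 2 * titsForm M c v * titsForm M b c)) • b :=
    ⟨t * t', fun v ↦ by rw [geomRep_mul, ht, ht', map_sub, map_smul, smul_eq_mul]⟩
  have hgc : geomRep cs g c = (2 * titsForm M b c) • b - c := by
    rw [hg, hc.titsForm_self]
    module
  have hgg : geomRep cs g (geomRep cs g c) =
      (4 * titsForm M b c ^ 2 - 2) • geomRep cs g c - c := by
    rw [hgc, hg]
    simp only [map_sub, map_smul, smul_eq_mul, hb.titsForm_self, hc.titsForm_self,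
      titsForm_comm c b]
    module
  refine ⟨g, hgc, fun n ↦ ?_⟩
  rw [pow_succ, geomRep_mul, pow_succ, geomRep_mul, hgg, map_sub, map_smul, geomRep_mul]

-- In an infinite orbit the signs would eventually be constant, as `g` makes only finitely many
-- positive roots negative; but a recurrence with `p < 2` oscillates.
lemma not_injective_geomRep_pow {g : W} {p : ℝ} (hp : p < 2) (hc : IsRoot cs c)
    (hrec : ∀ n, geomRep cs (g ^ (n + 2)) c =
      p • geomRep cs (g ^ (n + 1)) c - geomRep cs (g ^ n) c) :
    ¬Function.Injective fun n : ℕ ↦ geomRep cs (g ^ n) c := by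
  intro hinj
  obtain ⟨height, height_pos⟩ := exists_linearMap_pos B
  have hheightrec (n) : height (geomRep cs (g ^ (n + 2)) c) =
      p * height (geomRep cs (g ^ (n + 1)) c) - height (geomRep cs (g ^ n) c) := by
    rw [hrec, map_sub, map_smul, smul_eq_mul]
  obtain ⟨N, hN⟩ := ((finite_setOf_geomRep_neg (cs := cs) g).preimage hinj.injOn).bddAbove
  have hstep : ∀ n > N, 0 < geomRep cs (g ^ n) c → 0 < geomRep cs (g ^ (n + 1)) c := by
    intro n hn hpos
    refine (hc.map _).pos_or_neg.resolve_right fun hneg ↦ hn.not_ge (hN ⟨hc.map _, hpos, ?_⟩)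
    rwa [← geomRep_mul, ← pow_succ']
  obtain ⟨n, hn, hpos⟩ : ∃ n > N, 0 < geomRep cs (g ^ n) c := by
    by_contra! hneg
    refine not_forall_pos_of_recurrence (z := fun j ↦ -height (geomRep cs (g ^ (N + 1 + j)) c)) hp
      (fun j ↦ ?_) fun j ↦ ?_
    · linear_combination -hheightrec (N + 1 + j)
    · rw [← map_neg]
      exact height_pos _ (neg_pos.2 ((hc.map _).pos_or_neg.resolve_left (hneg _ (by lia))))
  have hforall (j) : 0 < geomRep cs (g ^ (n + j)) c := by
    induction j with
    | zero => exact hpos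
    | succ j ih => exact hstep _ (by lia) ih
  exact not_forall_pos_of_recurrence hp (fun j ↦ hheightrec (n + j))
    fun j ↦ height_pos _ (hforall j)

lemma titsForm_geomRep_pow {g : W} {y : ℝ} (hc : IsRoot cs c)
    (hy : titsForm M (geomRep cs g c) c = y)
    (hrec : ∀ n, geomRep cs (g ^ (n + 2)) c =
      (2 * y) • geomRep cs (g ^ (n + 1)) c - geomRep cs (g ^ n) c) (n : ℕ) :
    titsForm M (geomRep cs (g ^ n) c) c = (Chebyshev.T ℝ n).eval y := by
  induction n using Nat.twoStepInduction with
  | zero => simpa using hc.titsForm_self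
  | one => simpa using hy
  | more n ih ih' =>
    rw [hrec, map_sub, map_smul, LinearMap.sub_apply, LinearMap.smul_apply, ih, ih']
    push_cast
    simp [Chebyshev.T_add_two]

lemma exists_pos_geomRep_pow_eq {g : W} {v : B →₀ ℝ}
    (h : ¬Function.Injective fun n : ℕ ↦ geomRep cs (g ^ n) v) :
    ∃ d > 0, geomRep cs (g ^ d) v = v := by
  simp only [Function.Injective, not_forall] at h
  obtain ⟨m, n, hmn, hne⟩ := h
  wlog hlt : m < n generalizing m n
  · exact this n m hmn.symm (Ne.symm hne) (by lia)
  refine ⟨n - m, by lia, (geomRep cs (g ^ m)).injective ?_⟩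
  rw [← geomRep_mul, ← pow_add, Nat.add_sub_cancel' hlt.le, hmn]

theorem IsRoot.exists_titsForm_eq_cos (hb : IsRoot cs b) (hc : IsRoot cs c)
    (hgt : -1 < titsForm M b c) (hlt : titsForm M b c < 1) :
    ∃ r : ℚ, titsForm M b c = cos (r * π) := by
  set q := titsForm M b c
  obtain ⟨g, hgc, hrec⟩ := hb.exists_recurrence hc
  obtain ⟨d, hd, hfix⟩ :=
    exists_pos_geomRep_pow_eq (not_injective_geomRep_pow (by nlinarith) hc hrec)
  have hcos : cos (arccos q) = q := cos_arccos hgt.le hlt.le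
  have hgcc : titsForm M (geomRep cs g c) c = cos (2 * arccos q) := by
    rw [hgc, map_sub, map_smul, LinearMap.sub_apply, LinearMap.smul_apply, hc.titsForm_self,
      cos_two_mul, hcos, smul_eq_mul]
    ring
  have hT := titsForm_geomRep_pow hc hgcc (fun n ↦ by rw [hrec, cos_two_mul, hcos]; module) d
  rw [hfix, hc.titsForm_self, Chebyshev.T_real_cos, eq_comm, cos_eq_one_iff] at hT
  obtain ⟨k, hk⟩ := hT
  refine ⟨k / d, hcos.symm.trans congr(cos $(?_))⟩
  push_cast at hk ⊢
  field_simp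
  linarith

end Dihedral

variable (cs) in
/-- Dominance of roots: every group element which makes `b` negative makes `c` negative. -/
def Dominates (b c : B →₀ ℝ) : Prop := ∀ w, geomRep cs w b < 0 → geomRep cs w c < 0

-- If `w` made `b` negative but not `c`, it would make the infinitely many positive roots `g ^ n c`,
-- `n > 0`, negative, where `g` is the product of the reflections in `b` and `c`.
theorem IsRoot.dominates {b c : B →₀ ℝ} (hb : IsRoot cs b) (hc : IsRoot cs c)
    (hbc : 1 ≤ titsForm M b c) {r : B} (hr₀ : 0 ≤ c r) (hr : c r < b r) : Dominates cs b c := by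
  intro w hw
  refine (hc.map w).pos_or_neg.resolve_left fun hwc ↦ ?_
  obtain ⟨g, hgc, hrec⟩ := hb.exists_recurrence hc
  have hp : 2 ≤ 4 * titsForm M b c ^ 2 - 2 := by nlinarith
  have hmono : StrictMono fun n : ℕ ↦ geomRep cs (g ^ n) c r := by
    have h01 : c r < (2 * titsForm M b c) * b r - c r := by nlinarith
    refine strictMono_of_recurrence hp (fun n ↦ congr($(hrec n) r)) ?_ ?_
    · simpa [hgc] using hr₀.trans h01.le
    · simpa [hgc] using h01
  have hnonneg : 0 ≤ -geomRep cs w (geomRep cs g c) := by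
    rw [hgc, map_sub, map_smul, neg_sub, sub_nonneg]
    exact (smul_nonpos_of_nonneg_of_nonpos (by linarith) hw.le).trans hwc.le
  have hneg_mono : Monotone fun n : ℕ ↦ -geomRep cs w (geomRep cs (g ^ n) c) := by
    refine monotone_of_recurrence hp (fun n ↦ ?_) ?_ ?_
    · simp only [hrec, map_sub, map_smul]
      module
    · simpa using hnonneg
    · simpa using (neg_nonpos.2 hwc.le).trans hnonneg
  have hinj : Function.Injective fun n : ℕ ↦ geomRep cs (g ^ (n + 1)) c := fun m n h ↦
    Nat.succ_injective (hmono.injective congr($h r))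
  refine Set.infinite_range_of_injective hinj ((finite_setOf_geomRep_neg (cs := cs) w).subset ?_)
  rintro _ ⟨n, rfl⟩
  refine ⟨hc.map _, (hc.map _).pos_of_coord_pos (i := r) (hr₀.trans_lt ?_), ?_⟩
  · simpa using hmono n.succ_pos
  · have hle : 0 ≤ -geomRep cs w (geomRep cs (g ^ (n + 1)) c) :=
      hnonneg.trans (by simpa using hneg_mono (Nat.le_add_left 1 n))
    exact ((hc.map _).map w).pos_or_neg.resolve_left (neg_nonneg.1 hle).not_gt

section CosineValues

lemma exists_chebyshevT_eval_cos_eq_one (r : ℚ) :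
    ∃ n : ℕ, n ≠ 0 ∧ (Chebyshev.T ℝ n).eval (cos (r * π)) = 1 := by
  refine ⟨2 * r.den, by simp [r.den_ne_zero], ?_⟩
  have hr : (r : ℝ) * r.den = r.num := by exact_mod_cast r.mul_den_eq_num
  rw [Chebyshev.T_real_cos, cos_eq_one_iff]
  refine ⟨r.num, ?_⟩
  push_cast
  linear_combination -2 * π * hr

lemma norm_le_one_of_chebyshevT_eval_eq_one {n : ℕ} (hn : n ≠ 0) {z : ℂ}
    (hz : (Chebyshev.T ℂ n).eval z = 1) : ‖z‖ ≤ 1 := by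
  obtain ⟨θ, rfl⟩ := Complex.cos_surjective z
  rw [Chebyshev.T_complex_cos, Complex.cos_eq_one_iff] at hz
  obtain ⟨k, hk⟩ := hz
  have hθ : θ = (k * (2 * π) / n : ℝ) := by
    have : (n : ℂ) ≠ 0 := by exact_mod_cast hn
    push_cast at hk ⊢
    rw [eq_div_iff this, hk]
    ring
  rw [hθ, ← Complex.ofReal_cos, Complex.norm_real]
  exact abs_cos_le_one _

-- Kronecker's argument: `2 cos (rπ)` is an algebraic integer all of whose conjugates are at most
-- `2` in absolute value.
theorem finite_setOf_eq_cos_rat_mul_pi (K : IntermediateField ℚ ℝ) [FiniteDimensional ℚ K] :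
    {x | x ∈ K ∧ ∃ r : ℚ, x = cos (r * π)}.Finite := by
  have : NumberField K := ⟨⟩
  refine ((NumberField.Embeddings.finite_of_norm_le K ℂ 2).image fun x ↦
    algebraMap K ℝ x / 2).subset ?_
  rintro x ⟨hx, r, hr⟩
  obtain ⟨y, rfl⟩ : ∃ y : K, algebraMap K ℝ y = x := ⟨⟨x, hx⟩, rfl⟩
  refine ⟨2 * y, ⟨?_, fun φ ↦ ?_⟩, ?_⟩
  · rw [← isIntegral_algebraMap_iff (algebraMap K ℝ).injective, map_mul, map_ofNat, hr]
    exact isIntegral_two_mul_cos_rat_mul_pi r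
  · obtain ⟨n, hn, hT⟩ := exists_chebyshevT_eval_cos_eq_one r
    have hTK : (Chebyshev.T K n).eval y = 1 := by
      apply (algebraMap K ℝ).injective
      rw [Chebyshev.algebraMap_eval_T, map_one, hr, hT]
    have hTφ : (Chebyshev.T ℂ n).eval (φ y) = 1 := by
      rw [← Chebyshev.map_T φ, eval_map, eval₂_at_apply, hTK, map_one]
    rw [map_mul, map_ofNat, norm_mul, Complex.norm_ofNat]
    linarith [norm_le_one_of_chebyshevT_eval_eq_one hn hTφ]
  · dsimp only
    rw [map_mul, map_ofNat, mul_div_cancel_left₀ _ two_ne_zero]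

end CosineValues

/-- The field generated by the entries of the Tits form; it contains the coordinates of all
roots. -/
noncomputable def cosField (M : CoxeterMatrix B) : IntermediateField ℚ ℝ :=
  IntermediateField.adjoin ℚ (Set.range fun p : B × B ↦ cos (π / M p.1 p.2))

instance [Finite B] : FiniteDimensional ℚ (cosField M) := by
  refine IntermediateField.finiteDimensional_adjoin ?_
  rintro _ ⟨p, rfl⟩
  have halg := (isAlgebraic_cos_rat_mul_pi (M p.1 p.2 : ℚ)⁻¹).extendScalars
    (algebraMap ℤ ℚ).injective_int
  simpa [div_eq_inv_mul] using halg.isIntegral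

lemma titsForm_simpleRoot_mem_cosField (i j : B) :
    titsForm M (simpleRoot i) (simpleRoot j) ∈ cosField M := by
  rw [titsForm_simpleRoot]
  exact neg_mem (IntermediateField.subset_adjoin _ _ ⟨(i, j), rfl⟩)

lemma titsForm_mem_cosField {v : B →₀ ℝ} (hv : ∀ i, v i ∈ cosField M) (s : B) :
    titsForm M v (simpleRoot s) ∈ cosField M := by
  rw [titsForm_comm, titsForm_eq_sum]
  exact sum_mem fun i _ ↦ mul_mem (hv i) (titsForm_simpleRoot_mem_cosField s i)

lemma IsRoot.coord_mem_cosField {b : B →₀ ℝ} (hb : IsRoot cs b) (i : B) : b i ∈ cosField M := by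
  classical
  obtain ⟨w, j, rfl⟩ := hb
  have hsimple (i j : B) : simpleRoot j i ∈ cosField M := by
    rw [Finsupp.single_apply]
    split_ifs
    exacts [one_mem _, zero_mem _]
  induction w using cs.simple_induction_left generalizing i with
  | one => simpa using hsimple i j
  | mul_simple_left w s ih =>
    rw [geomRep_mul, geomRep_simple, Finsupp.sub_apply, Finsupp.smul_apply, smul_eq_mul,
      titsForm_comm]
    exact sub_mem (ih i)
      (mul_mem (mul_mem (ofNat_mem _ 2) (titsForm_mem_cosField ih s)) (hsimple i s))

theorem finite_setOf_titsForm_mem_Ioo [Finite B] (cs : CoxeterSystem M W) :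
    {q ∈ Set.Ioo (-1) 1 | ∃ b s, IsRoot cs b ∧ titsForm M b (simpleRoot s) = q}.Finite := by
  refine (finite_setOf_eq_cos_rat_mul_pi (cosField M)).subset ?_
  rintro _ ⟨⟨hgt, hlt⟩, b, s, hb, rfl⟩
  exact ⟨titsForm_mem_cosField hb.coord_mem_cosField s,
    hb.exists_titsForm_eq_cos (isRoot_simpleRoot s) hgt hlt⟩

lemma Dominates.map {b c : B →₀ ℝ} (h : Dominates cs b c) (w : W) :
    Dominates cs (geomRep cs w b) (geomRep cs w c) := by
  intro v hv
  rw [← geomRep_mul] at hv ⊢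
  exact h _ hv

lemma Dominates.titsForm_pos {b c : B →₀ ℝ} (h : Dominates cs b c) (hb : IsRoot cs b)
    (hb₀ : 0 < b) (hc₀ : 0 < c) : 0 < titsForm M b c := by
  by_contra! hbc
  obtain ⟨t, ht⟩ := hb.exists_reflection
  have htb : geomRep cs t b < 0 := by
    have : geomRep cs t b = -b := by
      rw [ht, hb.titsForm_self]
      module
    rwa [this, neg_lt_zero]
  have htc : 0 < geomRep cs t c := by
    rw [ht, sub_eq_add_neg, ← neg_smul]
    exact add_pos_of_pos_of_nonneg hc₀ (smul_nonneg (by linarith) hb₀.le)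
  exact htc.not_gt (h t htb)

lemma titsForm_geomRep_simple (s : B) (b : B →₀ ℝ) :
    titsForm M (geomRep cs (cs.simple s) b) (simpleRoot s) = -titsForm M b (simpleRoot s) := by
  rw [← titsForm_geomRep cs (cs.simple s), geomRep_simple_geomRep_simple, geomRep_simple_self,
    map_neg]

lemma IsRoot.exists_titsForm_simpleRoot_pos {b : B →₀ ℝ} (hb : IsRoot cs b) (hb₀ : 0 < b) :
    ∃ s, 0 < titsForm M b (simpleRoot s) := by
  by_contra! h
  have hsum := titsForm_eq_sum (M := M) b b
  rw [hb.titsForm_self] at hsum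
  exact hsum.not_gt ((Finset.sum_nonpos fun i _ ↦
    mul_nonpos_of_nonneg_of_nonpos (hb₀.le i) (h i)).trans_lt one_pos)

variable (cs) in
/-- A small (or elementary) root: a positive root dominating no other positive root. -/
structure IsSmall (b : B →₀ ℝ) : Prop where
  isRoot : IsRoot cs b
  pos : 0 < b
  eq_of_dominates : ∀ c, IsRoot cs c → 0 < c → Dominates cs b c → c = b

lemma isSmall_simpleRoot (s : B) : IsSmall cs (simpleRoot s) where
  isRoot := isRoot_simpleRoot s
  pos := simpleRoot_pos s
  eq_of_dominates c hc hc₀ hdom := by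
    by_contra hne
    refine (hc.geomRep_simple_pos hc₀ hne).not_gt (hdom _ ?_)
    rw [geomRep_simple_self, neg_lt_zero]
    exact simpleRoot_pos s

namespace IsSmall

variable {b : B →₀ ℝ}

lemma titsForm_simpleRoot_lt_one (hb : IsSmall cs b) {s : B} (hs : b ≠ simpleRoot s) :
    titsForm M b (simpleRoot s) < 1 := by
  by_contra! h
  obtain ⟨r, hrs, hr⟩ := hb.isRoot.exists_coord_pos hb.pos hs
  have hr₀ : simpleRoot s r = 0 := Finsupp.single_eq_of_ne hrs
  have hdom := hb.isRoot.dominates (isRoot_simpleRoot s) h hr₀.ge (hr₀.trans_lt hr)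
  exact hs (hb.eq_of_dominates _ (isRoot_simpleRoot s) (simpleRoot_pos s) hdom).symm

lemma geomRep_simple_or_dominates (hb : IsSmall cs b) {s : B} (hs : b ≠ simpleRoot s) :
    IsSmall cs (geomRep cs (cs.simple s) b) ∨
      Dominates cs (geomRep cs (cs.simple s) b) (simpleRoot s) := by
  by_contra! h
  refine h.1 ⟨hb.isRoot.map _, hb.isRoot.geomRep_simple_pos hb.pos hs, fun c hc hc₀ hdom ↦ ?_⟩
  have hcs : c ≠ simpleRoot s := by
    rintro rfl
    exact h.2 hdom
  have hdom' := hdom.map (cs.simple s)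
  rw [geomRep_simple_geomRep_simple] at hdom'
  rw [← hb.eq_of_dominates _ (hc.map _) (hc.geomRep_simple_pos hc₀ hcs) hdom',
    geomRep_simple_geomRep_simple]

lemma exists_descent (hb : IsSmall cs b) (hs : ∀ s, b ≠ simpleRoot s) :
    ∃ s, 0 < titsForm M b (simpleRoot s) ∧ IsSmall cs (geomRep cs (cs.simple s) b) := by
  obtain ⟨s, hpos⟩ := hb.isRoot.exists_titsForm_simpleRoot_pos hb.pos
  refine ⟨s, hpos, (hb.geomRep_simple_or_dominates (hs s)).resolve_right fun hdom ↦ ?_⟩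
  have := hdom.titsForm_pos (hb.isRoot.map _) (hb.isRoot.geomRep_simple_pos hb.pos (hs s))
    (simpleRoot_pos s)
  rw [titsForm_geomRep_simple] at this
  linarith

end IsSmall

variable (cs) in
/-- One step up in the poset of small roots: `c` is obtained from `b` by adding a positive multiple
of a simple root. -/
def Ascent (b c : B →₀ ℝ) : Prop :=
  IsSmall cs b ∧ IsSmall cs c ∧
    ∃ s, titsForm M b (simpleRoot s) < 0 ∧ c = geomRep cs (cs.simple s) b

namespace Ascent

variable {b c : B →₀ ℝ}

lemma lt (h : Ascent cs b c) : b < c := by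
  obtain ⟨-, -, s, hs, rfl⟩ := h
  rw [geomRep_simple, sub_eq_add_neg, ← neg_smul, titsForm_comm]
  exact lt_add_of_pos_right _ (smul_pos (by linarith) (simpleRoot_pos s))

-- Smallness of `c` gives `B(b, eₛ) > -1` for the simple root `eₛ` used in the step.
lemma eq_and_titsForm_le (h : Ascent cs b c) {r : B} (hr : titsForm M b (simpleRoot r) ≤ -1) :
    c r = b r ∧ titsForm M c (simpleRoot r) ≤ -1 := by
  obtain ⟨hb, hc, s, hs, rfl⟩ := h
  have hcs : geomRep cs (cs.simple s) b ≠ simpleRoot s := by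
    intro h
    have := congr(geomRep cs (cs.simple s) $h)
    rw [geomRep_simple_geomRep_simple, geomRep_simple_self] at this
    exact (neg_lt_zero.2 (simpleRoot_pos s)).not_gt (this ▸ hb.pos)
  have hlt := hc.titsForm_simpleRoot_lt_one hcs
  rw [titsForm_geomRep_simple] at hlt
  have hrs : s ≠ r := by
    rintro rfl
    linarith
  have hsr := titsForm_simpleRoot_nonpos (M := M) hrs
  rw [geomRep_simple, titsForm_comm (simpleRoot s) b]
  constructor
  · simp [hrs]
  · rw [map_sub, map_smul, LinearMap.sub_apply, LinearMap.smul_apply, smul_eq_mul]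
    nlinarith

end Ascent

section Relation

variable {α β : Type*} {r : α → α → Prop}

lemma wellFounded_of_transGen_ne {χ : α → β} {S : Set α} (hS : (χ '' S).Finite)
    (hmem : ∀ {a b}, r a b → a ∈ S) (hne : ∀ {a b}, Relation.TransGen r a b → χ a ≠ χ b) :
    WellFounded r := by
  refine wellFounded_iff_isEmpty_descending_chain.2 ⟨fun ⟨f, hf⟩ ↦ ?_⟩
  have hinj : Function.Injective fun n ↦ χ (f (n + 1)) := by
    refine Function.Injective.of_lt_imp_ne fun m n hmn ↦ (hne ?_).symm
    exact (transGen_of_succ_of_gt (fun i j ↦ r (f i) (f j)) (fun i _ ↦ hf i)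
      (Nat.succ_lt_succ hmn)).lift f fun _ _ h ↦ h
  refine Set.infinite_range_of_injective hinj (hS.subset ?_)
  rintro _ ⟨n, rfl⟩
  exact Set.mem_image_of_mem _ (hmem (hf n))

lemma finite_setOf_reflTransGen (hwf : WellFounded (flip r)) (hfin : ∀ a, {b | r a b}.Finite)
    (a : α) : {b | Relation.ReflTransGen r a b}.Finite := by
  induction a using hwf.induction with
  | _ a ih =>
    refine (((hfin a).biUnion ih).insert a).subset fun b hb ↦ ?_
    rcases hb.cases_head with rfl | ⟨c, hac, hcb⟩
    · exact Set.mem_insert _ _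
    · exact .inr (Set.mem_biUnion hac hcb)

end Relation

/-- The values `B(b, eₛ)` of the Tits form against the simple roots, truncated below at `-1`. -/
noncomputable def truncatedForm (M : CoxeterMatrix B) (b : B →₀ ℝ) (s : B) : ℝ :=
  max (-1) (titsForm M b (simpleRoot s))

lemma finite_truncatedForm_image [Finite B] (cs : CoxeterSystem M W) :
    (truncatedForm M '' {b | IsSmall cs b}).Finite := by
  have hvals := ((finite_setOf_titsForm_mem_Ioo cs).insert 1).insert (-1)
  refine (Set.Finite.pi' fun _ : B ↦ hvals).subset ?_
  rintro _ ⟨b, hb, rfl⟩ s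
  rw [truncatedForm]
  rcases le_or_gt (titsForm M b (simpleRoot s)) (-1) with h | h
  · exact .inl (max_eq_left h)
  rw [max_eq_right h.le]
  by_cases hs : b = simpleRoot s
  · rw [hs, titsForm_simpleRoot_self]
    exact .inr (.inl rfl)
  · exact .inr (.inr ⟨⟨h, hb.titsForm_simpleRoot_lt_one hs⟩, b, s, hb.isRoot, rfl⟩)

lemma lt_and_eq_of_transGen_ascent {b c : B →₀ ℝ} (h : Relation.TransGen (Ascent cs) b c) :
    b < c ∧ ∀ s, titsForm M b (simpleRoot s) ≤ -1 →
      c s = b s ∧ titsForm M c (simpleRoot s) ≤ -1 := by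
  induction h with
  | single h => exact ⟨h.lt, fun _ ↦ h.eq_and_titsForm_le⟩
  | tail _ hstep ih =>
    refine ⟨ih.1.trans hstep.lt, fun s hs ↦ ?_⟩
    obtain ⟨hs₁, hs₂⟩ := ih.2 s hs
    exact hs₁ ▸ hstep.eq_and_titsForm_le hs₂

-- If the truncated forms agree then `c - b` is isotropic, so `B(c, b) = 1` and `c` dominates `b`.
theorem truncatedForm_ne_of_transGen_ascent {b c : B →₀ ℝ}
    (h : Relation.TransGen (Ascent cs) b c) : truncatedForm M b ≠ truncatedForm M c := by
  intro heq
  obtain ⟨hlt, hfix⟩ := lt_and_eq_of_transGen_ascent h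
  have hb : IsSmall cs b := by
    obtain ⟨_, hstep, -⟩ := Relation.TransGen.head'_iff.1 h
    exact hstep.1
  have hc : IsSmall cs c := by
    obtain ⟨_, -, hstep⟩ := Relation.TransGen.tail'_iff.1 h
    exact hstep.2.1
  have hisotropic : titsForm M (c - b) (c - b) = 0 := by
    rw [titsForm_eq_sum]
    refine Finset.sum_eq_zero fun s _ ↦ ?_
    rcases le_or_gt (titsForm M b (simpleRoot s)) (-1) with hs | hs
    · simp [(hfix s hs).1]
    · have heqs : max (-1) (titsForm M b (simpleRoot s)) = max (-1) (titsForm M c (simpleRoot s)) :=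
        congr($heq s)
      have : titsForm M b (simpleRoot s) = titsForm M c (simpleRoot s) := by grind
      simp [this]
  have hone : titsForm M c b = 1 := by
    simp only [map_sub, LinearMap.sub_apply, hb.isRoot.titsForm_self, hc.isRoot.titsForm_self,
      titsForm_comm b c] at hisotropic
    linarith
  obtain ⟨r, hr⟩ : ∃ r, b r < c r := by
    by_contra! hle
    exact hlt.not_ge hle
  have hdom := hc.isRoot.dominates hb.isRoot hone.ge (hb.pos.le r) hr
  exact hlt.ne (hc.eq_of_dominates b hb.isRoot hb.pos hdom)

lemma wellFounded_ascent [Finite B] (cs : CoxeterSystem M W) : WellFounded (Ascent cs) :=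
  wellFounded_of_transGen_ne (finite_truncatedForm_image cs) (fun h ↦ h.1)
    truncatedForm_ne_of_transGen_ascent

lemma wellFounded_flip_ascent [Finite B] (cs : CoxeterSystem M W) :
    WellFounded (flip (Ascent cs)) :=
  wellFounded_of_transGen_ne (finite_truncatedForm_image cs) (fun h ↦ h.2.1) fun h ↦
    (truncatedForm_ne_of_transGen_ascent (Relation.transGen_swap.1 h)).symm

lemma IsSmall.exists_reflTransGen_ascent [Finite B] {b : B →₀ ℝ} (hb : IsSmall cs b) :
    ∃ s, Relation.ReflTransGen (Ascent cs) (simpleRoot s) b := by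
  induction b using (wellFounded_ascent cs).induction with
  | _ b ih =>
    by_cases! hs : ∃ s, b = simpleRoot s
    · obtain ⟨s, rfl⟩ := hs
      exact ⟨s, .refl⟩
    obtain ⟨s, hpos, hsmall⟩ := hb.exists_descent hs
    have hstep : Ascent cs (geomRep cs (cs.simple s) b) b := by
      refine ⟨hsmall, hb, s, ?_, (geomRep_simple_geomRep_simple s b).symm⟩
      rwa [titsForm_geomRep_simple, neg_lt_zero]
    obtain ⟨t, ht⟩ := ih _ hstep hsmall
    exact ⟨t, ht.tail hstep⟩

theorem finite_setOf_isSmall [Finite B] (cs : CoxeterSystem M W) : {b | IsSmall cs b}.Finite := by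
  have hstep (b) : {c | Ascent cs b c}.Finite := by
    refine (Set.finite_range fun s ↦ geomRep cs (cs.simple s) b).subset ?_
    rintro c ⟨-, -, s, -, rfl⟩
    exact Set.mem_range_self s
  refine (Set.finite_iUnion fun s ↦
    finite_setOf_reflTransGen (wellFounded_flip_ascent cs) hstep (simpleRoot s)).subset ?_
  exact fun b hb ↦ Set.mem_iUnion.2 hb.exists_reflTransGen_ascent

variable (cs) in
/-- The small roots made negative by `w`. Finitely many such sets occur, and they are the states of
the automaton recognising reduced words. -/
def smallInversionSet (w : W) : Set (B →₀ ℝ) := {b | IsSmall cs b ∧ geomRep cs w b < 0}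

lemma isRightDescent_iff_simpleRoot_mem {w : W} {s : B} :
    cs.IsRightDescent w s ↔ simpleRoot s ∈ smallInversionSet cs w :=
  (isRightDescent_iff_geomRep_neg cs).trans (iff_and_self.2 fun _ ↦ isSmall_simpleRoot s)

lemma smallInversionSet_mul_simple {w : W} {s : B} (hs : ¬cs.IsRightDescent w s) :
    smallInversionSet cs (w * cs.simple s) =
      {b | IsSmall cs b ∧
        (b = simpleRoot s ∨ geomRep cs (cs.simple s) b ∈ smallInversionSet cs w)} := by
  have hpos := geomRep_simpleRoot_pos cs hs
  ext b
  rw [smallInversionSet, Set.mem_ofPred_eq, Set.mem_ofPred_eq, geomRep_mul]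
  refine and_congr_right fun hb ↦ ⟨fun hneg ↦ ?_, ?_⟩
  · refine or_iff_not_imp_left.2 fun hbs ↦ ?_
    rcases hb.geomRep_simple_or_dominates hbs with hsmall | hdom
    · exact ⟨hsmall, hneg⟩
    · exact absurd (hdom w hneg) hpos.not_gt
  · rintro (rfl | ⟨-, hneg⟩)
    · rwa [geomRep_simple_self, map_neg, neg_lt_zero]
    · exact hneg

lemma isReduced_of_append {u v : List B} (h : cs.IsReduced (u ++ v)) : cs.IsReduced u := by
  simpa using h.take u.length

lemma isReduced_concat_iff {u : List B} (hu : cs.IsReduced u) (s : B) :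
    cs.IsReduced (u ++ [s]) ↔ ¬cs.IsRightDescent (cs.wordProd u) s := by
  rw [cs.not_isRightDescent_iff, CoxeterSystem.IsReduced, cs.wordProd_append,
    cs.wordProd_singleton, List.length_append, List.length_singleton, hu.eq]

lemma isReduced_append_of_smallInversionSet_eq {u u' v : List B} (hu : cs.IsReduced u)
    (hu' : cs.IsReduced u')
    (heq : smallInversionSet cs (cs.wordProd u) = smallInversionSet cs (cs.wordProd u'))
    (huv : cs.IsReduced (u ++ v)) : cs.IsReduced (u' ++ v) := by
  induction v generalizing u u' with
  | nil => simpa using hu'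
  | cons s v ih =>
    rw [List.append_cons] at huv ⊢
    have hus := isReduced_of_append huv
    have hs := (isReduced_concat_iff hu s).1 hus
    have hs' : ¬cs.IsRightDescent (cs.wordProd u') s := by
      rwa [isRightDescent_iff_simpleRoot_mem, ← heq, ← isRightDescent_iff_simpleRoot_mem]
    refine ih hus ((isReduced_concat_iff hu' s).2 hs') ?_ huv
    rw [cs.wordProd_append, cs.wordProd_append, cs.wordProd_singleton,
      smallInversionSet_mul_simple hs, smallInversionSet_mul_simple hs', heq]

section Language

variable {α β : Type*} {L : Language α}

lemma isRegular_of_finite_range {g : List α → β} (hfin : (Set.range g).Finite)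
    (hg : ∀ {u v}, g u = g v → ∀ x, u ++ x ∈ L → v ++ x ∈ L) : L.IsRegular := by
  refine Language.IsRegular.of_finite_range_leftQuotient ?_
  have hfactors : Function.FactorsThrough L.leftQuotient g := fun u v huv ↦
    Set.ext fun x ↦ ⟨hg huv x, hg huv.symm x⟩
  obtain ⟨e, he⟩ := (Function.factorsThrough_iff _).1 hfactors
  rw [he, Set.range_comp]
  exact hfin.image e

-- To read `(u ++ v) ++ (u ++ v).dropLast.reverse`, with `v ≠ []`, a DFA only needs the state
-- reached after `u` and the transformation of the states induced by `u.reverse`.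
lemma isRegular_setOf_append_dropLast_reverse (hL : L.IsRegular) :
    Language.IsRegular ({ω | ω ≠ [] ∧ ω ++ ω.dropLast.reverse ∈ L} : Language α) := by
  obtain ⟨σ, _, D, rfl⟩ := hL
  have hmem (u : List α) {v : List α} (hv : v ≠ []) :
      (u ++ v) ++ (u ++ v).dropLast.reverse ∈ D.accepts ↔
        D.evalFrom (D.evalFrom (D.eval u) (v ++ v.dropLast.reverse)) u.reverse ∈ D.accept := by
    rw [List.dropLast_append_of_ne_nil hv, List.reverse_append, DFA.mem_accepts]
    simp only [DFA.eval, DFA.evalFrom_of_append]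
  refine isRegular_of_finite_range (g := fun u ↦
    (D.eval u, fun q ↦ D.evalFrom q u.reverse, u ≠ [] ∧ u ++ u.dropLast.reverse ∈ D.accepts))
    (Set.toFinite _) fun {u u'} h v huv ↦ ?_
  obtain ⟨heval, hreverse, hself⟩ : _ ∧ _ ∧ _ := by simpa only [Prod.mk.injEq] using h
  rcases eq_or_ne v [] with rfl | hv
  · rw [List.append_nil] at huv ⊢
    exact hself.mp huv
  · refine ⟨by simp [hv], (hmem u' hv).2 ?_⟩
    rw [← heval, ← congr_fun hreverse]
    exact (hmem u hv).1 huv.2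

end Language

theorem isRegular_setOf_isReduced [Finite B] (cs : CoxeterSystem M W) :
    Language.IsRegular ({ω | cs.IsReduced ω} : Language B) := by
  refine isRegular_of_finite_range
    (g := fun u ↦ (cs.IsReduced u, smallInversionSet cs (cs.wordProd u))) ?_ ?_
  · refine ((Set.toFinite .univ).prod (finite_setOf_isSmall cs).powerset).subset ?_
    rintro _ ⟨u, rfl⟩
    exact ⟨trivial, fun b hb ↦ hb.1⟩
  · intro u u' h v huv
    obtain ⟨hred, hinv⟩ := Prod.mk.inj h
    have hu := isReduced_of_append huv
    exact isReduced_append_of_smallInversionSet_eq hu (hred.mp hu) hinv huv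

end BrinkHowlett

/-- The language of reduced words for reflection-prefixes is
regular. -/
theorem stmt_8 {B : Type} [Fintype B] {W : Type*} [Group W]
    {M : CoxeterMatrix B} (cs : CoxeterSystem M W) :
    Language.IsRegular
      ({ω : List B | ω ≠ [] ∧ cs.IsReduced (ω ++ ω.dropLast.reverse)} :
        Language B) :=
  BrinkHowlett.isRegular_setOf_append_dropLast_reverse
    (BrinkHowlett.isRegular_setOf_isReduced cs)
end

section
/- Let n ≥ 2 and let cs : CoxeterSystem M W be a Coxeter system of affine type Ã_n, where M : CoxeterMatrix (Fin (n+1)) is given by M i j = 1 if i = j, M i j = 3 if j ≡ i + 1 or j ≡ i − 1 modulo n+1, and M i j = 2 otherwise. Then for every k ∈ ℕ, the set {t ∈ W | cs.IsReflection t ∧ cs.length t = 2k+1} is finite and has exactly n+1 elements. (Equivalently, the Poincaré series of reflections of type Ã_n is T(q) = (n+1)·q/(1−q²), i.e., the generating function of depth of positive roots is (n+1)/(1−q).) -/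
/-!
The reflections of the affine group `Ã_n` are exactly the palindromes
`σ (a + m) ⋯ σ (a + 1) * σ a * σ (a + 1) ⋯ σ (a + m)`, with `a` modulo `n + 1` and `m` a natural
number: these contain the generators, and the braid and commutation relations show that conjugating
one by a generator gives another.

To compute lengths, let the group act on `ℤ` by affine permutations. The palindrome exchanges two
integers at distance `d`, and their translates by multiples of `n + 1`, where `d` is the
`(m + 1)`-st positive integer not divisible by `n + 1`. The depth of a pair `(x, y)`, a signed count
of the integers in `(0, y - x]` not divisible by `n + 1`, changes by at most `1` under a generator.
The palindrome takes a pair of depth `m + 1` to one of depth `-m`, so its length is at least its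
number of letters `2m + 1`. The action also recovers `a`, so each `m` gives `n + 1` reflections.
-/

namespace AffineTypeA

variable {n : ℕ}

section Arithmetic

/-- The `(m + 1)`-st positive integer not divisible by `n + 1`. The reflection of length `2m + 1`
exchanges integers at this distance. -/
def height (n m : ℕ) : ℕ := m + 1 + m / n

lemma height_eq (n m : ℕ) : height n m = (n + 1) * (m / n) + (m % n + 1) := by
  have := Nat.div_add_mod m n
  grind [height]

lemma height_div (hn : 0 < n) (m : ℕ) : height n m / (n + 1) = m / n := by
  rw [height_eq, Nat.mul_add_div n.succ_pos,
    Nat.div_eq_of_lt (Nat.succ_lt_succ (Nat.mod_lt m hn)), add_zero]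

lemma cast_height (n m : ℕ) : (height n m : ZMod (n + 1)) = ((m % n + 1 : ℕ) : ZMod (n + 1)) := by
  rw [height_eq, Nat.cast_add, Nat.cast_mul, ZMod.natCast_self, zero_mul, zero_add]

lemma cast_height_ne_zero (hn : 0 < n) (m : ℕ) : (height n m : ZMod (n + 1)) ≠ 0 := by
  rw [cast_height, Ne, ZMod.natCast_eq_zero_iff]
  exact Nat.not_dvd_of_pos_of_lt (Nat.succ_pos _) (Nat.succ_lt_succ (Nat.mod_lt m hn))

lemma cast_height_add_one_eq_zero_iff (hn : 0 < n) (m : ℕ) :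
    (height n m : ZMod (n + 1)) + 1 = 0 ↔ n ∣ m + 1 := by
  have hlt : m % n + 1 ≤ n := Nat.mod_lt m hn
  have dvd_iff_eq {b c : ℕ} (hpos : 0 < b) (hle : b ≤ c) : c ∣ b ↔ b = c :=
    ⟨fun h ↦ hle.antisymm (Nat.le_of_dvd hpos h), fun h ↦ h ▸ dvd_rfl⟩
  have hmod : n ∣ m + 1 ↔ n ∣ m % n + 1 := by
    conv_lhs => rw [← Nat.div_add_mod m n, add_assoc, Nat.dvd_add_right (Nat.dvd_mul_right n _)]
  rw [cast_height, ← Nat.cast_add_one, ZMod.natCast_eq_zero_iff, hmod,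
    dvd_iff_eq (Nat.succ_pos _) (Nat.succ_le_succ hlt), dvd_iff_eq (Nat.succ_pos _) hlt,
    Nat.succ_inj]

lemma one_ne_zero_of_pos (hn : 0 < n) : (1 : ZMod (n + 1)) ≠ 0 := by
  have : Fact (1 < n + 1) := ⟨Nat.succ_lt_succ hn⟩
  exact one_ne_zero

lemma two_ne_zero_of_two_le (hn : 2 ≤ n) : (2 : ZMod (n + 1)) ≠ 0 := by
  rw [← Nat.cast_two, Ne, ZMod.natCast_eq_zero_iff]
  exact Nat.not_dvd_of_pos_of_lt two_pos (Nat.lt_succ_of_le hn)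

/-- The lower end, modulo `n + 1`, of the pair of integers at distance `height n m` whose upper end
is `a + m + 1`. -/
def lowerEnd (a : ZMod (n + 1)) (m : ℕ) : ZMod (n + 1) := a - (m / n : ℕ)

lemma lowerEnd_zero (a : ZMod (n + 1)) : lowerEnd a 0 = a := by
  simp only [lowerEnd, Nat.zero_div, Nat.cast_zero, sub_zero]

lemma lowerEnd_add_height (a : ZMod (n + 1)) (m : ℕ) :
    lowerEnd a m + height n m = a + m + 1 := by
  simp only [lowerEnd, height]
  push_cast
  ring

lemma lowerEnd_ne (hn : 0 < n) (a : ZMod (n + 1)) (m : ℕ) : lowerEnd a m ≠ a + m + 1 := by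
  rw [← lowerEnd_add_height]
  exact fun h ↦ cast_height_ne_zero hn m (left_eq_add.mp h)

lemma lowerEnd_sub_one_eq_iff (hn : 0 < n) (a : ZMod (n + 1)) (m : ℕ) :
    lowerEnd a m - 1 = a + m + 1 ↔ n ∣ m + 1 := by
  rw [← cast_height_add_one_eq_zero_iff hn, ← lowerEnd_add_height]
  grind

lemma lowerEnd_succ (a : ZMod (n + 1)) (m : ℕ) :
    lowerEnd a (m + 1) = lowerEnd a m - if n ∣ m + 1 then 1 else 0 := by
  simp only [lowerEnd, Nat.succ_div]
  split_ifs <;> push_cast <;> ring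

lemma lowerEnd_add_right (a b : ZMod (n + 1)) (m : ℕ) :
    lowerEnd (a + b) m = lowerEnd a m + b := by
  simp only [lowerEnd]; ring

lemma add_one_ediv {b : ℤ} (hb : 0 < b) (a : ℤ) :
    (a + 1) / b = a / b + if b ∣ a + 1 then 1 else 0 := by
  have hlb := Int.ediv_mul_le a hb.ne'
  have hub := Int.lt_ediv_add_one_mul_self a hb
  split_ifs with h
  · obtain ⟨c, hc⟩ := h
    have : a / b = c - 1 := (Int.ediv_eq_iff_of_pos hb).mpr (by grind)
    rw [hc, Int.mul_ediv_cancel_left c hb.ne', this, sub_add_cancel]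
  · have hne : a + 1 ≠ (a / b + 1) * b := fun heq ↦ h (Dvd.intro_left _ heq.symm)
    exact (Int.ediv_eq_iff_of_pos hb).mpr (by grind)

/-- The signed number of integers in `(0, d]` (or `(d, 0]`) not divisible by `n + 1`. -/
def depth (n : ℕ) (d : ℤ) : ℤ := d - d / (n + 1)

lemma depth_add_one (n : ℕ) (d : ℤ) :
    depth n (d + 1) = depth n d + if (d + 1 : ZMod (n + 1)) = 0 then 0 else 1 := by
  have h : (d + 1 : ZMod (n + 1)) = 0 ↔ (n + 1 : ℤ) ∣ d + 1 := by
    rw [← Nat.cast_add_one (R := ℤ), ← ZMod.intCast_zmod_eq_zero_iff_dvd, Int.cast_add,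
      Int.cast_one]
  simp only [depth, add_one_ediv (by positivity : (0 : ℤ) < n + 1), h]
  split_ifs <;> ring

lemma depth_neg {d : ℤ} (hd : (d : ZMod (n + 1)) ≠ 0) : depth n (-d) = 1 - depth n d := by
  have h : ¬ (n + 1 : ℤ) ∣ d := by rwa [← Nat.cast_add_one, ← ZMod.intCast_zmod_eq_zero_iff_dvd]
  rw [depth, depth, Int.neg_ediv, if_neg h, Int.sign_eq_one_of_pos (by positivity)]
  ring

lemma depth_height (hn : 0 < n) (m : ℕ) : depth n (height n m) = m + 1 := by
  rw [depth]
  have := height_div hn m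
  rw [← Nat.cast_add_one, ← Int.natCast_ediv, height_div hn, height]
  push_cast
  ring

end Arithmetic

section Relations

/-- The defining relations of the Coxeter group of type `Ã_n`, for a family of monoid elements
indexed by the nodes of the cyclic Dynkin diagram. -/
structure Relations {G : Type*} [Monoid G] (σ : ZMod (n + 1) → G) : Prop where
  mul_self (i) : σ i * σ i = 1
  braid (i) : σ i * σ (i + 1) * σ i = σ (i + 1) * σ i * σ (i + 1)
  commute {i j} (h : j ≠ i + 1) (h' : j ≠ i - 1) : Commute (σ i) (σ j)

/-- The palindrome `σ (a + m) ⋯ σ (a + 1) * σ a * σ (a + 1) ⋯ σ (a + m)` of length `2m + 1` in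
cyclically consecutive generators. -/
def palindrome {G : Type*} [Monoid G] (σ : ZMod (n + 1) → G) (a : ZMod (n + 1)) : ℕ → G
  | 0 => σ a
  | m + 1 => σ (a + m + 1) * palindrome σ a m * σ (a + m + 1)

variable {G : Type*} [Monoid G] {σ : ZMod (n + 1) → G} {a i : ZMod (n + 1)} {m : ℕ}

lemma palindrome_succ_of_eq (h : i = a + m + 1) :
    palindrome σ a (m + 1) = σ i * palindrome σ a m * σ i := by
  rw [h, palindrome]

lemma map_palindrome {H : Type*} [Monoid H] (φ : G →* H) (σ : ZMod (n + 1) → G)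
    (a : ZMod (n + 1)) (m : ℕ) : φ (palindrome σ a m) = palindrome (φ ∘ σ) a m := by
  induction m with
  | zero => rfl
  | succ m ih => simp only [palindrome, map_mul, ih, Function.comp_apply]

namespace Relations

lemma conj_conj (hσ : Relations σ) (i : ZMod (n + 1)) (g : G) :
    σ i * (σ i * g * σ i) * σ i = g := by
  rw [← mul_assoc, ← mul_assoc, hσ.mul_self, one_mul, mul_assoc, hσ.mul_self, mul_one]

lemma conj_comm (hσ : Relations σ) {i j : ZMod (n + 1)} (h : j ≠ i + 1) (h' : j ≠ i - 1) (g : G) :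
    σ i * (σ j * g * σ j) * σ i = σ j * (σ i * g * σ i) * σ j := by
  have hc := (hσ.commute h h').eq
  calc σ i * (σ j * g * σ j) * σ i = σ i * σ j * g * (σ j * σ i) := by simp only [mul_assoc]
    _ = σ j * σ i * g * (σ i * σ j) := by rw [hc]
    _ = σ j * (σ i * g * σ i) * σ j := by simp only [mul_assoc]

lemma conj_braid (hσ : Relations σ) (i : ZMod (n + 1)) (g : G) :
    σ i * (σ (i + 1) * (σ i * g * σ i) * σ (i + 1)) * σ i =
      σ (i + 1) * (σ i * (σ (i + 1) * g * σ (i + 1)) * σ i) * σ (i + 1) := by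
  have hb := hσ.braid i
  calc _ = σ i * σ (i + 1) * σ i * g * (σ i * σ (i + 1) * σ i) := by simp only [mul_assoc]
    _ = σ (i + 1) * σ i * σ (i + 1) * g * (σ (i + 1) * σ i * σ (i + 1)) := by rw [hb]
    _ = _ := by simp only [mul_assoc]

lemma conj_palindrome_succ (hσ : Relations σ) (h : i = a + m + 1) :
    σ i * palindrome σ a (m + 1) * σ i = palindrome σ a m := by
  rw [palindrome_succ_of_eq h, hσ.conj_conj]

-- By the braid relation, conjugation by `σ i` passes the two outer layers as conjugation by
-- `σ (i + 1)`; this is what drives the inductions below.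
lemma conj_palindrome_add_two (hσ : Relations σ) (h : i = a + m + 1) :
    σ i * palindrome σ a (m + 2) * σ i =
      σ (i + 1) * (σ i * (σ (i + 1) * palindrome σ a m * σ (i + 1)) * σ i) * σ (i + 1) := by
  rw [palindrome_succ_of_eq (i := i + 1) (by push_cast; grind), palindrome_succ_of_eq h,
    hσ.conj_braid]

lemma conj_palindrome_lowerEnd_sub_one (hσ : Relations σ) (hn : 2 ≤ n) (hm : ¬ n ∣ m + 1)
    (hi : i = lowerEnd a m - 1) :
    σ i * palindrome σ a m * σ i = palindrome σ (a - 1) (m + 1) := by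
  have hpos : 0 < n := by omega
  induction m using Nat.strong_induction_on generalizing i with
  | _ m ih =>
  match m with
  | 0 =>
    obtain rfl : a = i + 1 := by rw [hi, lowerEnd_zero, sub_add_cancel]
    rw [palindrome_succ_of_eq (i := i + 1) (by simp), add_sub_cancel_right]
    exact hσ.braid i
  | m + 1 =>
    have hlow := lowerEnd_succ a m
    have hne := lowerEnd_ne hpos a m
    have htop := lowerEnd_sub_one_eq_iff hpos a m
    have htop' := lowerEnd_sub_one_eq_iff hpos a (m + 1)
    push_cast at htop'
    by_cases hdvd : n ∣ m + 1
    · match m with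
      | 0 => exact absurd (Nat.le_of_dvd one_pos hdvd) (by omega)
      | m + 1 =>
        have hndvd : ¬ n ∣ m + 1 := fun h ↦
          absurd (Nat.le_of_dvd one_pos ((Nat.dvd_add_right h).mp hdvd)) (by omega)
        have hlow' := lowerEnd_succ a m
        push_cast at htop
        have hbelow_top : i = a + m + 1 := by grind
        have habove_low : i + 1 = lowerEnd a m - 1 := by grind
        calc σ i * palindrome σ a (m + 2) * σ i
            = σ (i + 1) * (σ i * (σ (i + 1) * palindrome σ a m * σ (i + 1)) * σ i) * σ (i + 1) :=
              hσ.conj_palindrome_add_two hbelow_top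
          _ = σ (i + 1) * (σ i * palindrome σ (a - 1) (m + 1) * σ i) * σ (i + 1) := by
              rw [ih m (by omega) hndvd habove_low]
          _ = palindrome σ (a - 1) (m + 3) := by
              rw [← palindrome_succ_of_eq (by push_cast; grind),
                ← palindrome_succ_of_eq (by push_cast; grind)]
    · rw [palindrome_succ_of_eq rfl, hσ.conj_comm (by grind) (by grind),
        ih m m.lt_succ_self hdvd (by grind), ← palindrome_succ_of_eq (by push_cast; grind)]

lemma conj_palindrome_lowerEnd (hσ : Relations σ) (hn : 2 ≤ n) (hm : ¬ n ∣ m + 1)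
    (hi : i = lowerEnd a (m + 1)) :
    σ i * palindrome σ a (m + 1) * σ i = palindrome σ (a + 1) m := by
  have hlow : i = lowerEnd (a + 1) m - 1 := by
    rw [hi, lowerEnd_succ, if_neg hm, lowerEnd_add_right, sub_zero, add_sub_cancel_right]
  rw [← hσ.conj_conj i (palindrome σ (a + 1) m),
    hσ.conj_palindrome_lowerEnd_sub_one hn hm hlow, add_sub_cancel_right]

lemma conj_palindrome_eq_self (hσ : Relations σ) (hn : 0 < n) (hlow : i ≠ lowerEnd a m)
    (hlow' : i ≠ lowerEnd a m - 1) (htop : i ≠ a + m + 1) (htop' : i ≠ a + m) :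
    σ i * palindrome σ a m * σ i = palindrome σ a m := by
  induction m using Nat.strong_induction_on generalizing i with
  | _ m ih =>
  match m with
  | 0 =>
    rw [lowerEnd_zero] at hlow hlow'
    rw [Nat.cast_zero, add_zero] at htop
    rw [palindrome, (hσ.commute (by grind) (by grind)).eq, mul_assoc, hσ.mul_self, mul_one]
  | m + 1 =>
    have hsucc := lowerEnd_succ a m
    have hne := lowerEnd_ne hn a m
    have hiff := lowerEnd_sub_one_eq_iff hn a m
    push_cast at htop htop'
    by_cases hadj : i = a + m
    · match m with
      | 0 => grind [lowerEnd_zero]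
      | m + 1 =>
        have hsucc' := lowerEnd_succ a m
        have hiff' := lowerEnd_sub_one_eq_iff hn a m
        have hfix : σ (i + 1) * palindrome σ a m * σ (i + 1) = palindrome σ a m :=
          ih m (by omega) (by grind) (by grind) (by grind) (by grind)
        rw [hσ.conj_palindrome_add_two (by grind), hfix,
          ← palindrome_succ_of_eq (by grind), ← palindrome_succ_of_eq (by push_cast; grind)]
    · rw [palindrome, hσ.conj_comm (by grind) (by grind),
        ih m m.lt_succ_self (by grind) (by grind) (by grind) hadj]

lemma exists_conj_eq_palindrome (hσ : Relations σ) (hn : 2 ≤ n) (i a : ZMod (n + 1)) (m : ℕ) :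
    ∃ b l, σ i * palindrome σ a m * σ i = palindrome σ b l := by
  have hpos : 0 < n := by omega
  by_cases htop : i = a + m + 1
  · exact ⟨a, m + 1, (palindrome_succ_of_eq htop).symm⟩
  by_cases hlow' : i = lowerEnd a m - 1
  · have hm : ¬ n ∣ m + 1 := fun h ↦
      htop (hlow'.trans ((lowerEnd_sub_one_eq_iff hpos a m).mpr h))
    exact ⟨a - 1, m + 1, hσ.conj_palindrome_lowerEnd_sub_one hn hm hlow'⟩
  match m with
  | 0 =>
    by_cases ha : i = a
    · exact ⟨a, 0, by rw [palindrome, ha, hσ.mul_self, one_mul]⟩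
    · refine ⟨a, 0, hσ.conj_palindrome_eq_self hpos ?_ hlow' htop ?_⟩ <;> simpa [lowerEnd]
  | m + 1 =>
    by_cases htop' : i = a + m + 1
    · exact ⟨a, m, hσ.conj_palindrome_succ htop'⟩
    by_cases hlow : i = lowerEnd a (m + 1)
    · have hm : ¬ n ∣ m + 1 := fun h ↦ by
        rw [lowerEnd_succ, if_pos h, (lowerEnd_sub_one_eq_iff hpos a m).mpr h] at hlow
        exact htop' hlow
      exact ⟨a + 1, m, hσ.conj_palindrome_lowerEnd hn hm hlow⟩
    · refine ⟨a, m + 1, hσ.conj_palindrome_eq_self hpos hlow hlow' htop ?_⟩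
      rwa [Nat.cast_succ, ← add_assoc]

end Relations

end Relations

section AffinePermutations

/-- The affine transposition exchanging `x + c * (n + 1)` and `x + d + c * (n + 1)` for every
integer `c`, where `p` is the residue class of `x`. If `d` is a multiple of `n + 1` the two classes
coincide and this is not an involution. -/
def affineSwap (p : ZMod (n + 1)) (d : ℤ) : Function.End ℤ := fun z ↦
  if (z : ZMod (n + 1)) = p then z + d else if (z : ZMod (n + 1)) = p + d then z - d else z

lemma affineSwap_of_eq {p : ZMod (n + 1)} {d z : ℤ} (h : z = p) : affineSwap p d z = z + d :=
  if_pos h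

lemma affineSwap_of_eq_add {p : ZMod (n + 1)} {d z : ℤ} (hd : (d : ZMod (n + 1)) ≠ 0)
    (h : z = p + d) : affineSwap p d z = z - d := by
  rw [affineSwap, if_neg (by simpa [h]), if_pos h]

lemma affineSwap_of_ne {p : ZMod (n + 1)} {d z : ℤ} (h : (z : ZMod (n + 1)) ≠ p)
    (h' : (z : ZMod (n + 1)) ≠ p + d) : affineSwap p d z = z := by
  rw [affineSwap, if_neg h, if_neg h']

lemma affineSwap_left_injective {d : ℤ} (hd : d ≠ 0) :
    Function.Injective fun p : ZMod (n + 1) ↦ affineSwap p d := by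
  intro p q hpq
  obtain ⟨z, rfl⟩ := ZMod.intCast_surjective p
  have hz : affineSwap q d z = z + d := (congrFun hpq z).symm.trans (affineSwap_of_eq rfl)
  by_contra hne
  rw [affineSwap, if_neg hne] at hz
  split_ifs at hz <;> omega

lemma affineSwap_one_cases (k : ZMod (n + 1)) (z : ℤ) :
    ((z : ZMod (n + 1)) = k ∧ affineSwap k 1 z = z + 1) ∨
    ((z : ZMod (n + 1)) = k + 1 ∧ affineSwap k 1 z = z - 1) ∨
    ((z : ZMod (n + 1)) ≠ k ∧ (z : ZMod (n + 1)) ≠ k + 1 ∧ affineSwap k 1 z = z) := by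
  simp only [affineSwap, Int.cast_one]
  split_ifs <;> simp_all

lemma affineSwap_mul_self {p : ZMod (n + 1)} {d : ℤ} (hd : (d : ZMod (n + 1)) ≠ 0) :
    affineSwap p d * affineSwap p d = 1 := by
  funext z
  change affineSwap p d (affineSwap p d z) = z
  simp only [affineSwap]
  split_ifs <;> push_cast at * <;> grind

lemma intCast_eq_intCast_iff_exists_mul (u v : ℤ) :
    (u : ZMod (n + 1)) = v ↔ ∃ c : ℤ, u = v + c * (n + 1) := by
  rw [eq_comm, ZMod.intCast_eq_intCast_iff_dvd_sub, Nat.cast_add_one, dvd_iff_exists_eq_mul_left]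
  simp only [sub_eq_iff_eq_add']

lemma affineSwap_add_mul (p : ZMod (n + 1)) (d z c : ℤ) :
    affineSwap p d (z + c * (n + 1)) = affineSwap p d z + c * (n + 1) := by
  have hcast : ((z + c * (n + 1) : ℤ) : ZMod (n + 1)) = z :=
    (intCast_eq_intCast_iff_exists_mul _ _).mpr ⟨c, rfl⟩
  simp only [affineSwap, hcast]
  split_ifs <;> ring

lemma mul_affineSwap {f : Function.End ℤ} (hinj : Function.Injective f)
    (hf : ∀ z c, f (z + c * (n + 1)) = f z + c * (n + 1)) (x y : ℤ) :
    f * affineSwap (x : ZMod (n + 1)) (y - x) =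
      affineSwap (f x : ZMod (n + 1)) (f y - f x) * f := by
  have hcast (u v : ℤ) : (f u : ZMod (n + 1)) = f v ↔ (u : ZMod (n + 1)) = v := by
    simp only [intCast_eq_intCast_iff_exists_mul, ← hf, hinj.eq_iff]
  funext z
  change f (affineSwap _ _ z) = affineSwap _ _ (f z)
  simp only [affineSwap, Int.cast_sub, add_sub_cancel, hcast]
  split_ifs with hx hy
  · obtain ⟨c, rfl⟩ := (intCast_eq_intCast_iff_exists_mul _ _).mp hx
    rw [show x + c * (n + 1) + (y - x) = y + c * (n + 1) by ring, hf, hf]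
    ring
  · obtain ⟨c, rfl⟩ := (intCast_eq_intCast_iff_exists_mul _ _).mp hy
    rw [show y + c * (n + 1) - (y - x) = x + c * (n + 1) by ring, hf, hf]
    ring
  · rfl

-- If both ends move, in opposite directions, then `y - x` changes by `2` but passes through a
-- multiple of `n + 1`, and the unit step up to that multiple does not change the depth.
lemma abs_depth_affineSwap_sub_le (k : ZMod (n + 1)) (x y : ℤ) :
    |depth n (affineSwap k 1 y - affineSwap k 1 x) - depth n (y - x)| ≤ 1 := by
  have depth_succ (d e : ℤ) (h : e = d + 1) :
      (depth n e = depth n d ∨ depth n e = depth n d + 1) ∧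
        ((e : ZMod (n + 1)) = 0 → depth n e = depth n d) := by
    subst h
    rw [depth_add_one]
    push_cast
    grind
  have h1 := depth_succ (y - x) (y - x + 1) rfl
  have h2 := depth_succ (y - x + 1) (y - x + 2) (by ring)
  have h3 := depth_succ (y - x - 1) (y - x) (by ring)
  have h4 := depth_succ (y - x - 2) (y - x - 1) (by ring)
  push_cast at h1 h2 h3 h4
  rw [abs_le]
  rcases affineSwap_one_cases k x with hx | hx | hx <;>
  rcases affineSwap_one_cases k y with hy | hy | hy <;> grind

section Pos

variable (hn : 0 < n)
include hn

lemma affineSwap_one_mul_self (k : ZMod (n + 1)) : affineSwap k 1 * affineSwap k 1 = 1 :=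
  affineSwap_mul_self (by simpa using one_ne_zero_of_pos hn)

lemma affineSwap_one_injective (k : ZMod (n + 1)) : Function.Injective (affineSwap k 1) :=
  Function.LeftInverse.injective (g := affineSwap k 1) (congrFun (affineSwap_one_mul_self hn k))

lemma affineSwap_one_conj (k : ZMod (n + 1)) (x y : ℤ) :
    affineSwap k 1 * affineSwap (x : ZMod (n + 1)) (y - x) * affineSwap k 1 =
      affineSwap (affineSwap k 1 x : ZMod (n + 1)) (affineSwap k 1 y - affineSwap k 1 x) := by
  rw [mul_affineSwap (affineSwap_one_injective hn k) (affineSwap_add_mul k 1), mul_assoc,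
    affineSwap_one_mul_self hn, mul_one]

lemma affineSwap_one_commute {k l : ZMod (n + 1)} (h : l ≠ k + 1) (h' : l ≠ k - 1) :
    Commute (affineSwap k 1) (affineSwap l 1) := by
  obtain rfl | hne := eq_or_ne l k
  · exact Commute.refl _
  obtain ⟨z, rfl⟩ := ZMod.intCast_surjective l
  have hfix : affineSwap k 1 z = z := affineSwap_of_ne hne (by simpa)
  have hfix' : affineSwap k 1 (z + 1) = z + 1 :=
    affineSwap_of_ne (by push_cast; grind) (by simpa)
  have := mul_affineSwap (affineSwap_one_injective hn k) (affineSwap_add_mul k 1) z (z + 1)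
  rwa [hfix, hfix', add_sub_cancel_left] at this

lemma palindrome_affineSwap (a : ZMod (n + 1)) (m : ℕ) :
    palindrome (fun k ↦ affineSwap k 1) a m = affineSwap (lowerEnd a m) (height n m) := by
  induction m with
  | zero => simp [palindrome, lowerEnd, height]
  | succ m ih =>
    obtain ⟨x, hx⟩ := ZMod.intCast_surjective (lowerEnd a m)
    have htop : ((x + height n m : ℤ) : ZMod (n + 1)) = a + m + 1 := by
      rw [← lowerEnd_add_height, ← hx]; push_cast; rfl
    have hbot : affineSwap (a + m + 1 : ZMod (n + 1)) 1 x = x - if n ∣ m + 1 then 1 else 0 := by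
      have hne := lowerEnd_ne hn a m
      have hiff := lowerEnd_sub_one_eq_iff hn a m
      rw [← hx] at hne hiff
      rcases affineSwap_one_cases (a + m + 1 : ZMod (n + 1)) x with h | h | h <;> grind
    have hsucc : (height n (m + 1) : ℤ) = height n m + 1 + if n ∣ m + 1 then 1 else 0 := by
      simp only [height, Nat.succ_div]
      push_cast
      ring
    have hconj := affineSwap_one_conj hn (a + m + 1 : ZMod (n + 1)) x (x + height n m)
    rw [add_sub_cancel_left, affineSwap_of_eq htop, hbot, hx] at hconj
    rw [palindrome, ih, hconj, hsucc, lowerEnd_succ, ← hx]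
    push_cast
    congr 1
    ring

end Pos

lemma affineSwap_one_braid (hn : 2 ≤ n) (k : ZMod (n + 1)) :
    affineSwap k 1 * affineSwap (k + 1) 1 * affineSwap k 1 =
      affineSwap (k + 1) 1 * affineSwap k 1 * affineSwap (k + 1) 1 := by
  obtain ⟨z, rfl⟩ := ZMod.intCast_surjective k
  have hpos : 0 < n := by omega
  have h1 := one_ne_zero_of_pos hpos
  have h2 := two_ne_zero_of_two_le hn
  have hleft := affineSwap_one_conj hpos z (z + 1) (z + 2)
  have hright := affineSwap_one_conj hpos (z + 1) z (z + 1)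
  rw [affineSwap_of_eq_add (z := z + 1) (by simpa) (by simp),
    affineSwap_of_ne (z := z + 2) (by simpa)
      (fun h ↦ h1 (by push_cast at h; linear_combination h))] at hleft
  rw [affineSwap_of_ne (z := z) (by simpa)
      (fun h ↦ h2 (by push_cast at h; linear_combination -h)),
    affineSwap_of_eq (z := z + 1) (by simp)] at hright
  ring_nf at hleft hright
  push_cast at hleft
  ring_nf
  rw [hleft, hright]

lemma relations_affineSwap (hn : 2 ≤ n) :
    Relations fun k : ZMod (n + 1) ↦ affineSwap k 1 where
  mul_self := affineSwap_one_mul_self (by omega)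
  braid := affineSwap_one_braid hn
  commute := affineSwap_one_commute (by omega)

end AffinePermutations

section Coxeter

/-- `M` is the Coxeter matrix of type `Ã_n`, with the nodes of the cyclic Dynkin diagram indexed by
`ZMod (n + 1)`. -/
def IsAffineTypeA (M : CoxeterMatrix (ZMod (n + 1))) : Prop :=
  ∀ i j, M i j = if i = j then 1 else if j = i + 1 ∨ j = i - 1 then 3 else 2

lemma mul_pow_three_eq_one_of_braid {G : Type*} [Monoid G] {u v : G} (hu : u * u = 1)
    (hv : v * v = 1) (h : u * v * u = v * u * v) : (u * v) ^ 3 = 1 := by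
  calc (u * v) ^ 3
      = u * v * u * (v * u * v) := by simp only [pow_succ, pow_zero, one_mul, mul_assoc]
    _ = v * (u * ((v * v) * u)) * v := by rw [h]; simp only [mul_assoc]
    _ = 1 := by rw [hv, one_mul, hu, mul_one, hv]

lemma Relations.isLiftable {G : Type*} [Monoid G] {σ : ZMod (n + 1) → G} (hσ : Relations σ)
    {M : CoxeterMatrix (ZMod (n + 1))} (hM : IsAffineTypeA M) : M.IsLiftable σ := by
  intro i j
  rw [hM]
  split_ifs with heq hadj
  · rw [heq, pow_one, hσ.mul_self]
  · apply mul_pow_three_eq_one_of_braid (hσ.mul_self i) (hσ.mul_self j)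
    rcases hadj with rfl | rfl
    · exact hσ.braid i
    · simpa using (hσ.braid (i - 1)).symm
  · obtain ⟨h, h'⟩ := not_or.mp hadj
    rw [(hσ.commute h h').mul_pow, pow_two, pow_two, hσ.mul_self, hσ.mul_self, one_mul]

variable {W : Type*} [Group W]

lemma abs_sub_le_length {B : Type*} {M : CoxeterMatrix B} (cs : CoxeterSystem M W) {f : W → ℤ}
    (hf : ∀ i w, |f (cs.simple i * w) - f w| ≤ 1) (w : W) : |f w - f 1| ≤ cs.length w := by
  obtain ⟨ω, hω, rfl⟩ := cs.exists_isReduced w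
  rw [hω.eq]
  clear hω
  induction ω with
  | nil => simp
  | cons i ω ih =>
    rw [cs.wordProd_cons, List.length_cons, Nat.cast_add_one, add_comm]
    exact (abs_sub_le _ _ _).trans (add_le_add (hf i _) ih)

variable {M : CoxeterMatrix (ZMod (n + 1))} (cs : CoxeterSystem M W)

lemma isReflection_palindrome (a : ZMod (n + 1)) (m : ℕ) :
    cs.IsReflection (palindrome cs.simple a m) := by
  induction m with
  | zero => exact cs.isReflection_simple a
  | succ m ih => simpa only [palindrome, cs.inv_simple] using ih.conj (cs.simple (a + m + 1))

lemma length_palindrome_le (a : ZMod (n + 1)) (m : ℕ) :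
    cs.length (palindrome cs.simple a m) ≤ 2 * m + 1 := by
  induction m with
  | zero => exact (cs.length_simple a).le
  | succ m ih =>
    have hleft := cs.length_mul_le (cs.simple (a + m + 1)) (palindrome cs.simple a m)
    have hright := cs.length_mul_le (cs.simple (a + m + 1) * palindrome cs.simple a m)
      (cs.simple (a + m + 1))
    rw [cs.length_simple] at hleft hright
    rw [palindrome]
    omega

variable (hM : IsAffineTypeA M)
include hM

lemma relations_simple : Relations cs.simple where
  mul_self := cs.simple_mul_simple_self
  braid i := by
    obtain heq | hne := eq_or_ne i (i + 1)
    · rw [← heq]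
    have h := cs.simple_mul_simple_pow i (i + 1)
    rw [hM, if_neg hne, if_pos (Or.inl rfl)] at h
    have : cs.simple i * cs.simple (i + 1) * cs.simple i *
        (cs.simple (i + 1) * cs.simple i * cs.simple (i + 1)) = 1 := by
      rw [← h]; simp only [pow_succ, pow_zero, one_mul, mul_assoc]
    simpa only [mul_inv_rev, cs.inv_simple, ← mul_assoc] using eq_inv_of_mul_eq_one_left this
  commute {i j} h h' := by
    obtain rfl | hne := eq_or_ne i j
    · exact Commute.refl _
    have hpow := cs.simple_mul_simple_pow i j
    rw [hM, if_neg hne, if_neg (not_or.mpr ⟨h, h'⟩), pow_two] at hpow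
    rw [commute_iff_eq]
    simpa only [mul_inv_rev, cs.inv_simple] using eq_inv_of_mul_eq_one_left hpow

variable (hn : 2 ≤ n)
include hn

lemma exists_palindrome_eq_of_isReflection {t : W} (ht : cs.IsReflection t) :
    ∃ a m, palindrome cs.simple a m = t := by
  obtain ⟨w, i, rfl⟩ := ht
  induction w using cs.simple_induction_left with
  | one => exact ⟨i, 0, by simp [palindrome]⟩
  | mul_simple_left w j ih =>
    obtain ⟨a, m, h⟩ := ih
    obtain ⟨b, l, h'⟩ := (relations_simple cs hM).exists_conj_eq_palindrome hn j a m
    refine ⟨b, l, ?_⟩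
    rw [← h', h, mul_inv_rev, cs.inv_simple]
    simp only [mul_assoc]

/-- The action of the Coxeter group of type `Ã_n` on `ℤ` by affine permutations, in which the
generator at node `k` exchanges `z` and `z + 1` for every `z` in the class `k`. -/
noncomputable def affineAction : W →* Function.End ℤ :=
  cs.lift ⟨_, (relations_affineSwap hn).isLiftable hM⟩

lemma affineAction_simple (k : ZMod (n + 1)) :
    affineAction cs hM hn (cs.simple k) = affineSwap k 1 :=
  cs.lift_apply_simple _ k

lemma affineAction_palindrome (a : ZMod (n + 1)) (m : ℕ) :
    affineAction cs hM hn (palindrome cs.simple a m) = affineSwap (lowerEnd a m) (height n m) := by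
  rw [map_palindrome, ← palindrome_affineSwap (by omega)]
  exact congrArg (palindrome · a m) (funext (affineAction_simple cs hM hn))

lemma palindrome_simple_left_injective (m : ℕ) :
    Function.Injective fun a ↦ palindrome cs.simple a m := by
  intro a b hab
  have hmap := congrArg (affineAction cs hM hn) hab
  simp only [affineAction_palindrome] at hmap
  have hheight : (height n m : ℤ) ≠ 0 := Nat.cast_ne_zero.mpr (by rw [height]; positivity)
  exact sub_left_injective (affineSwap_left_injective hheight hmap)

lemma abs_depth_affineAction_sub_le (w : W) (x y : ℤ) :
    |depth n (affineAction cs hM hn w y - affineAction cs hM hn w x) - depth n (y - x)| ≤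
      cs.length w := by
  let f (w : W) : ℤ := depth n (affineAction cs hM hn w y - affineAction cs hM hn w x)
  have hstep (i) (w : W) : |f (cs.simple i * w) - f w| ≤ 1 := by
    simp only [f, map_mul, affineAction_simple]
    exact abs_depth_affineSwap_sub_le i _ _
  have hone : f 1 = depth n (y - x) := by simp only [f, map_one, Function.End.one_def, id_eq]
  exact hone ▸ abs_sub_le_length cs hstep w

lemma length_palindrome (a : ZMod (n + 1)) (m : ℕ) :
    cs.length (palindrome cs.simple a m) = 2 * m + 1 := by
  have hheight : ((height n m : ℤ) : ZMod (n + 1)) ≠ 0 := by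
    simpa using cast_height_ne_zero (by omega) m
  obtain ⟨x, hx⟩ := ZMod.intCast_surjective (lowerEnd a m)
  have hle := abs_depth_affineAction_sub_le cs hM hn (palindrome cs.simple a m) x (x + height n m)
  rw [affineAction_palindrome, affineSwap_of_eq hx, affineSwap_of_eq_add hheight (by simp [hx]),
    add_sub_cancel_right, sub_add_cancel_left, add_sub_cancel_left, depth_neg hheight,
    depth_height (by omega)] at hle
  refine (length_palindrome_le cs a m).antisymm ?_
  have := (abs_le.mp hle).1
  omega

lemma setOf_isReflection_length_eq_range (k : ℕ) :
    {t : W | cs.IsReflection t ∧ cs.length t = 2 * k + 1} =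
      Set.range fun a ↦ palindrome cs.simple a k := by
  ext t
  constructor
  · rintro ⟨ht, hlen⟩
    obtain ⟨a, m, rfl⟩ := exists_palindrome_eq_of_isReflection cs hM hn ht
    rw [length_palindrome cs hM hn] at hlen
    obtain rfl : m = k := by omega
    exact ⟨a, rfl⟩
  · rintro ⟨a, rfl⟩
    exact ⟨isReflection_palindrome cs a k, length_palindrome cs hM hn a k⟩

end Coxeter

end AffineTypeA

/-- In an affine Coxeter system of type `Ã_n` (`n ≥ 2`), for
every `k` there are exactly `n + 1` reflections of length `2k + 1`. -/
theorem stmt_13 (n : ℕ) (hn : 2 ≤ n) {W : Type*} [Group W]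
    (M : CoxeterMatrix (Fin (n + 1)))
    (hM : ∀ i j : Fin (n + 1), M i j =
      if i = j then 1
      else if ((j : ZMod (n + 1)) = (i : ZMod (n + 1)) + 1 ∨
               (j : ZMod (n + 1)) = (i : ZMod (n + 1)) - 1) then 3
      else 2)
    (cs : CoxeterSystem M W) (k : ℕ) :
    ({t : W | cs.IsReflection t ∧ cs.length t = 2 * k + 1} : Set W).Finite ∧
    ({t : W | cs.IsReflection t ∧ cs.length t = 2 * k + 1} : Set W).ncard
      = n + 1 := by
  have hA : AffineTypeA.IsAffineTypeA (n := n) M := hM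
  have hrange : {t : W | cs.IsReflection t ∧ cs.length t = 2 * k + 1} = Set.range _ :=
    AffineTypeA.setOf_isReflection_length_eq_range (n := n) cs hA hn k
  have hinj := AffineTypeA.palindrome_simple_left_injective (n := n) cs hA hn k
  rw [hrange, Set.ncard_range_of_injective hinj, Nat.card_zmod]
  exact ⟨Set.finite_range _, rfl⟩
end
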